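/- For every ρ > 0 there exists c = c(ρ) > 0 such that for every n ≥ 1 and every even domain D containing Λ_{ρn,n}, φ_D^0[H_{h≥0}(Λ_{ρn,n})] ≥ c. -/

import Mathlib

open scoped BigOperators

namespace SquareIce

/-- Vertices of the square lattice `ℤ²`. -/
abbrev V : Type := ℤ × ℤ

/-- Nearest-neighbour adjacency: Euclidean distance 1. -/
def adj (u v : V) : Prop := (u.1 - v.1).natAbs + (u.2 - v.2).natAbs = 1

/-- Diagonal (`×`) adjacency: Euclidean distance `√2`. -/
def xadj (u v : V) : Prop := (u.1 - v.1).natAbs = 1 ∧ (u.2 - v.2).natAbs = 1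

/-- `*`-adjacency: graph distance exactly 2 in `ℤ²`. -/
def starAdj (u v : V) : Prop := (u.1 - v.1).natAbs + (u.2 - v.2).natAbs = 2

/-- A vertex is even when the sum of its coordinates is even. -/
def IsEvenV (v : V) : Prop := Even (v.1 + v.2)

/-- Squared Euclidean distance between two vertices. -/
def distSq (u v : V) : ℤ := (u.1 - v.1) ^ 2 + (u.2 - v.2) ^ 2

/-- Sup-norm of a vertex. -/
def infNorm (v : V) : ℤ := max |v.1| |v.2|

/-- `h` is a height function on `D` (normalised to vanish outside `D`):
increments of absolute value one along edges of `D`, and even values on even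
vertices (equivalently, `h v` has the parity of `v.1 + v.2`). -/
def IsHeightFn (D : Set V) (h : V → ℤ) : Prop :=
  (∀ u v, u ∈ D → v ∈ D → adj u v → |h u - h v| = 1) ∧
  (∀ v ∈ D, Even (h v + v.1 + v.2)) ∧ (∀ v, v ∉ D → h v = 0)

/-- Boundary of `D`: vertices of `D` with a nearest neighbour outside `D`. -/
def bdry (D : Set V) : Set V := {v | v ∈ D ∧ ∃ u, u ∉ D ∧ adj u v}

/-- `A` and `B` are joined by a `rel`-path all of whose vertices lie in `S`. -/
def Connected (rel : V → V → Prop) (S A B : Set V) : Prop :=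
  ∃ p : List V, ∃ hp : p ≠ [], List.Chain' rel p ∧ (∀ v ∈ p, v ∈ S) ∧
    p.head hp ∈ A ∧ p.getLast hp ∈ B

/-- `S` is the vertex set of a closed `×`-path. -/
def IsXCircuit (S : Set V) : Prop :=
  ∃ p : List V, ∃ hp : p ≠ [], List.Chain' xadj p ∧ p.head hp = p.getLast hp ∧
    {v | v ∈ p} = S

/-- A domain: a finite set whose boundary is a `×`-circuit. -/
def IsDomain (D : Set V) : Prop := D.Finite ∧ IsXCircuit (bdry D)

/-- An even domain: a domain whose boundary consists of even vertices. -/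
def IsEvenDomain (D : Set V) : Prop := IsDomain D ∧ ∀ v ∈ bdry D, IsEvenV v

/-- Height functions on `D` whose value at every `v ∈ B` lies in `κ v`. -/
def HomSet (D B : Set V) (κ : V → Set ℤ) : Set (V → ℤ) :=
  {h | IsHeightFn D h ∧ ∀ v ∈ B, h v ∈ κ v}

/-- Height functions on `D` with prescribed boundary values `κ` on `∂D`. -/
def HomBC (D : Set V) (κ : V → ℤ) : Set (V → ℤ) :=
  {h | IsHeightFn D h ∧ ∀ v ∈ bdry D, h v = κ v}

/-- Height functions on `D` vanishing on `∂D`. -/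
def Hom0 (D : Set V) : Set (V → ℤ) := HomBC D (fun _ => 0)

/-- Probability of `A` under the uniform measure on the finite set `S`. -/
noncomputable def pr {α : Type*} (S A : Set α) : ℝ :=
  (Nat.card (S ∩ A : Set α) : ℝ) / (Nat.card S : ℝ)

/-- Expectation of `f` under the uniform measure on the finite set `S`. -/
noncomputable def expec {α : Type*} (S : Set α) (f : α → ℝ) : ℝ :=
  (∑ᶠ x ∈ S, f x) / (Nat.card S : ℝ)

/-- The box `Λ_{a,b} = ([-a,a] × [-b,b]) ∩ ℤ²`. -/
def Lam2 (a b : ℤ) : Set V := {v | |v.1| ≤ a ∧ |v.2| ≤ b}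

/-- The box `Λ_a`. -/
def Lam (a : ℤ) : Set V := Lam2 a a

def leftSide (a b : ℤ) : Set V := {v | v.1 = -a ∧ |v.2| ≤ b}
def rightSide (a b : ℤ) : Set V := {v | v.1 = a ∧ |v.2| ≤ b}
def topSide (a b : ℤ) : Set V := {v | |v.1| ≤ a ∧ v.2 = b}
def botSide (a b : ℤ) : Set V := {v | |v.1| ≤ a ∧ v.2 = -b}

/-- Horizontal crossing of `Λ_{a,b}` by a `rel`-path of vertices satisfying `P`. -/
def HCross (rel : V → V → Prop) (a b : ℤ) (P : V → Prop) : Prop :=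
  Connected rel {v | v ∈ Lam2 a b ∧ P v} (leftSide a b) (rightSide a b)

/-- Vertical crossing of `Λ_{a,b}` by a `rel`-path of vertices satisfying `P`. -/
def VCross (rel : V → V → Prop) (a b : ℤ) (P : V → Prop) : Prop :=
  Connected rel {v | v ∈ Lam2 a b ∧ P v} (topSide a b) (botSide a b)

/-- `F` is increasing with respect to the pointwise order on `D`. -/
def IncreasingOn (D : Set V) (F : (V → ℤ) → ℝ) : Prop :=
  ∀ h h' : V → ℤ, (∀ v ∈ D, h v ≤ h' v) → F h ≤ F h'

/-- The even box `Λ_m^even`: everything inside or on the even `×`-circuit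
surrounding the origin contained in `Λ_{m+1} ∖ Λ_{m-1}`. -/
def LamEven (m : ℤ) : Set V := Lam m ∪ {v | infNorm v = m + 1 ∧ IsEvenV v}

/-- A quad: a domain `D` together with an enumeration `p` of its boundary
`×`-circuit (closed: first vertex repeated at the end) and marked points
`a = p[0]`, `b = p[ib]`, `c = p[ic]`, `d = p[idx]` in cyclic order. -/
structure Quad where
  D : Set V
  p : List V
  hp : p ≠ []
  hchain : List.Chain' xadj p
  hclosed : p.head hp = p.getLast hp
  hbd : {v | v ∈ p} = bdry D
  hfin : D.Finite
  ib : ℕ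
  ic : ℕ
  idx : ℕ
  h0b : 0 < ib
  hbc : ib < ic
  hcd : ic < idx
  hdlen : idx + 1 < p.length

namespace Quad

def ptA (q : Quad) : V := q.p.head q.hp
def ptB (q : Quad) : V := q.p.getD q.ib ((0 : ℤ), (0 : ℤ))
def ptC (q : Quad) : V := q.p.getD q.ic ((0 : ℤ), (0 : ℤ))
def ptD (q : Quad) : V := q.p.getD q.idx ((0 : ℤ), (0 : ℤ))

/-- The (closed) arc `[ab]` of the boundary of a quad. -/
def arcAB (q : Quad) : Set V := {v | v ∈ q.p.take (q.ib + 1)}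

/-- The (closed) arc `[bc]` of the boundary of a quad. -/
def arcBC (q : Quad) : Set V := {v | v ∈ (q.p.drop q.ib).take (q.ic - q.ib + 1)}

/-- The (closed) arc `[cd]` of the boundary of a quad. -/
def arcCD (q : Quad) : Set V := {v | v ∈ (q.p.drop q.ic).take (q.idx - q.ic + 1)}

/-- The (closed) arc `[da]` of the boundary of a quad. -/
def arcDA (q : Quad) : Set V := {v | v ∈ q.p.drop q.idx}

/-- The open arc `(bc)` (excluding the endpoints `b` and `c`). -/
def openBC (q : Quad) : Set V :=
  {v | v ∈ (((q.p.drop q.ib).take (q.ic - q.ib + 1)).drop 1).dropLast}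

/-- The open arc `(da)` (excluding the endpoints `d` and `a`). -/
def openDA (q : Quad) : Set V := {v | v ∈ ((q.p.drop q.idx).drop 1).dropLast}

end Quad

def Od (v : V) : Prop := (v.1 + v.2) % 2 = 1
def Ev (v : V) : Prop := (v.1 + v.2) % 2 = 0

lemma Ev_or_Od (v : V) : Ev v ∨ Od v := by unfold Ev Od; omega
lemma not_Od {v : V} : ¬ Od v ↔ Ev v := by unfold Ev Od; omega
lemma not_Ev {v : V} : ¬ Ev v ↔ Od v := by unfold Ev Od; omega

lemma adj_symm {u v : V} (h : adj u v) : adj v u := by unfold adj at *; omega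
lemma xadj_symm {u v : V} (h : xadj u v) : xadj v u := by unfold xadj at *; omega
lemma adj_Ev {u v : V} (h : adj u v) : Ev u ↔ Od v := by unfold adj Ev Od at *; omega
lemma adj_Od {u v : V} (h : adj u v) : Od u ↔ Ev v := by unfold adj Ev Od at *; omega
lemma xadj_Od {u v : V} (h : xadj u v) : Od u ↔ Od v := by unfold xadj Od at *; omega

/-- boundary values -/
def c0 (v : V) : ℤ := 1 - (v.1 + v.2) % 2

lemma c0_Ev {v : V} (h : Ev v) : c0 v = 1 := by unfold c0 Ev at *; omega
lemma c0_Od {v : V} (h : Od v) : c0 v = 0 := by unfold c0 Od at *; omega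

/-- shifted height functions on the whole plane -/
def Hm (g : V → ℤ) : Prop :=
  (∀ u v, adj u v → |g u - g v| = 1) ∧ ∀ v, (g v + v.1 + v.2) % 2 = 1

lemma abs1 {a : ℤ} : |a| = 1 ↔ a = 1 ∨ a = -1 := abs_eq (by norm_num)

lemma Hm.adj {g : V → ℤ} (h : Hm g) {u v : V} (huv : adj u v) : g u - g v = 1 ∨ g u - g v = -1 :=
  abs1.1 (h.1 u v huv)

lemma Hm.od {g : V → ℤ} (h : Hm g) {v : V} (hv : Od v) : g v % 2 = 0 := by
  have := h.2 v; unfold Od at hv; omega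
lemma Hm.ev {g : V → ℤ} (h : Hm g) {v : V} (hv : Ev v) : g v % 2 = 1 := by
  have := h.2 v; unfold Ev at hv; omega

lemma Hm.mk' {g : V → ℤ} (h2 : ∀ v, (g v + v.1 + v.2) % 2 = 1)
    (h1 : ∀ u v, SquareIce.adj u v → Ev u → Od v → g u - g v = 1 ∨ g u - g v = -1) : Hm g := by
  refine ⟨fun u v huv => abs1.2 ?_, h2⟩
  rcases Ev_or_Od u with hu | hu
  · exact h1 u v huv hu ((adj_Ev huv).1 hu)
  · have := h1 v u (adj_symm huv) ((adj_Od huv).1 hu) hu; omega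

lemma Hm_c0 : Hm c0 := by
  refine Hm.mk' (fun v => by unfold c0; omega) fun u v huv hu hv => ?_
  rw [c0_Ev hu, c0_Od hv]; omega

lemma Hm.inf {f g : V → ℤ} (hf : Hm f) (hg : Hm g) : Hm (f ⊓ g) := by
  refine ⟨fun u v huv => abs1.2 ?_, fun v => ?_⟩
  · have := hf.adj huv; have := hg.adj huv; have := hf.2 u; have := hg.2 u
    simp only [Pi.inf_apply]; omega
  · have := hf.2 v; have := hg.2 v
    simp only [Pi.inf_apply]; omega

lemma Hm.sup {f g : V → ℤ} (hf : Hm f) (hg : Hm g) : Hm (f ⊔ g) := by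
  refine ⟨fun u v huv => abs1.2 ?_, fun v => ?_⟩
  · have := hf.adj huv; have := hg.adj huv; have := hf.2 u; have := hg.2 u
    simp only [Pi.sup_apply]; omega
  · have := hf.2 v; have := hg.2 v
    simp only [Pi.sup_apply]; omega

def ab (g : V → ℤ) : V → ℤ := fun v => |g v|

lemma ab_nonneg (g : V → ℤ) (v : V) : 0 ≤ ab g v := abs_nonneg _

lemma ab_eq_zero {g : V → ℤ} {v : V} : ab g v = 0 ↔ g v = 0 := abs_eq_zero

lemma ab_of_nonneg {f : V → ℤ} (h : ∀ v, 0 ≤ f v) : ab f = f := funext fun v => abs_of_nonneg (h v)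

lemma Hm.ab {g : V → ℤ} (hg : Hm g) : Hm (ab g) := by
  refine ⟨fun u v huv => abs1.2 ?_, fun v => ?_⟩
  · have := hg.adj huv; have := hg.2 u
    simp only [SquareIce.ab]
    rcases abs_cases (g u) with h | h <;> rcases abs_cases (g v) with h' | h' <;> omega
  · have := hg.2 v
    simp only [SquareIce.ab]
    rcases abs_cases (g v) with h | h <;> omega

/-- Configurations with boundary condition `τ` off `F`. -/
def GS (F : Set V) (τ : V → ℤ) : Set (V → ℤ) := {g | Hm g ∧ ∀ v, v ∉ F → g v = τ v}

lemma Hm.row_bound {g : V → ℤ} (hg : Hm g) (x y : ℤ) (k : ℕ) : |g (x, y) - g (x + k, y)| ≤ k := by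
  induction k with
  | zero => simp
  | succ k ih =>
    have := hg.adj (u := (x + k, y)) (v := (x + (k + 1 : ℕ), y)) (by unfold SquareIce.adj; simp)
    rw [abs_le] at *
    omega

lemma GS_finite {F : Set V} (hF : F.Finite) (τ : V → ℤ) : (GS F τ).Finite := by
  classical
  obtain ⟨M, hM⟩ : ∃ M : ℤ, ∀ v ∈ F, v.1 < M := by
    obtain ⟨M, hM⟩ := (hF.image Prod.fst).bddAbove
    exact ⟨M + 1, fun v hv => by have := hM ⟨v, hv, rfl⟩; omega⟩
  have key : ∀ g ∈ GS F τ, ∀ v ∈ F, |g v| ≤ |τ (M, v.2)| + (M - v.1) := by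
    intro g hg v hv
    have h1 := hM v hv
    have h2 := hg.1.row_bound v.1 v.2 (M - v.1).toNat
    have h3 : v.1 + ((M - v.1).toNat : ℤ) = M := by omega
    have h4 : ((M - v.1).toNat : ℤ) = M - v.1 := by omega
    rw [h3, h4, hg.2 (M, v.2) (fun h => by have := hM _ h; simp at this)] at h2
    have := abs_sub_abs_le_abs_sub (g (v.1, v.2)) (τ (M, v.2))
    have h5 : g (v.1, v.2) = g v := rfl
    rw [h5] at *
    omega
  have : Finite F := hF
  refine Set.Finite.of_finite_image (f := fun g => fun v : F => g v) ?_ ?_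
  · refine Set.Finite.subset (Set.Finite.pi' (ι := F) (t := fun v => Set.Icc (-(|τ (M, v.1.2)| + (M - v.1.1))) (|τ (M, v.1.2)| + (M - v.1.1))) fun v => Set.finite_Icc _ _) ?_
    rintro _ ⟨g, hg, rfl⟩ v
    exact abs_le.1 (key g hg v v.2)
  · intro g hg g' hg' h
    funext v
    by_cases hv : v ∈ F
    · exact congrFun h ⟨v, hv⟩
    · rw [hg.2 v hv, hg'.2 v hv]

def Msub (F : Set V) (f : V → ℤ) : Subgroup (V → ℤˣ) where
  carrier := {ε | (∀ v, Od v → ε v = 1) ∧ (∀ v, v ∉ F → ε v = 1) ∧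
    ∀ v, Od v → f v ≠ 0 → ∀ u w, adj u v → adj w v → ε u = ε w}
  mul_mem' := by
    rintro a b ⟨h1, h2, h3⟩ ⟨k1, k2, k3⟩
    refine ⟨fun v hv => by simp [h1 v hv, k1 v hv], fun v hv => by simp [h2 v hv, k2 v hv], ?_⟩
    intro v hv hf u w hu hw
    simp [h3 v hv hf u w hu hw, k3 v hv hf u w hu hw]
  one_mem' := by simp
  inv_mem' := by
    rintro a ⟨h1, h2, h3⟩
    refine ⟨fun v hv => by simp [h1 v hv], fun v hv => by simp [h2 v hv], ?_⟩
    intro v hv hf u w hu hw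
    simp [h3 v hv hf u w hu hw]

/-- representative even vertex -/
def rep (v : V) : V := if (v.1 + v.2) % 2 = 0 then v else (v.1 + 1, v.2)

lemma rep_Ev {v : V} (h : Ev v) : rep v = v := if_pos h
lemma rep_Od {v : V} (h : Od v) : rep v = (v.1 + 1, v.2) := by
  unfold rep Od at *; rw [if_neg (by omega)]
lemma rep_adj {v : V} (h : Od v) : adj (rep v) v := by rw [rep_Od h]; unfold adj; simp

def toG (f : V → ℤ) (ε : V → ℤˣ) : V → ℤ := fun v => (ε (rep v) : ℤ) * f v

lemma unit_mul_cases (e : ℤˣ) (a : ℤ) : (e : ℤ) * a = a ∨ (e : ℤ) * a = -a := by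
  rcases Int.units_eq_one_or e with rfl | rfl <;> simp

lemma toG_cases (f : V → ℤ) (ε : V → ℤˣ) (v : V) : toG f ε v = f v ∨ toG f ε v = - f v :=
  unit_mul_cases _ _

def Cls (F : Set V) (f : V → ℤ) : Set (V → ℤ) := {g | g ∈ GS F c0 ∧ ab g = f}

lemma toG_mem {F : Set V} {f : V → ℤ} (hf : f ∈ GS F c0) (h0 : ∀ v, 0 ≤ f v) {ε : V → ℤˣ}
    (hε : ε ∈ Msub F f) : toG f ε ∈ Cls F f := by
  obtain ⟨h1, h2, h3⟩ := hε
  refine ⟨⟨Hm.mk' (fun v => ?_) fun u v huv hu hv => ?_, fun v hv => ?_⟩, funext fun v => ?_⟩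
  · have := hf.1.2 v
    rcases toG_cases f ε v with h | h <;> rw [h] <;> omega
  · have h4 := hf.1.adj huv
    have h5 := h0 u
    have h6 := h0 v
    by_cases h7 : f v = 0
    · rcases toG_cases f ε v with h | h <;> rcases toG_cases f ε u with h' | h' <;> omega
    · have : ε (rep u) = ε (rep v) := by
        rw [rep_Ev hu]; exact h3 v hv h7 _ _ huv (rep_adj hv)
      unfold toG
      rw [this]
      rcases Int.units_eq_one_or (ε (rep v)) with h | h <;> rw [h] <;> push_cast <;> omega
  · rcases Ev_or_Od v with h | h
    · simp only [toG, rep_Ev h, h2 v hv, hf.2 v hv]; simp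
    · simp only [toG, hf.2 v hv, c0_Od h]; simp
  · have := h0 v
    show |toG f ε v| = f v
    rcases toG_cases f ε v with h | h <;> rw [h]
    · exact abs_of_nonneg this
    · rw [abs_neg]; exact abs_of_nonneg this

lemma toG_inj {F : Set V} {f : V → ℤ} (hf : f ∈ GS F c0) : Set.InjOn (toG f) (Msub F f : Set (V → ℤˣ)) := by
  intro ε hε ε' hε' h
  funext v
  rcases Ev_or_Od v with hv | hv
  · have h1 := congrFun h v
    simp only [toG, rep_Ev hv] at h1
    have : f v ≠ 0 := by have := hf.1.ev hv; omega
    exact Units.ext (mul_right_cancel₀ this h1)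
  · rw [hε.1 v hv, hε'.1 v hv]

lemma toG_surj {F : Set V} {f : V → ℤ} {g : V → ℤ} (hg : g ∈ Cls F f) :
    ∃ ε ∈ Msub F f, toG f ε = g := by
  classical
  obtain ⟨⟨hm, hF⟩, rfl⟩ := hg
  have sgn : ∀ u v, adj u v → Od v → g v ≠ 0 → (0 < g u ↔ 0 < g v) := by
    intro u v huv hv h0
    have := hm.adj huv; have := hm.od hv; omega
  refine ⟨fun v => if Od v ∨ 0 < g v then 1 else -1, ⟨?_, ?_, ?_⟩, ?_⟩
  · intro v hv; simp [hv]
  · intro v hv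
    rcases Ev_or_Od v with h | h
    · have := hF v hv; rw [c0_Ev h] at this; simp [this]
    · simp [h]
  · intro v hv h0 u w hu hw
    rw [Ne, ab_eq_zero] at h0
    have h1 := sgn u v hu hv h0
    have h2 := sgn w v hw hv h0
    have h3 : ¬ Od u := by rw [not_Od, adj_Ev hu]; exact hv
    have h4 : ¬ Od w := by rw [not_Od, adj_Ev hw]; exact hv
    simp [h1, h2, h3, h4]
  · funext v
    simp only [toG, ab]
    rcases Ev_or_Od v with h | h
    · rw [rep_Ev h]
      by_cases h1 : 0 < g v
      · simp [h1, abs_of_pos h1]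
      · rw [if_neg (by rw [not_or]; exact ⟨not_Od.2 h, h1⟩), abs_of_nonpos (by omega)]; simp
    · have h2 : ¬ Od (rep v) := by rw [not_Od, adj_Ev (rep_adj h)]; exact h
      by_cases h0 : g v = 0
      · simp [h0]
      · have h3 := sgn _ v (rep_adj h) h h0
        by_cases h1 : 0 < g v
        · rw [if_pos (Or.inr (h3.2 h1)), abs_of_pos h1]; simp
        · rw [if_neg (by rw [not_or]; exact ⟨h2, fun h => h1 (h3.1 h)⟩), abs_of_nonpos (by omega)]; simp

lemma toG_image {F : Set V} {f : V → ℤ} (hf : f ∈ GS F c0) (h0 : ∀ v, 0 ≤ f v) :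
    Set.image (toG f) (Msub F f : Set (V → ℤˣ)) = Cls F f := by
  ext g
  constructor
  · rintro ⟨ε, hε, rfl⟩; exact toG_mem hf h0 hε
  · intro hg; obtain ⟨ε, h1, h2⟩ := toG_surj hg; exact ⟨ε, h1, h2⟩

lemma Cls_finite {F : Set V} (hF : F.Finite) (f : V → ℤ) : (Cls F f).Finite :=
  (GS_finite hF c0).subset fun _ h => h.1

lemma Msub_finite {F : Set V} (hF : F.Finite) {f : V → ℤ} (hf : f ∈ GS F c0) (h0 : ∀ v, 0 ≤ f v) :
    (Msub F f : Set (V → ℤˣ)).Finite :=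
  Set.Finite.of_finite_image (by rw [toG_image hf h0]; exact Cls_finite hF f) (toG_inj hf)

lemma card_Msub {F : Set V} {f : V → ℤ} (hf : f ∈ GS F c0) (h0 : ∀ v, 0 ≤ f v) :
    Nat.card (Msub F f) = (Cls F f).ncard := by
  rw [← toG_image hf h0, Set.InjOn.ncard_image (toG_inj hf)]; rfl

lemma subgroup_card_ineq {G : Type*} [Group G] (H K L : Subgroup G) (hL : (L : Set G).Finite)
    (h1 : H ≤ L) (h2 : K ≤ L) : Nat.card H * Nat.card K ≤ Nat.card L * Nat.card (H ⊓ K : Subgroup G) := by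
  have : Finite L := hL
  have hne : K.relIndex L ≠ 0 := Subgroup.index_ne_zero_of_finite
  have a1 := Subgroup.relIndex_le_of_le_right h1 hne
  have a2 : Nat.card (H ⊓ K : Subgroup G) * K.relIndex H = Nat.card H := by
    have := Subgroup.card_mul_index (K.subgroupOf H)
    rw [← this, Subgroup.relIndex]
    congr 1
    rw [← Subgroup.inf_subgroupOf_left]
    exact (Nat.card_congr (Subgroup.subgroupOfEquivOfLe inf_le_left).toEquiv).symm
  have a3 : Nat.card K * K.relIndex L = Nat.card L := by
    have := Subgroup.card_mul_index (K.subgroupOf L)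
    rw [← this, Subgroup.relIndex]
    congr 1
    exact (Nat.card_congr (Subgroup.subgroupOfEquivOfLe h2).toEquiv).symm
  calc _ = Nat.card (H ⊓ K : Subgroup G) * K.relIndex H * Nat.card K := by rw [a2]
    _ ≤ Nat.card (H ⊓ K : Subgroup G) * K.relIndex L * Nat.card K := by gcongr
    _ = _ := by rw [← a3]; ring

lemma GS_inf {F : Set V} {τ τ' f g : V → ℤ} (hf : f ∈ GS F τ) (hg : g ∈ GS F τ') : f ⊓ g ∈ GS F (τ ⊓ τ') :=
  ⟨hf.1.inf hg.1, fun v hv => by simp [hf.2 v hv, hg.2 v hv]⟩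
lemma GS_sup {F : Set V} {τ τ' f g : V → ℤ} (hf : f ∈ GS F τ) (hg : g ∈ GS F τ') : f ⊔ g ∈ GS F (τ ⊔ τ') :=
  ⟨hf.1.sup hg.1, fun v hv => by simp [hf.2 v hv, hg.2 v hv]⟩

lemma GS_ab {F : Set V} {g : V → ℤ} (hg : g ∈ GS F c0) : ab g ∈ GS F c0 :=
  ⟨hg.1.ab, fun v hv => by
    simp only [ab, hg.2 v hv]; unfold c0; apply abs_of_nonneg; omega⟩

lemma Cls_supermod {F : Set V} (hF : F.Finite) {f f' : V → ℤ} (hf : f ∈ GS F c0) (h0 : ∀ v, 0 ≤ f v)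
    (hf' : f' ∈ GS F c0) (h0' : ∀ v, 0 ≤ f' v) :
    (Cls F f).ncard * (Cls F f').ncard ≤ (Cls F (f ⊓ f')).ncard * (Cls F (f ⊔ f')).ncard := by
  have hi : f ⊓ f' ∈ GS F c0 := by have := GS_inf hf hf'; rwa [inf_idem] at this
  have hs : f ⊔ f' ∈ GS F c0 := by have := GS_sup hf hf'; rwa [sup_idem] at this
  have hi0 : ∀ v, 0 ≤ (f ⊓ f') v := fun v => by simp [h0 v, h0' v]
  have hs0 : ∀ v, 0 ≤ (f ⊔ f') v := fun v => by simp [h0 v]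
  rw [← card_Msub hf h0, ← card_Msub hf' h0', ← card_Msub hi hi0, ← card_Msub hs hs0]
  have e : Msub F (f ⊔ f') = Msub F f ⊓ Msub F f' := by
    ext ε
    constructor
    · rintro ⟨h1, h2, h3⟩
      refine ⟨⟨h1, h2, fun v hv hfv => h3 v hv ?_⟩, ⟨h1, h2, fun v hv hfv => h3 v hv ?_⟩⟩ <;>
      · have := h0 v; have := h0' v; simp only [Pi.sup_apply]; omega
    · rintro ⟨⟨h1, h2, h3⟩, ⟨_, _, h4⟩⟩
      refine ⟨h1, h2, fun v hv hfv => ?_⟩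
      by_cases h : f v = 0
      · refine h4 v hv ?_
        have := h0 v; have := h0' v; simp only [Pi.sup_apply] at hfv; omega
      · exact h3 v hv h
  rw [e]
  refine subgroup_card_ineq _ _ _ (Msub_finite hF hi hi0) ?_ ?_
  · rintro ε ⟨h1, h2, h3⟩
    refine ⟨h1, h2, fun v hv hfv => h3 v hv ?_⟩
    have := h0 v; have := h0' v; simp only [Pi.inf_apply] at hfv; omega
  · rintro ε ⟨h1, h2, h3⟩
    refine ⟨h1, h2, fun v hv hfv => h3 v hv ?_⟩
    have := h0 v; have := h0' v; simp only [Pi.inf_apply] at hfv; omega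

/-- count of configurations whose absolute value satisfies `A` -/
noncomputable def NG (F : Set V) (A : (V → ℤ) → Prop) : ℕ := {g | g ∈ GS F c0 ∧ A (ab g)}.ncard

lemma ncard_fiber {α β : Type*} {s : Set α} (hs : s.Finite) (k : α → β) [DecidableEq β] :
    s.ncard = ∑ b ∈ (hs.image k).toFinset, {a | a ∈ s ∧ k a = b}.ncard := by
  classical
  have h := Finset.card_eq_sum_card_fiberwise (f := k) (s := hs.toFinset) (t := (hs.image k).toFinset)
    (by intro a ha; simp only [Set.Finite.coe_toFinset] at *; exact ⟨a, ha, rfl⟩)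
  rw [Set.ncard_eq_toFinset_card _ hs, h]
  refine Finset.sum_congr rfl fun b _ => ?_
  rw [← Set.ncard_coe_finset]
  congr 1
  ext a; simp

lemma fkg {F : Set V} (hF : F.Finite) (A1 A2 A3 A4 : (V → ℤ) → Prop)
    (h : ∀ f f', (∀ v, 0 ≤ f v) → (∀ v, 0 ≤ f' v) → A1 f → A2 f' → A3 (f ⊓ f') ∧ A4 (f ⊔ f')) :
    NG F A1 * NG F A2 ≤ NG F A3 * NG F A4 := by
  classical
  have hfin := GS_finite hF c0
  set Φ : Finset (V → ℤ) := (hfin.image ab).toFinset with hΦ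
  have memΦ : ∀ f, f ∈ Φ ↔ f ∈ GS F c0 ∧ ∀ v, 0 ≤ f v := by
    intro f
    rw [hΦ, Set.Finite.mem_toFinset]
    constructor
    · rintro ⟨g, hg, rfl⟩; exact ⟨GS_ab hg, ab_nonneg g⟩
    · rintro ⟨h1, h2⟩; exact ⟨f, h1, ab_of_nonneg h2⟩
  have hN : ∀ A, NG F A = ∑ f ∈ Φ.filter A, (Cls F f).ncard := by
    intro A
    have hs : {g | g ∈ GS F c0 ∧ A (ab g)}.Finite := hfin.subset fun _ h => h.1
    unfold NG
    rw [ncard_fiber hs ab]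
    refine Finset.sum_congr ?_ ?_
    · ext f
      simp only [Set.Finite.mem_toFinset, Finset.mem_filter, hΦ]
      constructor
      · rintro ⟨g, hg, rfl⟩; exact ⟨⟨g, hg.1, rfl⟩, hg.2⟩
      · rintro ⟨⟨g, hg, rfl⟩, h⟩; exact ⟨g, ⟨hg, h⟩, rfl⟩
    · intro f hf
      congr 1
      ext g
      have hA := (Finset.mem_filter.1 hf).2
      constructor
      · rintro ⟨⟨h1, h2⟩, h3⟩; exact ⟨h1, h3⟩
      · rintro ⟨h1, h3⟩; exact ⟨⟨h1, h3.symm ▸ hA⟩, h3⟩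
  set w : (V → ℤ) → ℕ := fun f => if f ∈ Φ then (Cls F f).ncard else 0 with hw
  have hclosed : ∀ f ∈ Φ, ∀ f' ∈ Φ, f ⊓ f' ∈ Φ ∧ f ⊔ f' ∈ Φ := by
    intro f hf f' hf'
    rw [memΦ] at hf hf'
    rw [memΦ, memΦ]
    refine ⟨⟨?_, fun v => ?_⟩, ⟨?_, fun v => ?_⟩⟩
    · have := GS_inf hf.1 hf'.1; rwa [inf_idem] at this
    · simp [hf.2 v, hf'.2 v]
    · have := GS_sup hf.1 hf'.1; rwa [sup_idem] at this
    · simp [hf.2 v]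
  have key := four_functions_theorem (β := ℕ) w w w w (fun _ => Nat.zero_le _) (fun _ => Nat.zero_le _)
    (fun _ => Nat.zero_le _) (fun _ => Nat.zero_le _) (by
      intro f f'
      by_cases hf : f ∈ Φ
      · by_cases hf' : f' ∈ Φ
        · have hc := hclosed f hf f' hf'
          simp only [hw, if_pos hf, if_pos hf', if_pos hc.1, if_pos hc.2]
          rw [memΦ] at hf hf'
          exact Cls_supermod hF hf.1 hf.2 hf'.1 hf'.2
        · simp [hw, hf']
      · simp [hw, hf]) (Φ.filter A1) (Φ.filter A2)
  have hN' : ∀ A, NG F A = ∑ f ∈ Φ.filter A, w f := by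
    intro A
    rw [hN]
    refine Finset.sum_congr rfl fun f hf => ?_
    simp only [hw, if_pos (Finset.mem_filter.1 hf).1]
  rw [hN' A1, hN' A2, hN' A3, hN' A4]
  refine key.trans (Nat.mul_le_mul (Finset.sum_le_sum_of_subset ?_) (Finset.sum_le_sum_of_subset ?_))
  · intro f hf
    obtain ⟨a, ha, b, hb, rfl⟩ := Finset.mem_infs.1 hf
    rw [Finset.mem_filter] at *
    exact ⟨(hclosed a ha.1 b hb.1).1, (h a b ((memΦ a).1 ha.1).2 ((memΦ b).1 hb.1).2 ha.2 hb.2).1⟩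
  · intro f hf
    obtain ⟨a, ha, b, hb, rfl⟩ := Finset.mem_sups.1 hf
    rw [Finset.mem_filter] at *
    exact ⟨(hclosed a ha.1 b hb.1).2, (h a b ((memΦ a).1 ha.1).2 ((memΦ b).1 hb.1).2 ha.2 hb.2).2⟩

/-- sign lemma on a fixed class -/
lemma Cls_sign {F : Set V} (hF : F.Finite) {f : V → ℤ} (hf : f ∈ GS F c0) (h0 : ∀ v, 0 ≤ f v)
    (a b : V) (ha : f a ≠ 0) (hb : f b ≠ 0) :
    (Cls F f).ncard ≤ 4 * {g | g ∈ Cls F f ∧ 0 < g a ∧ 0 < g b}.ncard := by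
  have hfinM : Finite (Msub F f) := Msub_finite hF hf h0
  let χ : Msub F f →* ℤˣ × ℤˣ :=
    { toFun := fun ε => (ε.1 (rep a), ε.1 (rep b))
      map_one' := rfl
      map_mul' := fun _ _ => rfl }
  have h1 : χ.ker.index ≤ 4 := by
    rw [Subgroup.index_ker]
    refine (Nat.card_le_card_of_injective _ Subtype.val_injective).trans ?_
    rw [Nat.card_eq_fintype_card]; decide
  have h2 := Subgroup.card_mul_index χ.ker
  rw [card_Msub hf h0] at h2
  have h3 : Nat.card χ.ker ≤ {g | g ∈ Cls F f ∧ 0 < g a ∧ 0 < g b}.ncard := by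
    have hfin : {g | g ∈ Cls F f ∧ 0 < g a ∧ 0 < g b}.Finite := (Cls_finite hF f).subset fun _ h => h.1
    have : Finite {g | g ∈ Cls F f ∧ 0 < g a ∧ 0 < g b} := hfin
    have key : ∀ ε : χ.ker, toG f ε.1.1 ∈ {g | g ∈ Cls F f ∧ 0 < g a ∧ 0 < g b} := by
      intro ε
      have h5 : χ ε.1 = 1 := ε.2
      have h6 : ε.1.1 (rep a) = 1 := congrArg Prod.fst h5
      have h7 : ε.1.1 (rep b) = 1 := congrArg Prod.snd h5
      refine ⟨toG_mem hf h0 ε.1.2, ?_, ?_⟩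
      · have := h0 a; simp only [toG, h6]; push_cast; omega
      · have := h0 b; simp only [toG, h7]; push_cast; omega
    refine Nat.card_le_card_of_injective (fun ε : χ.ker => (⟨_, key ε⟩ : {g | g ∈ Cls F f ∧ 0 < g a ∧ 0 < g b})) ?_
    intro ε ε' h
    have := toG_inj hf ε.1.2 ε'.1.2 (congrArg Subtype.val h)
    exact Subtype.ext (Subtype.ext this)
  calc _ = Nat.card χ.ker * χ.ker.index := h2.symm
    _ ≤ _ * 4 := Nat.mul_le_mul h3 h1
    _ = _ := by ring

lemma fiber_le {α β : Type*} {s t : Set α} (hs : s.Finite) (k : α → β) (c : ℕ) (hts : t ⊆ s)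
    (h : ∀ a ∈ s, {x | x ∈ s ∧ k x = k a}.ncard ≤ c * {x | x ∈ t ∧ k x = k a}.ncard) :
    s.ncard ≤ c * t.ncard := by
  classical
  have ht := hs.subset hts
  have h2 : ∑ b ∈ (hs.image k).toFinset, {a | a ∈ t ∧ k a = b}.ncard = t.ncard := by
    rw [ncard_fiber ht k]
    symm
    apply Finset.sum_subset
    · intro b hb; simp only [Set.Finite.mem_toFinset] at *; exact Set.image_mono hts hb
    · intro b _ hb
      rw [Set.ncard_eq_zero (ht.subset fun _ h => h.1)]
      ext a
      simp only [Set.mem_ofPred_eq, Set.mem_empty_iff_false, iff_false]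
      rintro ⟨h1, h2⟩
      exact hb (by simp only [Set.Finite.mem_toFinset]; exact ⟨a, h1, h2⟩)
  rw [ncard_fiber hs k, ← h2, Finset.mul_sum]
  refine Finset.sum_le_sum fun b hb => ?_
  simp only [Set.Finite.mem_toFinset] at hb
  obtain ⟨a, ha, rfl⟩ := hb
  exact h a ha

lemma sign2 {F : Set V} (hF : F.Finite) (A : (V → ℤ) → Prop) (a b : V)
    (ha : ∀ f, A f → f a ≠ 0) (hb : ∀ f, A f → f b ≠ 0) :
    NG F A ≤ 4 * {g | g ∈ GS F c0 ∧ A (ab g) ∧ 0 < g a ∧ 0 < g b}.ncard := by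
  refine fiber_le ((GS_finite hF c0).subset fun _ h => h.1) ab 4 (fun g hg => ⟨hg.1, hg.2.1⟩) ?_
  rintro g ⟨hg, hA⟩
  have := Cls_sign hF (GS_ab hg) (ab_nonneg g) a b (ha _ hA) (hb _ hA)
  convert this using 3
  · ext x; constructor
    · rintro ⟨⟨h1, h2⟩, h3⟩; exact ⟨h1, h3⟩
    · rintro ⟨h1, h3⟩; exact ⟨⟨h1, h3 ▸ hA⟩, h3⟩
  · ext x; constructor
    · rintro ⟨⟨h1, h2, h4⟩, h3⟩; exact ⟨⟨h1, h3⟩, h4⟩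
    · rintro ⟨⟨h1, h3⟩, h4⟩; exact ⟨⟨h1, h3 ▸ hA, h4⟩, h3⟩

def star (a b : V) : Prop := ∃ u, Ev u ∧ adj u a ∧ adj u b

lemma star_symm {a b : V} (h : star a b) : star b a := by
  obtain ⟨u, h1, h2, h3⟩ := h; exact ⟨u, h1, h3, h2⟩

inductive SR (S G : Set V) : V → Prop
  | base (a : V) : a ∈ G → SR S G a
  | step (a b : V) : SR S G a → star a b → b ∈ S → SR S G b

def Lk (S G1 G2 : Set V) : Prop := ∃ a, SR S G1 a ∧ ∃ b ∈ G2, star a b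

lemma SR_mono {S S' G : Set V} (h : ∀ v ∈ S, v ∈ S') {a : V} (ha : SR S G a) : SR S' G a := by
  induction ha with
  | base a ha => exact .base a ha
  | step a b _ hs hb ih => exact .step a b ih hs (h b hb)

lemma Lk_mono {S S' G1 G2 : Set V} (h : ∀ v ∈ S, v ∈ S') (hl : Lk S G1 G2) : Lk S' G1 G2 := by
  obtain ⟨a, ha, b, hb, hs⟩ := hl; exact ⟨a, SR_mono h ha, b, hb, hs⟩

structure LinkHyp (F : Set V) (σ : V → V) (N W K Γ1 Γ2 : Set V) : Prop where
  Ffin : F.Finite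
  S2 : ∀ u, Ev u → (∀ s, adj u s → s ∈ F) → u ∈ F
  inv : ∀ v, σ (σ v) = v
  sadj : ∀ u v, adj u v → adj (σ u) (σ v)
  sod : ∀ v, Od (σ v) ↔ Od v
  Nod : ∀ v ∈ N, Od v
  Wod : ∀ v ∈ W, Od v
  G1W : ∀ v ∈ Γ1, v ∈ W ∧ v ∉ K
  G2W : ∀ v ∈ Γ2, v ∈ W ∧ v ∉ K
  c1 : ∀ v ∈ N, ∀ u, adj u v → ∀ s, adj u s →
    s ∈ F ∧ (s ∈ N ∨ (s ∈ Γ1 ∨ s ∈ Γ2) ∨ ((σ s ∈ Γ1 ∨ σ s ∈ Γ2) ∧ s ∉ W))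
  Nσ : ∀ v ∈ N, σ v ∈ N
  NW : ∀ v ∈ N, v ∉ W
  con1 : ∃ a ∈ Γ1, ∀ v ∈ Γ1, Relation.ReflTransGen (fun a b => star a b ∧ b ∈ Γ1) a v
  con2 : ∃ a ∈ Γ2, ∀ v ∈ Γ2, Relation.ReflTransGen (fun a b => star a b ∧ b ∈ Γ2) a v
  c4 : ∀ S : Set V, S ⊆ N → Lk S Γ1 Γ2 ∨ Lk {v | v ∈ N ∧ v ∉ S} {v | σ v ∈ Γ1} {v | σ v ∈ Γ2}

def FNb (N : Set V) : Set V := {w | w ∈ N ∨ ∃ v ∈ N, adj w v}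

section link
variable {F : Set V} {σ : V → V} {N W K Γ1 Γ2 : Set V}

lemma LinkHyp.FN_sub (H : LinkHyp F σ N W K Γ1 Γ2) : FNb N ⊆ F := by
  have h1 : ∀ v ∈ N, v ∈ F := by
    intro v hv
    have hu : adj (v.1 + 1, v.2) v := by unfold adj; simp
    exact (H.c1 v hv _ hu v hu).1
  rintro w (hw | ⟨v, hv, hwv⟩)
  · exact h1 w hw
  · exact H.S2 w ((adj_Ev hwv).2 (H.Nod v hv)) fun s hs => (H.c1 v hv w hwv s hs).1

lemma LinkHyp.FN_site (H : LinkHyp F σ N W K Γ1 Γ2) {v : V} (hv : v ∈ FNb N) (ho : Od v) : v ∈ N := by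
  rcases hv with hv | ⟨w, hw, hvw⟩
  · exact hv
  · exact absurd ((adj_Od hvw).1 ho) (not_Ev.2 (H.Nod w hw))

/-- boundary edges of `FNb N` -/
lemma LinkHyp.FN_edge (H : LinkHyp F σ N W K Γ1 Γ2) {u v : V} (huv : adj u v) (hu : Ev u) (hv : Od v)
    (h : ¬ (u ∈ FNb N ↔ v ∈ FNb N)) : u ∈ FNb N ∧ v ∉ FNb N ∧
      ((v ∈ Γ1 ∨ v ∈ Γ2) ∨ ((σ v ∈ Γ1 ∨ σ v ∈ Γ2) ∧ v ∉ W)) := by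
  by_cases hvN : v ∈ FNb N
  · have := H.FN_site hvN hv
    exact absurd ⟨fun _ => hvN, fun _ => Or.inr ⟨v, this, huv⟩⟩ h
  · have hu' : u ∈ FNb N := by by_contra h'; exact h ⟨fun a => absurd a h', fun a => absurd a hvN⟩
    refine ⟨hu', hvN, ?_⟩
    rcases hu' with hu' | ⟨w, hw, huw⟩
    · exact absurd hu (not_Ev.2 (H.Nod u hu'))
    · rcases (H.c1 w hw u huw v huv).2 with h1 | h1
      · exact absurd (Or.inl h1) hvN
      · exact h1

open Classical in
/-- boundary function with sites in `P` at `2`, other sites `0`, evens `1` -/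
noncomputable def tau (P : Set V) (v : V) : ℤ := if Ev v then 1 else if v ∈ P then 2 else 0

lemma tau_Ev {P : Set V} {v : V} (h : Ev v) : tau P v = 1 := if_pos h
lemma tau_pos {P : Set V} {v : V} (h : Od v) (hP : v ∈ P) : tau P v = 2 := by
  unfold tau; rw [if_neg (not_Ev.2 h), if_pos hP]
lemma tau_neg {P : Set V} {v : V} (h : Od v) (hP : v ∉ P) : tau P v = 0 := by
  unfold tau; rw [if_neg (not_Ev.2 h), if_neg hP]
lemma tau_cases (P : Set V) (v : V) : (Ev v ∧ tau P v = 1) ∨ (Od v ∧ v ∈ P ∧ tau P v = 2) ∨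
    (Od v ∧ v ∉ P ∧ tau P v = 0) := by
  rcases Ev_or_Od v with h | h
  · exact Or.inl ⟨h, tau_Ev h⟩
  · by_cases hP : v ∈ P
    · exact Or.inr (Or.inl ⟨h, hP, tau_pos h hP⟩)
    · exact Or.inr (Or.inr ⟨h, hP, tau_neg h hP⟩)

lemma Hm_tau (P : Set V) : Hm (tau P) := by
  refine Hm.mk' (fun v => ?_) fun u v huv hu hv => ?_
  · rcases tau_cases P v with h | h | h <;> simp only [Ev, Od] at h <;> omega
  · rw [tau_Ev hu]
    rcases tau_cases P v with h | h | h
    · exact absurd hv (not_Od.2 h.1)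
    · omega
    · omega

lemma c0_le_tau (P : Set V) (v : V) : c0 v ≤ tau P v := by
  rcases tau_cases P v with h | h | h
  · rw [c0_Ev h.1, h.2]
  · rw [c0_Od h.1, h.2.2]; norm_num
  · rw [c0_Od h.1, h.2.2]

/-- exchange lemma -/
lemma exch_Hm {A : Set V} {g k : V → ℤ} (hg : Hm g) (hk : Hm k)
    (h : ∀ u v, adj u v → Ev u → Od v → ¬ (u ∈ A ↔ v ∈ A) → u ∈ A ∧ v ∉ A ∧ g v = k v) [DecidablePred (· ∈ A)] :
    Hm (fun v => if v ∈ A then k v else g v) := by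
  refine Hm.mk' (fun v => ?_) fun u v huv hu hv => ?_
  · split_ifs
    · exact hk.2 v
    · exact hg.2 v
  · by_cases hA : u ∈ A ↔ v ∈ A
    · by_cases hu' : u ∈ A
      · simp only [if_pos hu', if_pos (hA.1 hu')]; exact hk.adj huv
      · simp only [if_neg hu', if_neg (fun x => hu' (hA.2 x))]; exact hg.adj huv
    · obtain ⟨h1, h2, h3⟩ := h u v huv hu hv hA
      simp only [if_pos h1, if_neg h2, h3]; exact hk.adj huv

def Splus (N : Set V) (g : V → ℤ) : Set V := {v | v ∈ N ∧ 2 ≤ g v}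

/-- clean measure estimate -/
lemma LinkHyp.clean (H : LinkHyp F σ N W K Γ1 Γ2) :
    (GS (FNb N) (tau {v | ¬ ((σ v ∈ Γ1 ∨ σ v ∈ Γ2) ∧ ¬ (v ∈ Γ1 ∨ v ∈ Γ2))})).ncard ≤
    2 * {g | g ∈ GS (FNb N) (tau {v | ¬ ((σ v ∈ Γ1 ∨ σ v ∈ Γ2) ∧ ¬ (v ∈ Γ1 ∨ v ∈ Γ2))}) ∧
      Lk (Splus N g) Γ1 Γ2}.ncard := by
  classical
  set P : Set V := {v | ¬ ((σ v ∈ Γ1 ∨ σ v ∈ Γ2) ∧ ¬ (v ∈ Γ1 ∨ v ∈ Γ2))} with hP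
  set P' : Set V := {v | (v ∈ Γ1 ∨ v ∈ Γ2) ∧ ¬ (σ v ∈ Γ1 ∨ σ v ∈ Γ2)} with hP'
  have hPP : ∀ v, tau P' v ≤ tau P v := by
    intro v
    rcases tau_cases P v with h | h | h <;> rcases tau_cases P' v with h' | h' | h'
    · omega
    · exact absurd h.1 (not_Ev.2 h'.1)
    · exact absurd h.1 (not_Ev.2 h'.1)
    · exact absurd h'.1 (not_Ev.2 h.1)
    · omega
    · omega
    · exact absurd h'.1 (not_Ev.2 h.1)
    · have h1 := h.2.1; have h2 := h'.2.1
      simp only [hP, hP', Set.mem_ofPred_eq] at h1 h2; tauto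
    · omega
  have hNf : (FNb N).Finite := H.Ffin.subset H.FN_sub
  have fin1 := GS_finite hNf (tau P)
  have fin2 := GS_finite hNf (tau P')
  have hev : ∀ v, Ev (σ v) ↔ Ev v := fun v => by rw [← not_Od, ← not_Od, H.sod]
  have hFNσ : ∀ v, v ∈ FNb N → σ v ∈ FNb N := by
    rintro v (hv | ⟨w, hw, hvw⟩)
    · exact Or.inl (H.Nσ v hv)
    · exact Or.inr ⟨σ w, H.Nσ w hw, H.sadj _ _ hvw⟩
  let ψ : (V → ℤ) → (V → ℤ) := fun g v => 2 - g (σ v)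
  have ψψ : ∀ g, ψ (ψ g) = g := by
    intro g; funext v; simp only [ψ, H.inv]; ring
  have ψHm : ∀ g, Hm g → Hm (ψ g) := by
    intro g hg
    refine ⟨fun u v huv => ?_, fun v => ?_⟩
    · have := hg.1 _ _ (H.sadj _ _ huv)
      simp only [ψ]
      rw [← this, ← abs_neg]; congr 1; ring
    · have h1 := hg.2 (σ v); have h2 := H.sod v; have h3 := hev v
      simp only [Od, Ev] at h2 h3
      simp only [ψ]; omega
  have tauσ : ∀ v, tau P' v = 2 - tau P (σ v) := by
    intro v
    rcases Ev_or_Od v with h | h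
    · rw [tau_Ev h, tau_Ev ((hev v).2 h)]; norm_num
    · by_cases hv : v ∈ P'
      · rw [tau_pos h hv, tau_neg ((H.sod v).2 h)]; · norm_num
        simp only [hP, hP', Set.mem_ofPred_eq, H.inv] at *; tauto
      · rw [tau_neg h hv, tau_pos ((H.sod v).2 h)]; · norm_num
        simp only [hP, hP', Set.mem_ofPred_eq, H.inv] at *; tauto
  have tauσ' : ∀ v, tau P v = 2 - tau P' (σ v) := by
    intro v; rw [tauσ, H.inv]; ring
  have ψ1 : ∀ g ∈ GS (FNb N) (tau P), ψ g ∈ GS (FNb N) (tau P') := by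
    intro g hg
    refine ⟨ψHm g hg.1, fun v hv => ?_⟩
    rw [tauσ v]; simp only [ψ]
    rw [hg.2 (σ v) fun h => hv (by rw [← H.inv v]; exact hFNσ _ h)]
  have ψ2 : ∀ g ∈ GS (FNb N) (tau P'), ψ g ∈ GS (FNb N) (tau P) := by
    intro g hg
    refine ⟨ψHm g hg.1, fun v hv => ?_⟩
    rw [tauσ' v]; simp only [ψ]
    rw [hg.2 (σ v) fun h => hv (by rw [← H.inv v]; exact hFNσ _ h)]
  have ψinj : Function.Injective ψ := fun a b h => by rw [← ψψ a, h, ψψ]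
  -- card equality
  have hcard : (GS (FNb N) (tau P)).ncard ≤ (GS (FNb N) (tau P')).ncard :=
    Set.ncard_le_ncard_of_injOn ψ ψ1 ψinj.injOn fin2
  -- reflected link
  have SRσ : ∀ S G a, SR S G a → SR {v | σ v ∈ S} {v | σ v ∈ G} (σ a) := by
    intro S G a ha
    induction ha with
    | base a ha => exact .base _ (by simpa [H.inv] using ha)
    | step a b _ hs hb ih =>
      obtain ⟨u, h1, h2, h3⟩ := hs
      exact .step _ _ ih ⟨σ u, (hev u).2 h1, H.sadj _ _ h2, H.sadj _ _ h3⟩ (by simpa [H.inv] using hb)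
  have step1 : {g | g ∈ GS (FNb N) (tau P) ∧ ¬ Lk (Splus N g) Γ1 Γ2}.ncard ≤
      {g | g ∈ GS (FNb N) (tau P') ∧ Lk (Splus N g) Γ1 Γ2}.ncard := by
    refine Set.ncard_le_ncard_of_injOn ψ ?_ ψinj.injOn (fin2.subset fun _ h => h.1)
    rintro g ⟨hg, hl⟩
    refine ⟨ψ1 g hg, ?_⟩
    rcases H.c4 (Splus N g) (fun v hv => hv.1) with h | h
    · exact absurd h hl
    · obtain ⟨a, ha, b, hb, u, h1, h2, h3⟩ := h
      refine ⟨σ a, ?_, σ b, hb, σ u, (hev u).2 h1, H.sadj _ _ h2, H.sadj _ _ h3⟩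
      have := SRσ _ _ _ ha
      simp only [Set.mem_ofPred_eq, H.inv] at this
      refine SR_mono ?_ this
      rintro v ⟨hv1, hv2⟩
      have hvN : v ∈ N := by rw [← H.inv v]; exact H.Nσ _ hv1
      refine ⟨hvN, ?_⟩
      simp only [Splus, Set.mem_ofPred_eq, not_and] at hv2
      have h4 := hv2 hv1
      have h5 := hg.1.od (H.Nod _ hv1)
      simp only [ψ]; omega
  -- monotonicity
  have step2 : {g | g ∈ GS (FNb N) (tau P') ∧ Lk (Splus N g) Γ1 Γ2}.ncard * (GS (FNb N) (tau P)).ncard ≤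
      (GS (FNb N) (tau P')).ncard * {g | g ∈ GS (FNb N) (tau P) ∧ Lk (Splus N g) Γ1 Γ2}.ncard := by
    have f1 : {g | g ∈ GS (FNb N) (tau P') ∧ Lk (Splus N g) Γ1 Γ2}.Finite := fin2.subset fun _ h => h.1
    have f2 : {g | g ∈ GS (FNb N) (tau P) ∧ Lk (Splus N g) Γ1 Γ2}.Finite := fin1.subset fun _ h => h.1
    rw [Set.ncard_eq_toFinset_card _ f1, Set.ncard_eq_toFinset_card _ f2, Set.ncard_eq_toFinset_card _ fin1,
      Set.ncard_eq_toFinset_card _ fin2]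
    refine (Finset.le_card_infs_mul_card_sups _ _).trans (Nat.mul_le_mul (Finset.card_le_card ?_) (Finset.card_le_card ?_))
    · intro f hf
      obtain ⟨a, ha, b, hb, rfl⟩ := Finset.mem_infs.1 hf
      simp only [Set.Finite.mem_toFinset] at *
      have := GS_inf ha.1 hb
      rwa [inf_eq_left.2 (fun v => hPP v)] at this
    · intro f hf
      obtain ⟨a, ha, b, hb, rfl⟩ := Finset.mem_sups.1 hf
      simp only [Set.Finite.mem_toFinset] at *
      have := GS_sup ha.1 hb
      rw [sup_eq_right.2 (fun v => hPP v)] at this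
      exact ⟨this, Lk_mono (fun v hv => ⟨hv.1, hv.2.trans (by simp)⟩) ha.2⟩
  have hcard' : (GS (FNb N) (tau P')).ncard ≤ (GS (FNb N) (tau P)).ncard :=
    Set.ncard_le_ncard_of_injOn ψ ψ2 ψinj.injOn fin1
  have hpos : 0 < (GS (FNb N) (tau P)).ncard :=
    (Set.ncard_pos fin1).2 ⟨tau P, Hm_tau P, fun _ _ => rfl⟩
  have heq := le_antisymm hcard hcard'
  rw [← heq, mul_comm] at step2
  have step3 := Nat.le_of_mul_le_mul_left step2 hpos
  have step4 : (GS (FNb N) (tau P)).ncard ≤ {g | g ∈ GS (FNb N) (tau P) ∧ Lk (Splus N g) Γ1 Γ2}.ncard +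
      {g | g ∈ GS (FNb N) (tau P) ∧ ¬ Lk (Splus N g) Γ1 Γ2}.ncard := by
    refine le_trans (Set.ncard_le_ncard ?_ ?_) (Set.ncard_union_le _ _)
    · intro g hg
      by_cases h : Lk (Splus N g) Γ1 Γ2
      · exact Or.inl ⟨hg, h⟩
      · exact Or.inr ⟨hg, h⟩
    · exact (fin1.subset fun _ h => h.1).union (fin1.subset fun _ h => h.1)
  omega

theorem LinkHyp.main (H : LinkHyp F σ N W K Γ1 Γ2) :
    NG F (fun f => ∀ v ∈ W, (f v = 0 ↔ v ∈ K)) ≤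
    8 * NG F (fun f => (∀ v ∈ W, (f v = 0 ↔ v ∈ K)) ∧ Lk {v | v ∈ N ∧ f v ≠ 0} Γ1 Γ2) := by
  classical
  set P : Set V := {v | ¬ ((σ v ∈ Γ1 ∨ σ v ∈ Γ2) ∧ ¬ (v ∈ Γ1 ∨ v ∈ Γ2))} with hP
  set Q : Set V := {v | v ∈ W ∧ v ∉ K} with hQ
  set L : (V → ℤ) → Prop := fun f => ∀ v ∈ W, (f v = 0 ↔ v ∈ K) with hL
  set A : (V → ℤ) → Prop := fun f => L f ∧ Lk {v | v ∈ N ∧ f v ≠ 0} Γ1 Γ2 with hA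
  set B : (V → ℤ) → Prop := fun f => L f ∧ ∀ v, v ∉ FNb N → f v ≤ tau Q v with hB
  have hfin := GS_finite H.Ffin c0
  have stepA : NG F (fun f => A f ∧ B f) * NG F L ≤ NG F B * NG F A := by
    refine fkg H.Ffin _ _ _ _ ?_
    rintro f f' h0 h0' ⟨h1, h2⟩ h3
    have hLi : L (f ⊓ f') := by
      intro v hv
      have a1 := h1.1 v hv; have a2 := h3 v hv; have := h0 v; have := h0' v
      rw [← a1]; rw [← a1] at a2
      simp only [Pi.inf_apply]; omega
    have hLs : L (f ⊔ f') := by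
      intro v hv
      have a1 := h1.1 v hv; have a2 := h3 v hv; have := h0 v; have := h0' v
      rw [← a1]; rw [← a1] at a2
      simp only [Pi.sup_apply]; omega
    refine ⟨⟨hLi, fun v hv => ?_⟩, ⟨hLs, Lk_mono ?_ h1.2⟩⟩
    · have := h2.2 v hv; simp only [Pi.inf_apply]; omega
    · rintro v ⟨hv, hv'⟩
      refine ⟨hv, ?_⟩
      have := h0 v; have := h0' v
      simp only [Pi.sup_apply]; omega
  obtain ⟨a1, ha1, hcon1⟩ := H.con1
  obtain ⟨a2, ha2, hcon2⟩ := H.con2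
  set Ω : Set (V → ℤ) := {g | g ∈ GS F c0 ∧ B (ab g) ∧ 0 < g a1 ∧ 0 < g a2} with hΩ
  have stepB : NG F B ≤ 4 * Ω.ncard := by
    refine sign2 H.Ffin B a1 a2 (fun f hf h0 => ?_) (fun f hf h0 => ?_)
    · exact (H.G1W a1 ha1).2 ((hf.1 a1 (H.G1W a1 ha1).1).1 h0)
    · exact (H.G2W a2 ha2).2 ((hf.1 a2 (H.G2W a2 ha2).1).1 h0)
  have WnotFN : ∀ v ∈ W, v ∉ FNb N := fun v hv h => H.NW v (H.FN_site h (H.Wod v hv)) hv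
  have absΩ : ∀ g, g ∈ GS F c0 → B (ab g) → ∀ v ∈ W, v ∉ K → g v = 2 ∨ g v = -2 := by
    intro g hg hB v hv hK
    have h1 := hB.2 v (WnotFN v hv)
    rw [tau_pos (P := Q) (H.Wod v hv) ⟨hv, hK⟩] at h1
    have h2 : g v ≠ 0 := fun h => hK ((hB.1 v hv).1 (ab_eq_zero.2 h))
    have h3 := hg.1.od (H.Wod v hv)
    simp only [ab] at h1
    rw [abs_le] at h1
    omega
  have conn : ∀ (Γ : Set V) g, g ∈ GS F c0 → B (ab g) → (∀ v ∈ Γ, v ∈ W ∧ v ∉ K) → ∀ a ∈ Γ, 0 < g a → ∀ v,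
      Relation.ReflTransGen (fun a b => star a b ∧ b ∈ Γ) a v → 0 < g v ∧ v ∈ Γ := by
    intro Γ g hg hB hΓ a ha hpos v hv
    induction hv with
    | refl => exact ⟨hpos, ha⟩
    | tail _ hbc ih =>
      rename_i b c _
      refine ⟨?_, hbc.2⟩
      obtain ⟨u, hu, h1, h2⟩ := hbc.1
      have e1 := absΩ g hg hB b (hΓ b ih.2).1 (hΓ b ih.2).2
      have e2 := absΩ g hg hB c (hΓ c hbc.2).1 (hΓ c hbc.2).2
      have := hg.1.adj h1; have := hg.1.adj h2; have := ih.1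
      omega
  have Ω2 : ∀ g ∈ Ω, ∀ v, v ∈ Γ1 ∨ v ∈ Γ2 → g v = 2 := by
    rintro g ⟨hg, hB, hp1, hp2⟩ v (hv | hv)
    · have h1 := (conn Γ1 g hg hB H.G1W a1 ha1 hp1 v (hcon1 v hv)).1
      have h2 := absΩ g hg hB v (H.G1W v hv).1 (H.G1W v hv).2
      omega
    · have h1 := (conn Γ2 g hg hB H.G2W a2 ha2 hp2 v (hcon2 v hv)).1
      have h2 := absΩ g hg hB v (H.G2W v hv).1 (H.G2W v hv).2
      omega
  have ΓW : ∀ v, v ∈ Γ1 ∨ v ∈ Γ2 → v ∈ W := by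
    rintro v (h | h)
    · exact (H.G1W v h).1
    · exact (H.G2W v h).1
  set T := GS (FNb N) (tau P) with hT
  have agree : ∀ g ∈ Ω, ∀ k ∈ T, ∀ u v, adj u v → Ev u → Od v → ¬ (u ∈ FNb N ↔ v ∈ FNb N) →
      u ∈ FNb N ∧ v ∉ FNb N ∧ g v = k v := by
    intro g hg k hk u v huv hu hv h
    obtain ⟨h1, h2, h3⟩ := H.FN_edge huv hu hv h
    refine ⟨h1, h2, ?_⟩
    rw [hk.2 v h2]
    rcases h3 with h3 | ⟨h3, h4⟩
    · rw [Ω2 g hg v h3, tau_pos hv]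
      simp only [hP, Set.mem_ofPred_eq]; tauto
    · have h5 : ¬ (v ∈ Γ1 ∨ v ∈ Γ2) := fun h => h4 (ΓW v h)
      rw [tau_neg (P := P) hv (by simp only [hP, Set.mem_ofPred_eq]; tauto)]
      have h6 := hg.2.1.2 v h2
      rw [tau_neg (P := Q) hv (fun h => h4 h.1)] at h6
      exact ab_eq_zero.1 (le_antisymm h6 (ab_nonneg g v))
  -- exchange
  let ex1 : (V → ℤ) → (V → ℤ) → (V → ℤ) := fun g k v => if v ∈ FNb N then k v else g v
  have ex1Ω : ∀ g ∈ Ω, ∀ k ∈ T, ex1 g k ∈ Ω := by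
    intro g hg k hk
    have hne : ∀ v, v ∉ FNb N → ex1 g k v = g v := fun v hv => if_neg hv
    refine ⟨⟨exch_Hm hg.1.1 hk.1 (agree g hg k hk), fun v hv => ?_⟩, ⟨fun v hv => ?_, fun v hv => ?_⟩, ?_, ?_⟩
    · rw [hne v (fun h => hv (H.FN_sub h))]; exact hg.1.2 v hv
    · have := hg.2.1.1 v hv
      simp only [ab, hne v (WnotFN v hv)] at *; exact this
    · have := hg.2.1.2 v hv
      simp only [ab, hne v hv] at *; exact this
    · rw [hne a1 (WnotFN _ (ΓW a1 (Or.inl ha1)))]; exact hg.2.2.1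
    · rw [hne a2 (WnotFN _ (ΓW a2 (Or.inr ha2)))]; exact hg.2.2.2
  have ex1T : ∀ g ∈ Ω, ∀ k ∈ T, ex1 k g ∈ T := by
    intro g hg k hk
    refine ⟨exch_Hm hk.1 hg.1.1 fun u v huv hu hv h => ?_, fun v hv => ?_⟩
    · obtain ⟨h1, h2, h3⟩ := agree g hg k hk u v huv hu hv h
      exact ⟨h1, h2, h3.symm⟩
    · simp only [ex1, if_neg hv]; exact hk.2 v hv
  have hΩf : Ω.Finite := hfin.subset fun _ h => h.1
  have hTf : T.Finite := GS_finite (H.Ffin.subset H.FN_sub) _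
  have stepC : Ω.ncard * {k | k ∈ T ∧ Lk (Splus N k) Γ1 Γ2}.ncard ≤
      {g | g ∈ Ω ∧ Lk (Splus N g) Γ1 Γ2}.ncard * T.ncard := by
    rw [← Set.ncard_prod, ← Set.ncard_prod]
    refine Set.ncard_le_ncard_of_injOn (fun x => (ex1 x.1 x.2, ex1 x.2 x.1)) ?_ ?_
      ((hΩf.subset fun _ h => h.1).prod hTf)
    · rintro ⟨g, k⟩ ⟨hg, hk, hl⟩
      refine ⟨⟨ex1Ω g hg k hk, Lk_mono ?_ hl⟩, ex1T g hg k hk⟩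
      rintro v ⟨h1, h2⟩
      refine ⟨h1, ?_⟩
      simp only [ex1, if_pos (show v ∈ FNb N from Or.inl h1)]; exact h2
    · rintro ⟨g, k⟩ _ ⟨g', k'⟩ _ h
      simp only [Prod.mk.injEq] at h
      ext v
      · by_cases hv : v ∈ FNb N
        · have := congrFun h.2 v; simpa [ex1, hv] using this
        · have := congrFun h.1 v; simpa [ex1, hv] using this
      · by_cases hv : v ∈ FNb N
        · have := congrFun h.1 v; simpa [ex1, hv] using this
        · have := congrFun h.2 v; simpa [ex1, hv] using this
  have clean := H.clean
  have hTpos : 0 < T.ncard := (Set.ncard_pos hTf).2 ⟨tau P, Hm_tau P, fun _ _ => rfl⟩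
  have stepC' : Ω.ncard ≤ 2 * {g | g ∈ Ω ∧ Lk (Splus N g) Γ1 Γ2}.ncard := by
    refine Nat.le_of_mul_le_mul_right ?_ hTpos
    calc Ω.ncard * T.ncard ≤ Ω.ncard * (2 * {k | k ∈ T ∧ Lk (Splus N k) Γ1 Γ2}.ncard) :=
          Nat.mul_le_mul_left _ clean
      _ = 2 * (Ω.ncard * {k | k ∈ T ∧ Lk (Splus N k) Γ1 Γ2}.ncard) := by ring
      _ ≤ 2 * ({g | g ∈ Ω ∧ Lk (Splus N g) Γ1 Γ2}.ncard * T.ncard) := Nat.mul_le_mul_left _ stepC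
      _ = _ := by ring
  have stepD : {g | g ∈ Ω ∧ Lk (Splus N g) Γ1 Γ2}.ncard ≤ NG F (fun f => A f ∧ B f) := by
    refine Set.ncard_le_ncard ?_ (hfin.subset fun _ h => h.1)
    rintro g ⟨hg, hl⟩
    refine ⟨hg.1, ⟨hg.2.1.1, Lk_mono ?_ hl⟩, hg.2.1⟩
    rintro v ⟨h1, h2⟩
    refine ⟨h1, ?_⟩
    rw [Ne, ab_eq_zero]; omega
  have hBpos : 0 < NG F L → 0 < NG F B := by
    intro h
    obtain ⟨g, hg, hgL⟩ := (Set.ncard_pos (hfin.subset fun _ h => h.1)).1 h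
    refine (Set.ncard_pos (hfin.subset fun _ h => h.1)).2 ⟨ab g ⊓ tau Q, ?_, ?_⟩
    · refine ⟨hg.1.ab.inf (Hm_tau Q), fun v hv => ?_⟩
      have h1 := (GS_ab hg).2 v hv
      simp only [Pi.inf_apply, h1]
      exact min_eq_left (c0_le_tau Q v)
    · have h0 : ab (ab g ⊓ tau Q) = ab g ⊓ tau Q := ab_of_nonneg fun v => by
        have h1 := ab_nonneg g v
        simp only [Pi.inf_apply]
        refine le_min h1 ?_
        rcases tau_cases Q v with h | h | h <;> omega
      rw [h0]
      refine ⟨fun v hv => ?_, fun v _ => by simp⟩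
      have h1 := hgL v hv
      have h2 := ab_nonneg g v
      simp only [Pi.inf_apply]
      rcases tau_cases Q v with h | h | h
      · exact absurd h.1 (not_Ev.2 (H.Wod v hv))
      · rw [← h1]; omega
      · have : v ∈ K := by by_contra hK; exact h.2.1 ⟨hv, hK⟩
        have h3 := h1.2 this
        simp only [this, iff_true]; omega
  by_cases hLz : NG F L = 0
  · rw [hLz]; exact Nat.zero_le _
  have h1 := hBpos (Nat.pos_of_ne_zero hLz)
  have h2 : NG F B ≤ 8 * NG F (fun f => A f ∧ B f) := by omega
  have h3 : 0 < NG F (fun f => A f ∧ B f) := by omega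
  refine Nat.le_of_mul_le_mul_left ?_ h3
  calc _ ≤ NG F B * NG F A := stepA
    _ ≤ 8 * NG F (fun f => A f ∧ B f) * NG F A := Nat.mul_le_mul_right _ h2
    _ = _ := by ring

end link

def Bx (x0 x1 y0 y1 : ℤ) : Set V := {v | x0 ≤ v.1 ∧ v.1 ≤ x1 ∧ y0 ≤ v.2 ∧ v.2 ≤ y1}

lemma mem_Bx {x0 x1 y0 y1 : ℤ} {v : V} : v ∈ Bx x0 x1 y0 y1 ↔ x0 ≤ v.1 ∧ v.1 ≤ x1 ∧ y0 ≤ v.2 ∧ v.2 ≤ y1 := Iff.rfl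

def hd (p : List V) : V := p.headD (0, 0)
def lt (p : List V) : V := p.getLastD (0, 0)

lemma hd_mem {p : List V} (h : p ≠ []) : hd p ∈ p := by
  cases p with
  | nil => exact absurd rfl h
  | cons a l => simp [hd]

lemma lt_eq {p : List V} (h : p ≠ []) : lt p = p.getLast h := by
  cases p with
  | nil => exact absurd rfl h
  | cons a l => rw [lt, List.getLastD_eq_getLast?, List.getLast?_eq_getLast_of_ne_nil h]; rfl

lemma hd_eq {p : List V} (h : p ≠ []) : hd p = p.head h := by
  cases p with
  | nil => exact absurd rfl h
  | cons a l => rfl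

lemma lt_mem {p : List V} (h : p ≠ []) : lt p ∈ p := by
  rw [lt_eq h]; exact List.getLast_mem h

lemma lt_cons_cons (a b : V) (l : List V) : lt (a :: b :: l) = lt (b :: l) := by
  rw [lt_eq (by simp), lt_eq (by simp), List.getLast_cons]

def esum (e : V → V → ZMod 2) : List V → ZMod 2
  | [] => 0
  | [_] => 0
  | a :: b :: l => e a b + esum e (b :: l)

lemma z2 (x : ZMod 2) : x + x = 0 := CharTwo.add_self_eq_zero x

lemma esum_tele (e : V → V → ZMod 2) (ψ : V → ZMod 2) (p : List V) (hp : p ≠ []) (hc : List.IsChain xadj p)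
    (h : ∀ a ∈ p, ∀ b ∈ p, xadj a b → e a b = ψ a + ψ b) : esum e p = ψ (hd p) + ψ (lt p) := by
  induction p with
  | nil => exact absurd rfl hp
  | cons a l ih =>
    cases l with
    | nil => simp [esum, hd, lt, z2]
    | cons b l =>
      rw [List.isChain_cons_cons] at hc
      have := ih (by simp) hc.2 (fun a ha b hb => h a (List.mem_cons_of_mem _ ha) b (List.mem_cons_of_mem _ hb))
      rw [esum, this, h a (by simp) b (by simp) hc.1, lt_cons_cons]
      have h1 : hd (b :: l) = b := rfl
      have h2 : hd (a :: b :: l) = a := rfl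
      rw [h1, h2]
      have := z2 (ψ b)
      linear_combination this

lemma esum_add (e e' : V → V → ZMod 2) (p : List V) : esum (fun a b => e a b + e' a b) p = esum e p + esum e' p := by
  induction p with
  | nil => simp [esum]
  | cons a l ih =>
    cases l with
    | nil => simp [esum]
    | cons b l => simp only [esum, ih]; ring

lemma esum_zero (e : V → V → ZMod 2) (p : List V) (hc : List.IsChain xadj p)
    (h : ∀ a ∈ p, ∀ b ∈ p, xadj a b → e a b = 0) : esum e p = 0 := by
  by_cases hp : p = []
  · subst hp; rfl
  · rw [esum_tele e (fun _ => 0) p hp hc (fun a ha b hb hab => by rw [h a ha b hb hab]; simp)]; simp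

lemma esum_congr (e e' : V → V → ZMod 2) (p : List V) (hc : List.IsChain xadj p)
    (h : ∀ a ∈ p, ∀ b ∈ p, xadj a b → e a b = e' a b) : esum e p = esum e' p := by
  have : esum (fun a b => e a b + e' a b) p = 0 :=
    esum_zero _ p hc fun a ha b hb hab => by rw [h a ha b hb hab]; exact z2 _
  rw [esum_add] at this
  have h2 := z2 (esum e' p)
  linear_combination this - h2

def et (v a b : V) : ZMod 2 := if min a.2 b.2 = v.2 ∧ a.1 + b.1 < 2 * v.1 then 1 else 0

/-- side function of a path starting in row `y1` -/
def side (y1 : ℤ) (p : List V) (v : V) : ZMod 2 :=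
  esum (et v) p + if y1 ≤ v.2 ∧ (hd p).1 < v.1 then 1 else 0

section
variable {x0 x1 y0 y1 : ℤ} {p : List V}

lemma side_vert (hp : p ≠ []) (hc : List.IsChain xadj p) (hh : (hd p).2 = y1) (w : V) (hw : w ∉ p) (hwy : w.2 ≤ y1) :
    side y1 p w + side y1 p (w.1, w.2 - 1) = if (lt p).2 = w.2 ∧ (lt p).1 < w.1 then 1 else 0 := by
  have key := esum_tele (fun a b => et w a b + et (w.1, w.2 - 1) a b)
    (fun u => if u.2 = w.2 ∧ u.1 < w.1 then 1 else 0) p hp hc (by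
      intro a ha b hb hab
      have h1 : ¬ (a.1 = w.1 ∧ a.2 = w.2) := fun h => hw (by rwa [show w = a from Prod.ext h.1.symm h.2.symm])
      have h2 : ¬ (b.1 = w.1 ∧ b.2 = w.2) := fun h => hw (by rwa [show w = b from Prod.ext h.1.symm h.2.symm])
      unfold xadj at hab
      simp only [et]
      split_ifs <;> first | omega | rfl)
  rw [esum_add] at key
  simp only [side]
  have e1 : (if y1 ≤ w.2 ∧ (hd p).1 < w.1 then (1 : ZMod 2) else 0) = if (hd p).2 = w.2 ∧ (hd p).1 < w.1 then 1 else 0 := by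
    congr 1; rw [eq_iff_iff]; constructor <;> rintro ⟨h1, h2⟩ <;> exact ⟨by omega, h2⟩
  have e2 : (if y1 ≤ w.2 - 1 ∧ (hd p).1 < w.1 then (1 : ZMod 2) else 0) = 0 := if_neg (by omega)
  rw [e1, e2]
  have := z2 (if (hd p).2 = w.2 ∧ (hd p).1 < w.1 then (1 : ZMod 2) else 0)
  linear_combination key + this

lemma side_horiz (hp : p ≠ []) (hc : List.IsChain xadj p) (hh : (hd p).2 = y1) (v : V) (hv : v ∉ p)
    (hw : (v.1 + 1, v.2) ∉ p) (hvy : v.2 ≤ y1) : side y1 p v = side y1 p (v.1 + 1, v.2) := by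
  simp only [side]
  congr 1
  · refine esum_congr _ _ p hc fun a ha b hb hab => ?_
    have h1 : ¬ (a.1 = v.1 ∧ a.2 = v.2) := fun h => hv (by rwa [show v = a from Prod.ext h.1.symm h.2.symm])
    have h2 : ¬ (b.1 = v.1 ∧ b.2 = v.2) := fun h => hv (by rwa [show v = b from Prod.ext h.1.symm h.2.symm])
    have h3 : ¬ (a.1 = v.1 + 1 ∧ a.2 = v.2) := fun h => hw (by rwa [show (v.1 + 1, v.2) = a from Prod.ext h.1.symm h.2.symm])
    have h4 : ¬ (b.1 = v.1 + 1 ∧ b.2 = v.2) := fun h => hw (by rwa [show (v.1 + 1, v.2) = b from Prod.ext h.1.symm h.2.symm])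
    unfold xadj at hab
    simp only [et]
    split_ifs <;> first | omega | rfl
  · have h1 : ¬ ((hd p).1 = v.1 ∧ (hd p).2 = v.2) := fun h => hv (by
      rw [show v = hd p from Prod.ext h.1.symm h.2.symm]; exact hd_mem hp)
    split_ifs <;> first | omega | rfl

lemma side_adj (hp : p ≠ []) (hc : List.IsChain xadj p) (hh : (hd p).2 = y1) (hl : (lt p).2 = y0 ∨ x1 ≤ (lt p).1)
    {v w : V} (hvB : v ∈ Bx x0 x1 y0 y1) (hwB : w ∈ Bx x0 x1 y0 y1) (hv : v ∉ p) (hw : w ∉ p) (h : adj v w) :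
    side y1 p v = side y1 p w := by
  rw [mem_Bx] at hvB hwB
  have vert : ∀ w : V, w ∈ Bx x0 x1 (y0 + 1) y1 → w ∉ p → side y1 p w = side y1 p (w.1, w.2 - 1) := by
    intro w hwB hw
    rw [mem_Bx] at hwB
    have := side_vert hp hc hh w hw (by omega)
    rw [if_neg (by omega)] at this
    have h2 := z2 (side y1 p (w.1, w.2 - 1))
    linear_combination this - h2
  obtain ⟨a, b⟩ := v
  obtain ⟨c, d⟩ := w
  unfold adj at h
  simp only at *
  have : (c = a + 1 ∧ d = b) ∨ (a = c + 1 ∧ d = b) ∨ (c = a ∧ d = b + 1) ∨ (c = a ∧ b = d + 1) := by omega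
  rcases this with ⟨rfl, rfl⟩ | ⟨rfl, rfl⟩ | ⟨rfl, rfl⟩ | ⟨rfl, rfl⟩
  · exact side_horiz hp hc hh (a, d) hv hw (by simp only; omega)
  · exact (side_horiz hp hc hh (c, d) hw hv (by simp only; omega)).symm
  · have := vert (c, b + 1) (by rw [mem_Bx]; simp only; omega) hw
    simp only [add_sub_cancel_right] at this
    exact this.symm
  · have := vert (c, d + 1) (by rw [mem_Bx]; simp only; omega) hv
    simp only [add_sub_cancel_right] at this
    exact this

lemma side_left (hp : p ≠ []) (hc : List.IsChain xadj p) (hB : ∀ v ∈ p, v ∈ Bx x0 x1 y0 y1) {v : V} (hv : v.1 ≤ x0) :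
    side y1 p v = 0 := by
  unfold side
  rw [esum_zero, if_neg]
  · simp
  · have := hB _ (hd_mem hp); rw [mem_Bx] at this; omega
  · exact hc
  · intro a ha b hb hab
    have := hB _ ha; have := hB _ hb; rw [mem_Bx] at *
    exact if_neg (by omega)

lemma side_top (hc : List.IsChain xadj p) (hB : ∀ v ∈ p, v ∈ Bx x0 x1 y0 y1) {v : V} (hv : v.2 = y1) :
    side y1 p v = if (hd p).1 < v.1 then 1 else 0 := by
  unfold side
  rw [esum_zero _ _ hc, zero_add]
  · congr 1; rw [eq_iff_iff]; constructor
    · exact fun h => h.2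
    · exact fun h => ⟨by omega, h⟩
  · intro a ha b hb hab
    have := hB _ ha; have := hB _ hb; rw [mem_Bx] at *
    unfold xadj at hab
    exact if_neg (by omega)

lemma side_right (hp : p ≠ []) (hc : List.IsChain xadj p) (hh : (hd p).2 = y1) (hl : (lt p).2 = y0)
    (hB : ∀ v ∈ p, v ∈ Bx x0 x1 y0 y1) {v : V} (hv : v.1 = x1) (h0 : y0 ≤ v.2) (h1 : v.2 ≤ y1) (hvp : v ∉ p) :
    side y1 p v = 1 := by
  unfold side
  rw [esum_tele (et v) (fun u => if v.2 + 1 ≤ u.2 then 1 else 0) p hp hc, hl, hh]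
  · have hb := hB _ (hd_mem hp)
    rw [mem_Bx] at hb
    have h2 : v.2 = y1 → (hd p).1 < v.1 := by
      intro h
      have : (hd p).1 ≠ v.1 := fun h' => hvp (by
        rw [show v = hd p from Prod.ext h'.symm (by omega)]; exact hd_mem hp)
      omega
    by_cases h3 : v.2 = y1
    · rw [if_neg (by omega), if_neg (by omega), if_pos ⟨by omega, h2 h3⟩]; simp
    · rw [if_pos (by omega), if_neg (by omega), if_neg (by omega)]; simp
  · intro a ha b hb hab
    have := hB _ ha; have := hB _ hb; rw [mem_Bx] at *
    unfold xadj at hab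
    unfold et
    split_ifs <;> first | omega | rfl

lemma side_bot (hp : p ≠ []) (hc : List.IsChain xadj p) (hh : (hd p).2 = y1) (hl : x1 ≤ (lt p).1)
    (hB : ∀ v ∈ p, v ∈ Bx x0 x1 y0 y1) {v : V} (hv : v.2 = y0) (h1 : v.1 ≤ x1) (hvp : v ∉ p) :
    side y1 p v = 0 := by
  have hb := hB _ (hd_mem hp)
  rw [mem_Bx] at hb
  have key := side_vert hp hc hh v hvp (by omega)
  rw [if_neg (by omega)] at key
  have : side y1 p (v.1, v.2 - 1) = 0 := by
    unfold side
    rw [esum_zero _ _ hc, if_neg]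
    · simp
    · simp only; omega
    · intro a ha b hb hab
      have := hB _ ha; have := hB _ hb; rw [mem_Bx] at *
      exact if_neg (by simp only; omega)
  rw [this] at key
  simpa using key

end

lemma int_tele (χ : ℤ → ZMod 2) (a b : ℤ) (h : a ≤ b) :
    ∑ x ∈ Finset.Ico a b, (χ (x + 1) + χ x) = χ b + χ a := by
  induction b, h using Int.leInduction with
  | base => simp [z2]
  | succ b hb ih =>
    rw [← Finset.insert_Ico_right_eq_Ico_add_one hb, Finset.sum_insert (by simp), ih]
    have := z2 (χ b)
    linear_combination this

lemma chain_nbr {α : Type*} {R : α → α → Prop} {p : List α} (hc : List.IsChain R p) (hl : 2 ≤ p.length) {v : α} (hv : v ∈ p) :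
    ∃ w ∈ p, R v w ∨ R w v := by
  induction p with
  | nil => simp at hv
  | cons a l ih =>
    cases l with
    | nil => simp at hl
    | cons b l =>
      have hc' := List.isChain_cons_cons.1 hc
      rcases List.mem_cons.1 hv with rfl | hv
      · exact ⟨b, by simp, Or.inl hc'.1⟩
      · cases l with
        | nil =>
          simp at hv; subst hv
          exact ⟨a, by simp, Or.inr hc'.1⟩
        | cons c l =>
          obtain ⟨w, hw, h⟩ := ih hc'.2 (by simp) hv
          exact ⟨w, List.mem_cons_of_mem _ hw, h⟩

def Dl (U : V → Prop) (a b : V) : Prop := xadj a b ∧ ¬ (U (b.1, a.2) ↔ U (a.1, b.2))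

def Uex (x0 x1 : ℤ) (U : V → Prop) (v : V) : Prop := v.1 ≤ x0 ∨ (v.1 < x1 ∧ U v)

section
open Classical

noncomputable def ind (U : V → Prop) (v : V) : ZMod 2 := if U v then 1 else 0

lemma ind_ne {U : V → Prop} {a b : V} : ind U a + ind U b ≠ 0 ↔ ¬ (U a ↔ U b) := by
  unfold ind
  by_cases h1 : U a <;> by_cases h2 : U b <;> simp [h1, h2]
  decide

noncomputable def dterm (y0 y1 : ℤ) (u : V → ZMod 2) (a d : V) : ZMod 2 :=
  if y0 ≤ a.2 + d.2 ∧ a.2 + d.2 ≤ y1 then u (a.1 + d.1, a.2) + u (a.1, a.2 + d.2) else 0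

def DD : Finset V := {(1, 1), (1, -1), (-1, 1), (-1, -1)}

lemma deg_eq {y0 y1 : ℤ} (hy : y0 < y1) (u : V → ZMod 2) (a : V) (h0 : y0 ≤ a.2) (h1 : a.2 ≤ y1) :
    ∑ d ∈ DD, dterm y0 y1 u a d = if a.2 = y0 ∨ a.2 = y1 then u (a.1 - 1, a.2) + u (a.1 + 1, a.2) else 0 := by
  unfold DD
  rw [Finset.sum_insert (by decide), Finset.sum_insert (by decide), Finset.sum_insert (by decide), Finset.sum_singleton]
  simp only [dterm]
  simp only [← sub_eq_add_neg]
  have e1 := z2 (u (a.1, a.2 + 1))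
  have e2 := z2 (u (a.1, a.2 - 1))
  have e3 := z2 (u (a.1 + 1, a.2))
  have e4 := z2 (u (a.1 - 1, a.2))
  by_cases g1 : a.2 = y0
  · rw [if_pos (by omega), if_neg (by omega), if_pos (by omega), if_neg (by omega), if_pos (by omega)]
    linear_combination e1
  · by_cases g2 : a.2 = y1
    · rw [if_neg (by omega), if_pos (by omega), if_neg (by omega), if_pos (by omega), if_pos (by omega)]
      linear_combination e2
    · rw [if_pos (by omega), if_pos (by omega), if_pos (by omega), if_pos (by omega), if_neg (by omega)]
      linear_combination e1 + e2 + e3 + e4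

lemma handshake {x0 x1 y0 y1 : ℤ} (hx : x0 < x1) (hy : y0 < y1) (U : V → Prop)
    (hL : ∀ v : V, v.1 ≤ x0 → U v) (hR : ∀ v : V, x1 ≤ v.1 → ¬ U v) (W : V → Prop)
    (hW : ∀ a b, W a → Dl U a b → a ∈ Bx x0 x1 y0 y1 → b ∈ Bx x0 x1 y0 y1 → W b)
    (hWod : ∀ a, W a → Od a)
    (htop : ∀ x, x0 ≤ x → x ≤ x1 → Od (x, y1) → ¬ (U (x - 1, y1) ↔ U (x + 1, y1)) → W (x, y1)) :
    ∃ x, x0 ≤ x ∧ x ≤ x1 ∧ W (x, y0) ∧ ¬ (U (x - 1, y0) ↔ U (x + 1, y0)) := by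
  set u := ind U with hu
  set A : Finset V := (Finset.Icc x0 x1) ×ˢ (Finset.Icc y0 y1) with hA
  have memA : ∀ a : V, a ∈ A ↔ a ∈ Bx x0 x1 y0 y1 := by
    intro a; simp [hA, mem_Bx]; tauto
  set f : V × V → ZMod 2 := fun q => if W q.1 then dterm y0 y1 u q.1 q.2 else 0 with hf
  have dl_of : ∀ a d : V, a ∈ A → d ∈ DD → dterm y0 y1 u a d ≠ 0 → Dl U a (a + d) ∧ a + d ∈ A ∧ -d ∈ DD := by
    intro a d ha hd h
    rw [memA] at *
    rw [mem_Bx] at *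
    have hd' : (d.1 = 1 ∨ d.1 = -1) ∧ (d.2 = 1 ∨ d.2 = -1) := by
      simp only [DD, Finset.mem_insert, Finset.mem_singleton] at hd
      rcases hd with rfl | rfl | rfl | rfl <;> simp
    have hrow : y0 ≤ a.2 + d.2 ∧ a.2 + d.2 ≤ y1 := by
      by_contra hh; exact h (if_neg hh)
    unfold dterm at h
    rw [if_pos hrow] at h
    have h' := ind_ne.1 h
    refine ⟨⟨?_, h'⟩, ?_, ?_⟩
    · unfold xadj; simp only [Prod.fst_add, Prod.snd_add]; omega
    · simp only [Prod.fst_add, Prod.snd_add]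
      refine ⟨?_, ?_, hrow.1, hrow.2⟩
      · by_contra hc
        exact h' (iff_of_true (hL _ (by simp only; omega)) (hL _ (by simp only; omega)))
      · by_contra hc
        exact h' (iff_of_false (hR _ (by simp only; omega)) (hR _ (by simp only; omega)))
    · simp only [DD, Finset.mem_insert, Finset.mem_singleton] at hd ⊢
      rcases hd with rfl | rfl | rfl | rfl <;> simp
  have rev : ∀ a d : V, a ∈ A → d ∈ DD → dterm y0 y1 u a d ≠ 0 → dterm y0 y1 u (a + d) (-d) = dterm y0 y1 u a d := by
    intro a d ha hd h
    have hrow : y0 ≤ a.2 + d.2 ∧ a.2 + d.2 ≤ y1 := by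
      by_contra hh; exact h (if_neg hh)
    rw [memA, mem_Bx] at ha
    unfold dterm
    rw [if_pos hrow, if_pos (by simp; omega)]
    simp [add_comm]
  have W_iff : ∀ a d : V, a ∈ A → d ∈ DD → dterm y0 y1 u a d ≠ 0 → W a → W (a + d) := by
    intro a d ha hd h hw
    obtain ⟨h1, h2, -⟩ := dl_of a d ha hd h
    exact hW _ _ hw h1 ((memA _).1 ha) ((memA _).1 h2)
  have hsum : ∑ q ∈ A ×ˢ DD, f q = 0 := by
    rw [← Finset.sum_filter_ne_zero]
    have fne : ∀ q ∈ (A ×ˢ DD).filter (fun q => f q ≠ 0), q.1 ∈ A ∧ q.2 ∈ DD ∧ W q.1 ∧ dterm y0 y1 u q.1 q.2 ≠ 0 := by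
      intro q hq
      rw [Finset.mem_filter, Finset.mem_product] at hq
      refine ⟨hq.1.1, hq.1.2, ?_⟩
      have := hq.2
      simp only [hf] at this
      by_cases hw : W q.1
      · rw [if_pos hw] at this; exact ⟨hw, this⟩
      · rw [if_neg hw] at this; exact absurd rfl this
    have feq : ∀ q ∈ (A ×ˢ DD).filter (fun q => f q ≠ 0), f (q.1 + q.2, -q.2) = f q := by
      intro q hq
      obtain ⟨h1, h2, h3, h4⟩ := fne q hq
      simp only [hf]
      rw [if_pos h3, if_pos (W_iff _ _ h1 h2 h4 h3), rev _ _ h1 h2 h4]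
    refine Finset.sum_involution (fun q _ => (q.1 + q.2, -q.2)) ?_ ?_ ?_ ?_
    · intro q hq; rw [feq q hq]; exact z2 _
    · intro q hq _ he
      obtain ⟨h1, h2, h3, h4⟩ := fne q hq
      have := congrArg (fun z => z.1.1) he
      simp only [DD, Finset.mem_insert, Finset.mem_singleton] at h2
      simp at this
      rcases h2 with h2 | h2 | h2 | h2 <;> simp [h2] at this
    · intro q hq
      obtain ⟨h1, h2, h3, h4⟩ := fne q hq
      obtain ⟨g1, g2, g3⟩ := dl_of _ _ h1 h2 h4
      rw [Finset.mem_filter, Finset.mem_product]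
      refine ⟨⟨g2, g3⟩, ?_⟩
      rw [feq q hq]
      exact (Finset.mem_filter.1 hq).2
    · intro q hq; ext <;> simp
  rw [Finset.sum_product] at hsum
  have h1 : ∀ a ∈ A, ∑ d ∈ DD, f (a, d) = if W a then (if a.2 = y0 ∨ a.2 = y1 then u (a.1 - 1, a.2) + u (a.1 + 1, a.2) else 0) else 0 := by
    intro a ha
    rw [memA, mem_Bx] at ha
    by_cases hw : W a
    · simp only [hf, if_pos hw]
      exact deg_eq hy u a ha.2.2.1 ha.2.2.2
    · simp only [hf, if_neg hw]; simp
  rw [Finset.sum_congr rfl h1, hA, Finset.sum_product_right] at hsum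
  simp only at hsum
  set T : ℤ → ZMod 2 := fun y => ∑ x ∈ Finset.Icc x0 x1, if W (x, y) then (if y = y0 ∨ y = y1 then u (x - 1, y) + u (x + 1, y) else 0) else 0 with hT
  have hTs : T y0 + T y1 = 0 := by
    have e : ∑ y ∈ Finset.Icc y0 y1, T y = ∑ y ∈ ({y0, y1} : Finset ℤ), T y := by
      symm
      refine Finset.sum_subset ?_ ?_
      · intro y hy'; simp at hy'; simp; omega
      · intro y _ hy'
        simp at hy'
        simp only [hT]
        refine Finset.sum_eq_zero fun x _ => ?_
        rw [if_neg (show ¬ (y = y0 ∨ y = y1) by omega)]; simp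
    rw [← Finset.sum_pair (f := T) (by omega : y0 ≠ y1), ← e]; exact hsum
  have hT1 : T y1 = 1 := by
    set χ : ℤ → ZMod 2 := fun x => if Od (x, y1) then u (x - 1, y1) else u (x, y1) with hχ
    have : T y1 = ∑ x ∈ Finset.Ico x0 (x1 + 1), (χ (x + 1) + χ x) := by
      have : Finset.Ico x0 (x1 + 1) = Finset.Icc x0 x1 := by ext; simp
      rw [this]
      refine Finset.sum_congr rfl fun x hxm => ?_
      simp only [Finset.mem_Icc] at hxm
      simp only [or_true, if_true, hχ]
      by_cases ho : Od (x, y1)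
      · have : ¬ Od (x + 1, y1) := by simp only [Od] at *; omega
        rw [if_pos ho, if_neg this]
        by_cases hw : W (x, y1)
        · rw [if_pos hw]; ring
        · rw [if_neg hw]
          by_contra hne
          refine hw (htop x hxm.1 hxm.2 ho (ind_ne.1 ?_))
          rw [add_comm]; exact fun h => hne h.symm
      · have : Od (x + 1, y1) := by simp only [Od] at *; omega
        rw [if_neg ho, if_pos this, if_neg (fun hw => ho (hWod _ hw))]
        simp [z2]
    rw [this, int_tele _ _ _ (by omega)]
    have c1 : χ (x1 + 1) = 0 := by
      simp only [hχ]
      split_ifs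
      · exact if_neg (hR _ (by simp))
      · exact if_neg (hR _ (by simp))
    have c2 : χ x0 = 1 := by
      simp only [hχ]
      split_ifs
      · exact if_pos (hL _ (by simp))
      · exact if_pos (hL _ (by simp))
    rw [c1, c2]; simp
  have hT0 : T y0 ≠ 0 := by
    intro h; rw [h, hT1] at hTs; simp at hTs
  obtain ⟨x, hxm, hne⟩ := Finset.exists_ne_zero_of_sum_ne_zero hT0
  rw [Finset.mem_Icc] at hxm
  refine ⟨x, hxm.1, hxm.2, ?_⟩
  by_cases hw : W (x, y0)
  · rw [if_pos hw, if_pos (Or.inl rfl)] at hne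
    exact ⟨hw, ind_ne.1 hne⟩
  · rw [if_neg hw] at hne; exact absurd rfl hne

end

theorem T0 {x0 x1 y0 y1 : ℤ} (hx : x0 < x1) (hy : y0 < y1) (U0 : V → Prop) :
    ∃ p : List V, p ≠ [] ∧ 2 ≤ p.length ∧ List.IsChain (Dl (Uex x0 x1 U0)) p ∧ (∀ v ∈ p, Od v ∧ v ∈ Bx x0 x1 y0 y1) ∧
      (hd p).2 = y1 ∧ (lt p).2 = y0 ∧
      ¬ (Uex x0 x1 U0 ((hd p).1 - 1, y1) ↔ Uex x0 x1 U0 ((hd p).1 + 1, y1)) ∧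
      ¬ (Uex x0 x1 U0 ((lt p).1 - 1, y0) ↔ Uex x0 x1 U0 ((lt p).1 + 1, y0)) := by
  set U := Uex x0 x1 U0 with hU
  set R : V → V → Prop := fun a b => Dl U a b ∧ Od b ∧ b ∈ Bx x0 x1 y0 y1 with hR
  set W : V → Prop := fun a => ∃ x, x0 ≤ x ∧ x ≤ x1 ∧ Od (x, y1) ∧ ¬ (U (x - 1, y1) ↔ U (x + 1, y1)) ∧
    Relation.ReflTransGen R (x, y1) a with hW
  have Wod : ∀ a, W a → Od a := by
    rintro a ⟨x, h1, h2, h3, h4, h5⟩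
    rcases Relation.ReflTransGen.cases_tail h5 with h | ⟨b, _, h⟩
    · rw [h]; exact h3
    · exact h.2.1
  obtain ⟨x, h1, h2, ⟨t, t1, t2, t3, t4, t5⟩, h4⟩ := handshake (x0 := x0) (x1 := x1) (y0 := y0) (y1 := y1) hx hy U
    (fun v hv => Or.inl hv) (fun v hv h => by rcases h with h | h <;> omega) W
    (by
      intro a b ha hd _ hb
      have hab := ha
      obtain ⟨x, h1, h2, h3, h4, h5⟩ := ha
      exact ⟨x, h1, h2, h3, h4, h5.tail ⟨hd, (xadj_Od hd.1).1 (Wod a hab), hb⟩⟩) Wod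
    (fun x h1 h2 h3 h4 => ⟨x, h1, h2, h3, h4, .refl⟩)
  obtain ⟨l, hl, hlast⟩ := List.exists_isChain_cons_of_relationReflTransGen t5
  have hlt : lt ((t, y1) :: l) = (x, y0) := by rw [lt_eq (by simp), hlast]
  have hhd : hd ((t, y1) :: l) = (t, y1) := rfl
  refine ⟨(t, y1) :: l, by simp, ?_, ?_, ?_, ?_, ?_, ?_, ?_⟩
  · cases l with
    | nil =>
      have : (t, y1) = (x, y0) := hlast
      have := congrArg Prod.snd this
      simp only at this; omega
    | cons b l => simp
  · exact hl.imp fun a b h => h.1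
  · clear hlt hlast hhd
    have : ∀ (l : List V) (a : V), Od a ∧ a ∈ Bx x0 x1 y0 y1 → List.IsChain R (a :: l) →
        ∀ v ∈ a :: l, Od v ∧ v ∈ Bx x0 x1 y0 y1 := by
      intro l
      induction l with
      | nil => intro a ha _ v hv; simp at hv; subst hv; exact ha
      | cons b l ih =>
        intro a ha hc v hv
        rw [List.isChain_cons_cons] at hc
        rcases List.mem_cons.1 hv with rfl | hv
        · exact ha
        · exact ih b hc.1.2 hc.2 v hv
    exact this l _ ⟨t3, by rw [mem_Bx]; simp only; omega⟩ hl
  · rw [hhd]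
  · rw [hlt]
  · rw [hhd]; exact t4
  · rw [hlt]; exact h4

lemma Dl_nbr {U : V → Prop} {x0 x1 y0 y1 : ℤ} {p : List V} (hc : List.IsChain (Dl U) p) (hl : 2 ≤ p.length)
    (hB : ∀ v ∈ p, Od v ∧ v ∈ Bx x0 x1 y0 y1) {v : V} (hv : v ∈ p) :
    ∃ e f, Ev e ∧ Ev f ∧ adj e v ∧ adj f v ∧ e ∈ Bx x0 x1 y0 y1 ∧ f ∈ Bx x0 x1 y0 y1 ∧ U e ∧ ¬ U f := by
  obtain ⟨w, hw, h⟩ := chain_nbr hc hl hv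
  have key : xadj v w ∧ ¬ (U (w.1, v.2) ↔ U (v.1, w.2)) := by
    rcases h with h | h
    · exact h
    · exact ⟨xadj_symm h.1, fun h' => h.2 h'.symm⟩
  obtain ⟨hx, hU⟩ := key
  have h1 := hB v hv
  have h2 := hB w hw
  simp only [mem_Bx, Od, xadj] at *
  by_cases hh : U (w.1, v.2)
  · have : ¬ U (v.1, w.2) := fun h => hU (iff_of_true hh h)
    refine ⟨(w.1, v.2), (v.1, w.2), ?_, ?_, ?_, ?_, ?_, ?_, hh, this⟩ <;> simp only [Ev, adj] <;> omega
  · have : U (v.1, w.2) := by by_contra h; exact hU (iff_of_false hh h)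
    refine ⟨(v.1, w.2), (w.1, v.2), ?_, ?_, ?_, ?_, ?_, ?_, this, hh⟩ <;> simp only [Ev, adj] <;> omega

inductive Reach (B S bl : Set V) : V → Prop
  | base (v : V) : v ∈ B → v ∈ S → v ∉ bl → Reach B S bl v
  | step (u v : V) : Reach B S bl u → adj u v → v ∈ B → v ∉ bl → Reach B S bl v

lemma Reach.memB {B S bl : Set V} {v : V} (h : Reach B S bl v) : v ∈ B := by cases h <;> assumption
lemma Reach.nbl {B S bl : Set V} {v : V} (h : Reach B S bl v) : v ∉ bl := by cases h <;> assumption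

lemma Reach.mono' {B S bl bl' : Set V} {v : V} (h : Reach B S bl v) (hb : ∀ w, Reach B S bl w → w ∉ bl') :
    Reach B S bl' v := by
  induction h with
  | base v h1 h2 h3 => exact .base v h1 h2 (hb v (.base v h1 h2 h3))
  | step u v hu h1 h2 h3 ih => exact .step u v ih h1 h2 (hb v (.step u v hu h1 h2 h3))

def Pth (B : Set V) (y1 : ℤ) (p : List V) : Prop :=
  p ≠ [] ∧ List.IsChain xadj p ∧ (∀ v ∈ p, Od v ∧ v ∈ B) ∧ (hd p).2 = y1

/-- wall class -/
structure IsWC (B Sb Tgt : Set V) (cl : List V → Prop) (y1 : ℤ) (s0 : ZMod 2) : Prop where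
  pth : ∀ p, cl p → Pth B y1 p
  top : ∀ p, cl p → ∀ v ∈ B, v.2 = y1 → side y1 p v = if (hd p).1 < v.1 then 1 else 0
  sd : ∀ p, cl p → ∀ v ∈ B, v ∈ Sb → v ∉ p → side y1 p v = s0
  inv : ∀ p, cl p → ∀ v ∈ B, ∀ w ∈ B, v ∉ p → w ∉ p → adj v w → side y1 p v = side y1 p w
  tg : ∀ p, cl p → ∀ v ∈ B, v ∈ Tgt → v ∉ p → side y1 p v ≠ s0
  E2 : ∀ T : Set V, (∀ v ∈ T, Od v) → (∀ v ∈ Tgt, ¬ Reach B Sb T v) →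
    ∃ p, cl p ∧ ∀ v ∈ p, v ∈ T ∧ ∃ e, Ev e ∧ adj e v ∧ Reach B Sb T e

lemma Pth.ne {B : Set V} {y1 : ℤ} {p : List V} (h : Pth B y1 p) : p ≠ [] := h.1

lemma IsWC.side_eq {B Sb Tgt : Set V} {cl : List V → Prop} {y1 : ℤ} {s0 : ZMod 2} (H : IsWC B Sb Tgt cl y1 s0)
    {p : List V} (hp : cl p) {v : V} (hv : Reach B Sb {v | v ∈ p} v) : side y1 p v = s0 := by
  induction hv with
  | base v h1 h2 h3 => exact H.sd p hp v h1 h2 h3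
  | step u v hu h1 h2 h3 ih => rw [← ih]; exact (H.inv p hp u hu.memB v h2 hu.nbl h3 h1).symm

lemma IsWC.E1 {B Sb Tgt : Set V} {cl : List V → Prop} {y1 : ℤ} {s0 : ZMod 2} (H : IsWC B Sb Tgt cl y1 s0)
    {p : List V} (hp : cl p) {v : V} (hv : Reach B Sb {v | v ∈ p} v) : v ∉ Tgt :=
  fun h => H.tg p hp v hv.memB h hv.nbl (H.side_eq hp hv)

lemma Dl_xadj {U : V → Prop} {p : List V} (h : List.IsChain (Dl U) p) : List.IsChain xadj p := h.imp fun _ _ h => h.1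

section inst
variable {x0 x1 y0 y1 : ℤ}

def clL (x0 x1 y0 y1 : ℤ) (p : List V) : Prop := Pth (Bx x0 x1 y0 y1) y1 p ∧ (lt p).2 = y0

lemma isWC_L (hx : x0 < x1) (hy : y0 < y1) :
    IsWC (Bx x0 x1 y0 y1) {v | v.1 = x0} {v | v.1 = x1} (clL x0 x1 y0 y1) y1 0 where
  pth p h := h.1
  top p h v _ hv := side_top h.1.2.1 (fun v hv => (h.1.2.2.1 v hv).2) hv
  sd p h v _ hv hp := side_left h.1.1 h.1.2.1 (fun v hv => (h.1.2.2.1 v hv).2) (le_of_eq hv)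
  inv p h v hv w hw h1 h2 h3 := side_adj h.1.1 h.1.2.1 h.1.2.2.2 (Or.inl h.2) hv hw h1 h2 h3
  tg p h v hv ht hp := by
    rw [side_right h.1.1 h.1.2.1 h.1.2.2.2 h.2 (fun v hv => (h.1.2.2.1 v hv).2) ht hv.2.2.1 hv.2.2.2 hp]; decide
  E2 T hT hR := by
    set U := Reach (Bx x0 x1 y0 y1) {v | v.1 = x0} T
    obtain ⟨p, hne, hl, hc, hB, h1, h2, h3, h4⟩ := T0 hx hy U
    refine ⟨p, ⟨⟨hne, Dl_xadj hc, hB, h1⟩, h2⟩, fun v hv => ?_⟩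
    have evT : ∀ e, Ev e → e ∉ T := fun e he h => not_Ev.2 (hT e h) he
    have UU : ∀ e, Ev e → e ∈ Bx x0 x1 y0 y1 → (Uex x0 x1 U e ↔ U e) := by
      intro e he hb
      constructor
      · rintro (h | h)
        · exact .base e hb (le_antisymm h hb.1) (evT e he)
        · exact h.2
      · intro h
        refine Or.inr ⟨lt_of_le_of_ne hb.2.1 fun h' => hR e h' h, h⟩
    obtain ⟨e, f, he, hf, ae, af, be, bf, ue, uf⟩ := Dl_nbr hc hl hB hv
    rw [UU e he be] at ue
    rw [UU f hf bf] at uf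
    refine ⟨?_, e, he, ae, ue⟩
    by_contra hvT
    exact uf (.step v f (.step e v ue ae (hB v hv).2 hvT) (adj_symm af) bf (evT f hf))

def clY (x0 x1 y0 y1 s : ℤ) (p : List V) : Prop := Pth (Bx x0 x1 y0 y1) y1 p ∧ (hd p).1 ≤ s ∧ (lt p).2 = y0

lemma isWC_Y {s : ℤ} (hx : x0 < x1) (hy : y0 < y1) (hs : x0 < s) :
    IsWC (Bx x0 x1 y0 y1) {v | v.1 = x1 ∨ (v.2 = y1 ∧ s ≤ v.1)} {v | v.1 = x0} (clY x0 x1 y0 y1 s) y1 1 where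
  pth p h := h.1
  top p h v _ hv := side_top h.1.2.1 (fun v hv => (h.1.2.2.1 v hv).2) hv
  sd p h v hv hS hp := by
    rcases hS with hS | ⟨hS, hS'⟩
    · exact side_right h.1.1 h.1.2.1 h.1.2.2.2 h.2.2 (fun v hv => (h.1.2.2.1 v hv).2) hS hv.2.2.1 hv.2.2.2 hp
    · rw [side_top h.1.2.1 (fun v hv => (h.1.2.2.1 v hv).2) hS, if_pos]
      have h1 := h.2.1
      have h2 : (hd p).1 ≠ v.1 := fun h' => hp (by
        rw [show v = hd p from Prod.ext h'.symm (by rw [hS, h.1.2.2.2])]; exact hd_mem h.1.1)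
      omega
  inv p h v hv w hw h1 h2 h3 := side_adj h.1.1 h.1.2.1 h.1.2.2.2 (Or.inl h.2.2) hv hw h1 h2 h3
  tg p h v hv ht hp := by
    rw [side_left h.1.1 h.1.2.1 (fun v hv => (h.1.2.2.1 v hv).2) (le_of_eq ht)]; decide
  E2 T hT hR := by
    set Rc := Reach (Bx x0 x1 y0 y1) {v | v.1 = x1 ∨ (v.2 = y1 ∧ s ≤ v.1)} T with hRc
    obtain ⟨p, hne, hl, hc, hB, h1, h2, h3, h4⟩ := T0 hx hy (fun v => ¬ Rc v)
    have evT : ∀ e, Ev e → e ∉ T := fun e he h => not_Ev.2 (hT e h) he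
    have UU : ∀ e, Ev e → e ∈ Bx x0 x1 y0 y1 → (Uex x0 x1 (fun v => ¬ Rc v) e ↔ ¬ Rc e) := by
      intro e he hb
      constructor
      · rintro (h | h)
        · exact hR e (le_antisymm h hb.1)
        · exact h.2
      · intro h
        refine Or.inr ⟨lt_of_le_of_ne hb.2.1 fun h' => h (.base e hb (Or.inl h') (evT e he)), h⟩
    have hhs : (hd p).1 ≤ s := by
      by_contra hlt
      have hb := hB _ (hd_mem hne)
      simp only [mem_Bx, Od] at hb
      refine h3 (iff_of_false ?_ ?_)
      · have he : Ev ((hd p).1 - 1, y1) := by simp only [Ev]; omega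
        have hb' : ((hd p).1 - 1, y1) ∈ Bx x0 x1 y0 y1 := by simp only [mem_Bx]; omega
        rw [UU _ he hb']
        exact fun h => h (.base _ hb' (Or.inr ⟨rfl, by simp only; omega⟩) (evT _ he))
      · by_cases hh : (hd p).1 + 1 ≤ x1
        · have he : Ev ((hd p).1 + 1, y1) := by simp only [Ev]; omega
          have hb' : ((hd p).1 + 1, y1) ∈ Bx x0 x1 y0 y1 := by simp only [mem_Bx]; omega
          rw [UU _ he hb']
          exact fun h => h (.base _ hb' (Or.inr ⟨rfl, by simp only; omega⟩) (evT _ he))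
        · rintro (h | h) <;> simp only at h <;> omega
    refine ⟨p, ⟨⟨hne, Dl_xadj hc, hB, h1⟩, hhs, h2⟩, fun v hv => ?_⟩
    obtain ⟨e, f, he, hf, ae, af, be, bf, ue, uf⟩ := Dl_nbr hc hl hB hv
    rw [UU e he be] at ue
    rw [UU f hf bf, not_not] at uf
    refine ⟨?_, f, hf, af, uf⟩
    by_contra hvT
    exact ue (.step v e (.step f v uf af (hB v hv).2 hvT) (adj_symm ae) be (evT e he))

/-- truncate a path at the first visit of column `s` -/
lemma trunc {R : V → V → Prop} {s : ℤ} (hR : ∀ a b, R a b → xadj a b) (p : List V) (hne : p ≠ []) (hc : List.IsChain R p) (hh : (hd p).1 < s)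
    (hl : ∃ v ∈ p, s ≤ v.1) : ∃ q, q ≠ [] ∧ 2 ≤ q.length ∧ List.IsChain R q ∧ hd q = hd p ∧ (∀ v ∈ q, v ∈ p) ∧ (∀ v ∈ q, v.1 ≤ s) ∧ (lt q).1 = s := by
  induction p with
  | nil => exact absurd rfl hne
  | cons a l ih =>
    cases l with
    | nil =>
      obtain ⟨v, hv, hs⟩ := hl
      simp at hv; subst hv
      have : hd [v] = v := rfl
      rw [this] at hh; omega
    | cons b l =>
      have ha : a.1 < s := hh
      rw [List.isChain_cons_cons] at hc
      by_cases hb : b.1 < s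
      · obtain ⟨q, h1, h2, h3, h4, h5, h6, h7⟩ := ih (by simp) hc.2 hb (by
          obtain ⟨v, hv, hs⟩ := hl
          rcases List.mem_cons.1 hv with rfl | hv
          · omega
          · exact ⟨v, hv, hs⟩)
        cases q with
        | nil => exact absurd rfl h1
        | cons c q =>
          have hcb : c = b := h4
          subst hcb
          refine ⟨a :: c :: q, by simp, by simp, List.isChain_cons_cons.2 ⟨hc.1, h3⟩, rfl, ?_, ?_, ?_⟩
          · intro v hv
            rcases List.mem_cons.1 hv with rfl | hv
            · simp
            · exact List.mem_cons_of_mem _ (h5 v hv)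
          · intro v hv
            rcases List.mem_cons.1 hv with rfl | hv
            · omega
            · exact h6 v hv
          · rw [lt_cons_cons]; exact h7
      · have hx := hR a b hc.1
        unfold xadj at hx
        refine ⟨[a, b], by simp, by simp, by simp [hc.1], rfl, ?_, ?_, ?_⟩
        · intro v hv; simp at hv ⊢; tauto
        · intro v hv; simp at hv
          rcases hv with rfl | rfl <;> omega
        · have : lt [a, b] = b := rfl
          rw [this]; omega

def clX (x0 s y0 y1 : ℤ) (p : List V) : Prop := Pth (Bx x0 s y0 y1) y1 p ∧ (hd p).1 < s ∧ (lt p).1 = s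

def tgX (s y1 : ℤ) : Set V := {v | Ev v ∧ v.2 = y1 ∧ s - 1 ≤ v.1}

lemma isWC_X {s : ℤ} (hx : x0 < s) (hy : y0 < y1) :
    IsWC (Bx x0 s y0 y1) {v | v.1 = x0 ∨ v.2 = y0} (tgX s y1) (clX x0 s y0 y1) y1 0 where
  pth p h := h.1
  top p h v _ hv := side_top h.1.2.1 (fun v hv => (h.1.2.2.1 v hv).2) hv
  sd p h v hv hS hp := by
    rcases hS with hS | hS
    · exact side_left h.1.1 h.1.2.1 (fun v hv => (h.1.2.2.1 v hv).2) (le_of_eq hS)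
    · exact side_bot h.1.1 h.1.2.1 h.1.2.2.2 (le_of_eq h.2.2.symm) (fun v hv => (h.1.2.2.1 v hv).2) hS hv.2.1 hp
  inv p h v hv w hw h1 h2 h3 := side_adj h.1.1 h.1.2.1 h.1.2.2.2 (Or.inr (le_of_eq h.2.2.symm)) hv hw h1 h2 h3
  tg p h v hv ht hp := by
    rw [side_top h.1.2.1 (fun v hv => (h.1.2.2.1 v hv).2) ht.2.1, if_pos]
    · decide
    · have h1 := h.2.1
      have h2 := ht.2.2
      have h3 := ht.1
      have h4 := (h.1.2.2.1 _ (hd_mem h.1.1)).1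
      have h5 := h.1.2.2.2
      have h6 := ht.2.1
      simp only [Ev, Od] at *
      omega
  E2 T hT hR := by
    set U := Reach (Bx x0 s y0 y1) {v | v.1 = x0 ∨ v.2 = y0} T
    obtain ⟨p, hne, hl, hc, hB, h1, h2, h3, h4⟩ := T0 (x0 := x0) (x1 := s + 1) (by omega) hy U
    have evT : ∀ e, Ev e → e ∉ T := fun e he h => not_Ev.2 (hT e h) he
    have UU : ∀ e, Ev e → e ∈ Bx x0 s y0 y1 → (Uex x0 (s + 1) U e ↔ U e) := by
      intro e he hb
      constructor
      · rintro (h | h)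
        · exact .base e hb (Or.inl (le_antisymm h hb.1)) (evT e he)
        · exact h.2
      · intro h
        exact Or.inr ⟨Int.lt_add_one_of_le hb.2.1, h⟩
    have hbh := hB _ (hd_mem hne)
    have hbl := hB _ (lt_mem hne)
    simp only [mem_Bx, Od] at hbh hbl
    have hhs : (hd p).1 < s := by
      by_contra hlt
      refine h3 (iff_of_false ?_ ?_)
      · have he : Ev ((hd p).1 - 1, y1) := by simp only [Ev]; omega
        have hb' : ((hd p).1 - 1, y1) ∈ Bx x0 s y0 y1 := by simp only [mem_Bx]; omega
        rw [UU _ he hb']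
        exact hR _ ⟨he, rfl, by simp only; omega⟩
      · rintro (h | h) <;> simp only at h <;> omega
    have hls : s ≤ (lt p).1 := by
      by_contra hlt
      refine h4 (iff_of_true ?_ ?_)
      · by_cases hx' : (lt p).1 - 1 ≤ x0
        · exact Or.inl hx'
        · have he : Ev ((lt p).1 - 1, y0) := by simp only [Ev]; omega
          have hb' : ((lt p).1 - 1, y0) ∈ Bx x0 s y0 y1 := by simp only [mem_Bx]; omega
          rw [UU _ he hb']
          exact .base _ hb' (Or.inr rfl) (evT _ he)
      · have he : Ev ((lt p).1 + 1, y0) := by simp only [Ev]; omega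
        have hb' : ((lt p).1 + 1, y0) ∈ Bx x0 s y0 y1 := by simp only [mem_Bx]; omega
        rw [UU _ he hb']
        exact .base _ hb' (Or.inr rfl) (evT _ he)
    obtain ⟨q, q1, q2, q3, q4, q5, q6, q7⟩ := trunc (R := Dl (Uex x0 (s + 1) U)) (fun _ _ h => h.1) p hne hc hhs ⟨_, lt_mem hne, hls⟩
    have hqB : ∀ v ∈ q, Od v ∧ v ∈ Bx x0 s y0 y1 := fun v hv =>
      ⟨(hB v (q5 v hv)).1, (hB v (q5 v hv)).2.1, q6 v hv, (hB v (q5 v hv)).2.2.2⟩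
    refine ⟨q, ⟨⟨q1, Dl_xadj q3, hqB, by rw [q4]; exact h1⟩, by rw [q4]; exact hhs, q7⟩, fun v hv => ?_⟩
    obtain ⟨e, f, he, hf, ae, af, be, bf, ue, uf⟩ := Dl_nbr q3 q2 hqB hv
    rw [UU e he be] at ue
    rw [UU f hf bf] at uf
    refine ⟨?_, e, he, ae, ue⟩
    by_contra hvT
    exact uf (.step v f (.step e v ue ae (hqB v hv).2 hvT) (adj_symm af) bf (evT f hf))

end inst

def nz (f : V → ℤ) : Set V := {v | Od v ∧ f v ≠ 0}

def FE (B Sb Tgt : Set V) (cl : List V → Prop) (f : V → ℤ) : Prop :=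
  (∀ v ∈ Tgt, ¬ Reach B Sb (nz f) v) ∧ ¬ ∃ p, cl p ∧ ∀ v ∈ p, Reach B Sb (nz f) v

def EE (cl : List V → Prop) (f : V → ℤ) : Prop := ∃ p, cl p ∧ ∀ v ∈ p, f v = 0

section
variable {B Sb Tgt : Set V} {cl : List V → Prop} {y1 : ℤ} {s0 : ZMod 2}

lemma FE_mono {f f' : V → ℤ} (h : ∀ v, f' v = 0 → f v = 0) (hf : FE B Sb Tgt cl f) : FE B Sb Tgt cl f' := by
  have key : ∀ v, Reach B Sb (nz f') v → Reach B Sb (nz f) v := by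
    intro v hv
    refine hv.mono' fun w hw hw' => ?_
    have := hw.nbl
    exact this ⟨hw'.1, fun h0 => hw'.2 (h w h0)⟩
  refine ⟨fun v hv h => hf.1 v hv (key v h), ?_⟩
  rintro ⟨p, hp, h'⟩
  exact hf.2 ⟨p, hp, fun v hv => key v (h' v hv)⟩

lemma flip_or (H : IsWC B Sb Tgt cl y1 s0) {f f' : V → ℤ} (hd0 : ∀ v ∈ B, Od v → ¬ (f v = 0 ∧ f' v = 0))
    (h1 : EE cl f) (h2 : EE cl f') : FE B Sb Tgt cl f ∨ FE B Sb Tgt cl f' := by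
  have key : ∀ f f' : V → ℤ, (∀ v ∈ B, Od v → ¬ (f v = 0 ∧ f' v = 0)) → ∀ p, cl p → (∀ v ∈ p, f v = 0) →
      ∀ v, Reach B Sb (nz f') v → Reach B Sb {v | v ∈ p} v := by
    intro f f' hd0 p hp h0 v hv
    refine hv.mono' fun w hw hwp => ?_
    have ho := ((H.pth p hp).2.2.1 w hwp)
    exact hw.nbl ⟨ho.1, fun h => hd0 w ho.2 ho.1 ⟨h0 w hwp, h⟩⟩
  have hd1 : ∀ v ∈ B, Od v → ¬ (f' v = 0 ∧ f v = 0) := fun v hv ho h => hd0 v hv ho ⟨h.2, h.1⟩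
  obtain ⟨p, hp, hp0⟩ := h1
  obtain ⟨q, hq, hq0⟩ := h2
  by_contra hcon
  rw [not_or] at hcon
  have a1 : ∀ v ∈ Tgt, ¬ Reach B Sb (nz f) v := fun v hv h => H.E1 hq (key f' f hd1 q hq hq0 v h) hv
  have a2 : ∀ v ∈ Tgt, ¬ Reach B Sb (nz f') v := fun v hv h => H.E1 hp (key f f' hd0 p hp hp0 v h) hv
  have b1 : ∃ p, cl p ∧ ∀ v ∈ p, Reach B Sb (nz f) v := by
    by_contra h; exact hcon.1 ⟨a1, h⟩
  have b2 : ∃ p, cl p ∧ ∀ v ∈ p, Reach B Sb (nz f') v := by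
    by_contra h; exact hcon.2 ⟨a2, h⟩
  obtain ⟨p', hp', hp1⟩ := b1
  obtain ⟨q', hq', hq1⟩ := b2
  have zp : ∀ v ∈ p', f v = 0 := fun v hv => by
    by_contra h; exact (hp1 v hv).nbl ⟨((H.pth p' hp').2.2.1 v hv).1, h⟩
  have zq : ∀ v ∈ q', f' v = 0 := fun v hv => by
    by_contra h; exact (hq1 v hv).nbl ⟨((H.pth q' hq').2.2.1 v hv).1, h⟩
  have P := H.pth p' hp'
  have Q := H.pth q' hq'
  have mp := hd_mem P.1
  have mq := hd_mem Q.1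
  have e1 := H.side_eq hq' (key f' f hd1 q' hq' zq _ (hp1 _ mp))
  have e2 := H.side_eq hp' (key f f' hd0 p' hp' zp _ (hq1 _ mq))
  rw [H.top q' hq' _ (P.2.2.1 _ mp).2 P.2.2.2] at e1
  rw [H.top p' hp' _ (Q.2.2.1 _ mq).2 Q.2.2.2, ← e1] at e2
  have : (hd p').1 = (hd q').1 := by
    split_ifs at e2 <;> first | omega | simp at e2
  have he : hd p' = hd q' := Prod.ext this (P.2.2.2.trans Q.2.2.2.symm)
  exact hd0 _ (P.2.2.1 _ mp).2 (P.2.2.1 _ mp).1 ⟨zp _ mp, by rw [he]; exact zq _ mq⟩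

end

structure Dom (F : Set V) : Prop where
  fin : F.Finite
  S1 : ∀ u, Ev u → u ∈ F → ∀ s, adj u s → s ∈ F
  S2 : ∀ u, Ev u → (∀ s, adj u s → s ∈ F) → u ∈ F

open Classical in
noncomputable def fl (F : Set V) (g : V → ℤ) : V → ℤ := fun v => if v ∈ F then 2 - g v else g v

lemma fl_mem {F : Set V} (hF : Dom F) {g : V → ℤ} (hg : g ∈ GS F c0) : fl F g ∈ GS F c0 := by
  refine ⟨Hm.mk' (fun v => ?_) fun u v huv hu hv => ?_, fun v hv => ?_⟩
  · have := hg.1.2 v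
    unfold fl; split_ifs <;> omega
  · have h := hg.1.adj huv
    have h1 := hF.S1 u hu
    unfold fl
    by_cases hu' : u ∈ F
    · rw [if_pos hu', if_pos (h1 hu' v huv)]; omega
    · rw [if_neg hu']
      have : g u = 1 := by rw [hg.2 u hu', c0_Ev hu]
      split_ifs <;> omega
  · unfold fl; rw [if_neg hv]; exact hg.2 v hv

lemma fl_fl (F : Set V) (g : V → ℤ) : fl F (fl F g) = g := by
  funext v; unfold fl; split_ifs <;> omega

lemma flip_count {B Sb Tgt : Set V} {cl : List V → Prop} {y1 : ℤ} {s0 : ZMod 2} (H : IsWC B Sb Tgt cl y1 s0)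
    {F : Set V} (hF : Dom F) (hB : ∀ v ∈ B, Od v → v ∈ F) :
    2 * NG F (EE cl) ≤ NG F (fun _ => True) + 2 * NG F (FE B Sb Tgt cl) := by
  have fin := GS_finite hF.fin c0
  have finS : ∀ P : (V → ℤ) → Prop, {g | g ∈ GS F c0 ∧ P g}.Finite := fun P => fin.subset fun g hg => hg.1
  have flcount : ∀ P : (V → ℤ) → Prop, {g | g ∈ GS F c0 ∧ P (fl F g)}.ncard = {g | g ∈ GS F c0 ∧ P g}.ncard := by
    intro P
    have : {g | g ∈ GS F c0 ∧ P g} = Set.image (fl F) {g | g ∈ GS F c0 ∧ P (fl F g)} := by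
      ext g
      constructor
      · rintro ⟨h1, h2⟩
        exact ⟨fl F g, ⟨fl_mem hF h1, by rw [fl_fl]; exact h2⟩, fl_fl F g⟩
      · rintro ⟨g', ⟨h1, h2⟩, rfl⟩
        exact ⟨fl_mem hF h1, h2⟩
    rw [this, Set.ncard_image_of_injective]
    intro a b hab
    rw [← fl_fl F a, hab, fl_fl]
  set a := {g | g ∈ GS F c0 ∧ EE cl (ab g)} with ha
  set a' := {g | g ∈ GS F c0 ∧ EE cl (ab (fl F g))} with ha'
  set b := {g | g ∈ GS F c0 ∧ FE B Sb Tgt cl (ab g)} with hb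
  set b' := {g | g ∈ GS F c0 ∧ FE B Sb Tgt cl (ab (fl F g))} with hb'
  have e1 : a'.ncard = a.ncard := flcount fun g => EE cl (ab g)
  have e2 : b'.ncard = b.ncard := flcount fun g => FE B Sb Tgt cl (ab g)
  have i1 : a ∩ a' ⊆ b ∪ b' := by
    rintro g ⟨⟨hg, h1⟩, ⟨-, h2⟩⟩
    have hz : ∀ v ∈ B, Od v → ¬ (ab g v = 0 ∧ ab (fl F g) v = 0) := by
      rintro v hv ho ⟨g1, g2⟩
      rw [ab_eq_zero] at g1 g2
      unfold fl at g2
      rw [if_pos (hB v hv ho)] at g2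
      omega
    rcases flip_or H hz h1 h2 with h | h
    · exact Or.inl ⟨hg, h⟩
    · exact Or.inr ⟨hg, h⟩
  have c1 := Set.ncard_union_add_ncard_inter a a' (finS _) (finS _)
  have c2 := Set.ncard_le_ncard i1 ((finS _).union (finS _))
  have c3 := Set.ncard_union_le b b'
  have c4 : (a ∪ a').ncard ≤ {g | g ∈ GS F c0 ∧ True}.ncard :=
    Set.ncard_le_ncard (by rintro g (h | h) <;> exact ⟨h.1, trivial⟩) (finS _)
  have n1 : NG F (EE cl) = a.ncard := rfl
  have n2 : NG F (FE B Sb Tgt cl) = b.ncard := rfl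
  have n3 : NG F (fun _ => True) = {g | g ∈ GS F c0 ∧ True}.ncard := rfl
  omega

structure WS (x0 x1 y0 y1 xs s s' : ℤ) (σ : V → V) (SX TX SY : Set V) (cX cY O : List V → Prop) : Prop where
  hx : x0 < x1
  hy : y0 < y1
  xs1 : xs ≤ x1
  inv : ∀ v, σ (σ v) = v
  sadj : ∀ u v, adj u v → adj (σ u) (σ v)
  sx : ∀ u v, xadj u v → xadj (σ u) (σ v)
  sod : ∀ v, Od (σ v) ↔ Od v
  X : IsWC (Bx x0 xs y0 y1) SX TX cX y1 0
  Y : IsWC (Bx x0 x1 y0 y1) SY {v | v.1 = x0} cY y1 1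
  P : ∀ v w, adj v w → v ∈ Bx x0 xs y0 y1 → w ∈ Bx x0 x1 y0 y1 → w ∉ Bx x0 xs y0 y1 → σ v = v ∧ σ w ∈ Bx x0 xs y0 y1
  Q : ∀ v w, v ∈ Bx x0 x1 y0 y1 → σ v ∈ Bx x0 x1 y0 y1 → adj v w → w ∉ Bx x0 x1 y0 y1 →
    (v ∈ SX ∧ v ∈ Bx x0 xs y0 y1) ∨ (σ v ∈ SX ∧ σ v ∈ Bx x0 xs y0 y1) ∨ v ∈ SY ∨ σ v ∈ SY
  lcol : ∀ v ∈ Bx x0 x1 y0 y1, v.1 = x0 → v ∈ SX ∧ v ∈ Bx x0 xs y0 y1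
  rcol : ∀ v ∈ Bx x0 x1 y0 y1, v.1 = x1 → v ∈ SY
  LR : ∀ v ∈ Bx x0 xs y0 y1, v.1 = x1 → v ∈ TX
  out : ∀ v ∈ Bx x0 x1 y0 y1, σ v ∈ Bx x0 x1 y0 y1 ∨ (σ v).1 < x0 ∨ x1 < (σ v).1
  top : ∀ h ∈ Bx x0 x1 y0 y1, Od h → h.2 = y1 →
    ((σ h ∈ SY ∧ σ h ∈ Bx x0 x1 y0 y1) ∨ x1 < (σ h).1) ∨ s + 1 ≤ h.1
  tops : ∀ e ∈ Bx x0 x1 y0 y1, Ev e → e.2 = y1 → s ≤ e.1 → e ∈ SY ∧ (e ∈ Bx x0 xs y0 y1 → e ∈ TX)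
  topL : ∀ h ∈ Bx x0 x1 y0 y1, Od h → h.2 = y1 → σ h ∈ Bx x0 xs y0 y1 → σ h ∈ SY →
    σ h ∈ TX ∨ ∃ e ∈ Bx x0 xs y0 y1, e ∈ TX ∧ Ev e ∧ adj (σ h) e
  bot : ∀ l ∈ Bx x0 x1 y0 y1, Od l → l.2 = y0 →
    ((σ l ∈ SX ∧ σ l ∈ Bx x0 xs y0 y1) ∨ (σ l).1 < x0) ∨ l.1 < s'
  bots : ∀ e ∈ Bx x0 x1 y0 y1, e.2 = y0 → e.1 ≤ s' → e ∈ SX ∧ e ∈ Bx x0 xs y0 y1 ∧ e.1 < x1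
  sp : s' < x1
  s0x : x0 < s
  oY : ∀ p, O p → cY p
  oX : ∀ p, O p → ∃ p', cX p' ∧ (∀ v ∈ p', v ∈ p) ∧ hd p' = hd p

section
variable {x0 x1 y0 y1 xs s s' : ℤ} {σ : V → V} {SX TX SY : Set V} {cX cY O : List V → Prop}

def NN (x0 x1 y0 y1 : ℤ) (σ : V → V) (PL PR : V → Prop) : Set V :=
  {v | Od v ∧ v ∈ Bx x0 x1 y0 y1 ∧ σ v ∈ Bx x0 x1 y0 y1 ∧ ¬ PL v ∧ ¬ PR v ∧ ¬ PL (σ v) ∧ ¬ PR (σ v)}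

lemma Lk_symm {S G1 G2 : Set V} (h : Lk S G1 G2) : Lk S G2 G1 := by
  obtain ⟨a, ha, b, hb, hab⟩ := h
  have : ∀ a, SR S G1 a → ∀ c, SR S G2 c → star a c → Lk S G2 G1 := by
    intro a ha
    induction ha with
    | base a ha => intro c hc hs; exact ⟨c, hc, a, ha, star_symm hs⟩
    | step a b _ hs hb ih => intro c hc hs'; exact ih b (.step c b hc (star_symm hs') hb) hs
  exact this a ha b (.base b hb) hab

lemma xadj_star {a b : V} (h : xadj a b) (ha : Od a) : star a b := by
  refine ⟨(b.1, a.2), ?_, ?_, ?_⟩ <;> simp only [Ev, adj, Od, xadj] at * <;> omega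

lemma path_con {p : List V} (hc : List.IsChain xadj p) (ho : ∀ v ∈ p, Od v) (hne : p ≠ []) :
    ∃ a ∈ {v | v ∈ p}, ∀ v ∈ {v | v ∈ p}, Relation.ReflTransGen (fun a b => star a b ∧ b ∈ {v | v ∈ p}) a v := by
  have : ∀ l : List V, ∀ a, (∀ v ∈ a :: l, v ∈ p) → List.IsChain xadj (a :: l) → ∀ v ∈ a :: l,
      Relation.ReflTransGen (fun a b => star a b ∧ b ∈ {v | v ∈ p}) a v := by
    intro l
    induction l with
    | nil => intro a _ _ v hv; simp at hv; subst hv; exact .refl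
    | cons b l ih =>
      intro a hs hc v hv
      rw [List.isChain_cons_cons] at hc
      rcases List.mem_cons.1 hv with rfl | hv
      · exact .refl
      · exact .head ⟨xadj_star hc.1 (ho _ (hs a (by simp))), hs b (by simp)⟩
          (ih b (fun v hv => hs v (List.mem_cons_of_mem _ hv)) hc.2 v hv)
  cases p with
  | nil => exact absurd rfl hne
  | cons a l => exact ⟨a, by simp, fun v hv => this l a (fun v hv => hv) hc v hv⟩

/-- the final combinatorial step of the dichotomy -/
lemma link_walk {NS G1 G2 : Set V} {Lt Rt : V → Prop} {R : V → V → Prop}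
    (hstar : ∀ a b, R a b → star a b)
    (h3 : ∀ a b, R a b → Rt a → a ∉ G2 → Rt b)
    (h4 : ∀ a b, R a b → Lt b → b ∉ G1 → Lt a)
    (h5 : ∀ a ∈ G1, ¬ Rt a) :
    ∀ (p : List V), (∀ a ∈ p, ¬ Lt a → ¬ Rt a → a ∈ NS) → ∀ (hne : p ≠ []), List.IsChain R p →
      ¬ Lt (hd p) → (Rt (hd p) ∨ SR NS G2 (hd p)) → Lt (lt p) → Lk NS G2 G1 := by
  intro p
  induction p with
  | nil => intro _ h; exact absurd rfl h
  | cons a l ih =>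
    intro hNS _ hc hnl hr hl
    cases l with
    | nil => exact absurd hl hnl
    | cons b l =>
      rw [List.isChain_cons_cons] at hc
      rw [lt_cons_cons] at hl
      have hnl' : ¬ Lt a := hnl
      have hr' : Rt a ∨ SR NS G2 a := hr
      have key : ¬ Rt b → SR NS G2 a := by
        intro hb
        rcases hr' with h | h
        · by_cases ha : a ∈ G2
          · exact .base a ha
          · exact absurd (h3 a b hc.1 h ha) hb
        · exact h
      by_cases hb : Lt b
      · have hb1 : b ∈ G1 := by
          by_contra h; exact hnl' (h4 a b hc.1 hb h)
        exact ⟨a, key (h5 b hb1), b, hb1, hstar a b hc.1⟩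
      · refine ih (fun a ha => hNS a (List.mem_cons_of_mem _ ha)) (by simp) hc.2 hb ?_ hl
        by_cases hrb : Rt b
        · exact Or.inl hrb
        · exact Or.inr (.step a b (key hrb) (hstar a b hc.1) (hNS b (by simp) hb hrb))

lemma WS.link (H : WS x0 x1 y0 y1 xs s s' σ SX TX SY cX cY O) {F : Set V} (hF : Dom F)
    (hBF : ∀ v ∈ Bx x0 x1 y0 y1, Od v → v ∈ F) {pX pY : List V} (hX : cX pX) (hY : cY pY) {PL PR : V → Prop}
    (hPL : ∀ v, PL v ↔ Reach (Bx x0 xs y0 y1) SX {v | v ∈ pX} v ∨ v ∈ pX)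
    (hPR : ∀ v, PR v ↔ Reach (Bx x0 x1 y0 y1) SY {v | v ∈ pY} v ∨ v ∈ pY)
    (hB : ∀ v ∈ pX, ¬ PR v) {K : Set V} (hK1 : ∀ v ∈ pX, v ∉ K) (hK2 : ∀ v ∈ pY, v ∉ K) :
    LinkHyp F σ (NN x0 x1 y0 y1 σ PL PR) {v | Od v ∧ (PL v ∨ PR v)} K {v | v ∈ pX} {v | v ∈ pY} := by
  set B := Bx x0 x1 y0 y1 with hBdef
  set BX := Bx x0 xs y0 y1 with hBXdef
  set Ls := Reach BX SX {v | v ∈ pX} with hLs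
  set Rs := Reach B SY {v | v ∈ pY} with hRs
  set N := NN x0 x1 y0 y1 σ PL PR with hN
  have PX := H.X.pth pX hX
  have PY := H.Y.pth pY hY
  have BXB : ∀ v ∈ BX, v ∈ B := fun v hv => ⟨hv.1, hv.2.1.trans H.xs1, hv.2.2⟩
  have evX : ∀ e, Ev e → e ∉ pX := fun e he h => not_Ev.2 (PX.2.2.1 e h).1 he
  have evY : ∀ e, Ev e → e ∉ pY := fun e he h => not_Ev.2 (PY.2.2.1 e h).1 he
  have Lstep : ∀ v w, Ls v → adj v w → w ∈ BX → PL w := by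
    intro v w hv hvw hw
    rw [hPL]
    by_cases h : w ∈ pX
    · exact Or.inr h
    · exact Or.inl (.step v w hv hvw hw h)
  have Rstep : ∀ v w, Rs v → adj v w → w ∈ B → PR w := by
    intro v w hv hvw hw
    rw [hPR]
    by_cases h : w ∈ pY
    · exact Or.inr h
    · exact Or.inl (.step v w hv hvw hw h)
  have Lbase : ∀ v, v ∈ SX → v ∈ BX → PL v := by
    intro v h1 h2
    rw [hPL]
    by_cases h : v ∈ pX
    · exact Or.inr h
    · exact Or.inl (.base v h2 h1 h)
  have Rbase : ∀ v, v ∈ SY → v ∈ B → PR v := by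
    intro v h1 h2
    rw [hPR]
    by_cases h : v ∈ pY
    · exact Or.inr h
    · exact Or.inl (.base v h2 h1 h)
  have PLev : ∀ e, Ev e → PL e → Ls e := by
    intro e he h; rw [hPL] at h; exact h.resolve_right (evX e he)
  have PRev : ∀ e, Ev e → PR e → Rs e := by
    intro e he h; rw [hPR] at h; exact h.resolve_right (evY e he)
  have PLB : ∀ v, PL v → v ∈ BX := by
    intro v h; rw [hPL] at h
    rcases h with h | h
    · exact h.memB
    · exact (PX.2.2.1 v h).2
  have PRB : ∀ v, PR v → v ∈ B := by
    intro v h; rw [hPR] at h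
    rcases h with h | h
    · exact h.memB
    · exact (PY.2.2.1 v h).2
  have LsTX : ∀ v, Ls v → v ∉ TX := fun v hv => H.X.E1 hX hv
  have RsTY : ∀ v, Rs v → v.1 ≠ x0 := fun v hv => H.Y.E1 hY hv
  have sev : ∀ v, Ev v → Ev (σ v) := by
    intro v hv; rw [← not_Od, H.sod, not_Od]; exact hv
  -- closed under even steps
  -- one-step lemma: v in Ls∪Rs (or reflected), adjacent w
  have close1 : ∀ v w, v ∈ B → w ∈ B → σ w ∈ B → adj v w → (Ls v ∨ Rs v) → PL w ∨ PR w ∨ PL (σ w) ∨ PR (σ w) := by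
    intro v w hv hw hsw hvw h
    rcases h with h | h
    · by_cases hb : w ∈ BX
      · exact Or.inl (Lstep v w h hvw hb)
      · obtain ⟨h1, h2⟩ := H.P v w hvw h.memB hw hb
        have := H.sadj v w hvw
        rw [h1] at this
        exact Or.inr (Or.inr (Or.inl (Lstep v _ h this h2)))
    · exact Or.inr (Or.inl (Rstep v w h hvw hw))
  have close : ∀ v w, v ∈ B → σ v ∈ B → w ∈ B → σ w ∈ B → adj v w → (Ls v ∨ Rs v ∨ Ls (σ v) ∨ Rs (σ v)) →
      PL w ∨ PR w ∨ PL (σ w) ∨ PR (σ w) := by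
    intro v w hv hsv hw hsw hvw h
    rcases h with h | h | h | h
    · exact close1 v w hv hw hsw hvw (Or.inl h)
    · exact close1 v w hv hw hsw hvw (Or.inr h)
    · have := close1 (σ v) (σ w) hsv hsw (by rw [H.inv]; exact hw) (H.sadj _ _ hvw) (Or.inl h)
      rw [H.inv] at this; tauto
    · have := close1 (σ v) (σ w) hsv hsw (by rw [H.inv]; exact hw) (H.sadj _ _ hvw) (Or.inr h)
      rw [H.inv] at this; tauto
  have frame : ∀ v w, v ∈ B → σ v ∈ B → adj v w → ¬ (w ∈ B ∧ σ w ∈ B) → PL v ∨ PR v ∨ PL (σ v) ∨ PR (σ v) := by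
    intro v w hv hsv hvw hn
    by_cases hw : w ∈ B
    · have hsw : σ w ∉ B := fun h => hn ⟨hw, h⟩
      have := H.Q (σ v) (σ w) hsv (by rw [H.inv]; exact hv) (H.sadj _ _ hvw) hsw
      rw [H.inv] at this
      rcases this with h | h | h | h
      · exact Or.inr (Or.inr (Or.inl (Lbase _ h.1 h.2)))
      · exact Or.inl (Lbase _ h.1 h.2)
      · exact Or.inr (Or.inr (Or.inr (Rbase _ h hsv)))
      · exact Or.inr (Or.inl (Rbase _ h hv))
    · rcases H.Q v w hv hsv hvw hw with h | h | h | h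
      · exact Or.inl (Lbase _ h.1 h.2)
      · exact Or.inr (Or.inr (Or.inl (Lbase _ h.1 h.2)))
      · exact Or.inr (Or.inl (Rbase _ h hv))
      · exact Or.inr (Or.inr (Or.inr (Rbase _ h hsv)))
  -- neighbours of N
  have Nnbr : ∀ v ∈ N, ∀ u, adj u v → u ∈ B ∧ σ u ∈ B ∧ ¬ (PL u ∨ PR u ∨ PL (σ u) ∨ PR (σ u)) := by
    rintro v ⟨ho, hv, hsv, n1, n2, n3, n4⟩ u huv
    have hev : Ev u := (adj_Ev huv).2 ho
    have hb : u ∈ B ∧ σ u ∈ B := by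
      by_contra h
      have := frame v u hv hsv (adj_symm huv) h
      tauto
    refine ⟨hb.1, hb.2, fun h => ?_⟩
    have := close u v hb.1 hb.2 hv hsv huv (by
      rcases h with h | h | h | h
      · exact Or.inl (PLev _ hev h)
      · exact Or.inr (Or.inl (PRev _ hev h))
      · exact Or.inr (Or.inr (Or.inl (PLev _ (sev _ hev) h)))
      · exact Or.inr (Or.inr (Or.inr (PRev _ (sev _ hev) h))))
    tauto
  refine ⟨hF.fin, hF.S2, H.inv, H.sadj, H.sod, fun v hv => hv.1, fun v hv => hv.1, ?_, ?_, ?_, ?_, ?_,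
    path_con PX.2.1 (fun v hv => (PX.2.2.1 v hv).1) PX.1, path_con PY.2.1 (fun v hv => (PY.2.2.1 v hv).1) PY.1, ?_⟩
  · exact fun v hv => ⟨⟨(PX.2.2.1 v hv).1, Or.inl ((hPL v).2 (Or.inr hv))⟩, hK1 v hv⟩
  · exact fun v hv => ⟨⟨(PY.2.2.1 v hv).1, Or.inr ((hPR v).2 (Or.inr hv))⟩, hK2 v hv⟩
  · intro v hv u huv t hut
    have hev : Ev u := (adj_Ev huv).2 hv.1
    have hto : Od t := (adj_Ev hut).1 hev
    obtain ⟨hu, hsu, hn⟩ := Nnbr v hv u huv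
    have hb : t ∈ B ∧ σ t ∈ B := by
      by_contra h
      exact hn (frame u t hu hsu hut h)
    have hInt : ¬ (Ls t ∨ Rs t ∨ Ls (σ t) ∨ Rs (σ t)) := fun h =>
      hn (close t u hb.1 hb.2 hu hsu (adj_symm hut) h)
    refine ⟨hBF t hb.1 hto, ?_⟩
    by_cases g1 : t ∈ pX
    · exact Or.inr (Or.inl (Or.inl g1))
    by_cases g2 : t ∈ pY
    · exact Or.inr (Or.inl (Or.inr g2))
    have k1 : ¬ PL t := by rw [hPL]; tauto
    have k2 : ¬ PR t := by rw [hPR]; tauto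
    by_cases g3 : σ t ∈ pX
    · exact Or.inr (Or.inr ⟨Or.inl g3, fun h => by rcases h.2 with h | h <;> tauto⟩)
    by_cases g4 : σ t ∈ pY
    · exact Or.inr (Or.inr ⟨Or.inr g4, fun h => by rcases h.2 with h | h <;> tauto⟩)
    refine Or.inl ⟨hto, hb.1, hb.2, k1, k2, ?_, ?_⟩
    · rw [hPL]; tauto
    · rw [hPR]; tauto
  · rintro v ⟨ho, hv, hsv, n1, n2, n3, n4⟩
    exact ⟨(H.sod v).2 ho, hsv, by rw [H.inv]; exact hv, n3, n4, by rw [H.inv]; exact n1, by rw [H.inv]; exact n2⟩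
  · rintro v ⟨ho, hv, hsv, n1, n2, n3, n4⟩ ⟨-, h⟩
    tauto
  · intro S hS
    by_contra hcon
    rw [not_or] at hcon
    obtain ⟨hcon1, hcon2⟩ := hcon
    refine hcon2 (Lk_symm ?_)
    set U : V → Prop := fun e => Ls e ∨ ∃ a, SR S {v | v ∈ pX} a ∧ adj e a with hU
    have SRcase : ∀ a, SR S {v | v ∈ pX} a → a ∈ pX ∨ a ∈ N := by
      intro a ha
      cases ha with
      | base _ h => exact Or.inl h
      | step b _ _ _ h => exact Or.inr (hS h)
    have SRnPR : ∀ a, SR S {v | v ∈ pX} a → a ∈ B ∧ ¬ PR a := by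
      intro a ha
      rcases SRcase a ha with h | h
      · exact ⟨BXB a (PX.2.2.1 a h).2, hB a h⟩
      · exact ⟨h.2.1, h.2.2.2.2.1⟩
    have Rno : ∀ e, Rs e → ¬ ∃ a, SR S {v | v ∈ pX} a ∧ adj e a := by
      rintro e he ⟨a, ha, hea⟩
      obtain ⟨h1, h2⟩ := SRnPR a ha
      exact h2 (Rstep e a he hea h1)
    obtain ⟨p, hne, hl, hc, hpB, h1, h2, hh3, hh4⟩ := T0 H.hx H.hy U
    have UU : ∀ e, Ev e → e ∈ B → (Uex x0 x1 U e ↔ U e) := by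
      intro e he hb
      constructor
      · rintro (h | h)
        · have := H.lcol e hb (le_antisymm h hb.1)
          exact Or.inl (PLev e he (Lbase e this.1 this.2))
        · exact h.2
      · intro h
        refine Or.inr ⟨lt_of_le_of_ne hb.2.1 fun h' => ?_, h⟩
        rcases h with h | h
        · exact LsTX e h (H.LR e h.memB h')
        · exact Rno e (PRev e he (Rbase e (H.rcol e hb h') hb)) h
    -- properties of sites of p
    have pnb : ∀ a ∈ p, ∃ e f, Ev e ∧ Ev f ∧ adj e a ∧ adj f a ∧ e ∈ B ∧ f ∈ B ∧ U e ∧ ¬ U f := by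
      intro a ha
      obtain ⟨e, f, he, hf, ae, af, be, bf, ue, uf⟩ := Dl_nbr hc hl hpB ha
      rw [UU e he be] at ue
      rw [UU f hf bf] at uf
      exact ⟨e, f, he, hf, ae, af, be, bf, ue, uf⟩
    have q1 : ∀ a ∈ p, ¬ SR S {v | v ∈ pX} a := by
      intro a ha h
      obtain ⟨e, f, he, hf, ae, af, be, bf, ue, uf⟩ := pnb a ha
      exact uf (Or.inr ⟨a, h, af⟩)
    have q1' : ∀ a ∈ p, a ∉ pX := fun a ha h => q1 a ha (.base a h)
    have q2 : ∀ a ∈ p, Ls a → σ a = a := by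
      intro a ha h
      obtain ⟨e, f, he, hf, ae, af, be, bf, ue, uf⟩ := pnb a ha
      by_cases hb : f ∈ BX
      · exact absurd (Or.inl (PLev f hf (Lstep a f h (adj_symm af) hb))) uf
      · exact (H.P a f (adj_symm af) h.memB bf hb).1
    have q3 : ∀ a ∈ p, a ∈ N → a ∉ S := by
      intro a ha hN haS
      obtain ⟨e, f, he, hf, ae, af, be, bf, ue, uf⟩ := pnb a ha
      rcases ue with h | ⟨a', h, h'⟩
      · have := (Nnbr a hN e ae).2.2
        exact this (Or.inl ((hPL e).2 (Or.inl h)))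
      · exact q1 a ha (.step a' a h ⟨e, he, h', ae⟩ haS)
    set Lt : V → Prop := fun a => PL (σ a) ∨ (σ a).1 < x0 with hLt
    set Rt : V → Prop := fun a => PR (σ a) ∨ x1 < (σ a).1 with hRt
    have q4 : ∀ a ∈ p, PR a → Lt a := by
      intro a ha h
      obtain ⟨e, f, he, hf, ae, af, be, bf, ue, uf⟩ := pnb a ha
      have hle : Ls e := by
        rw [hPR] at h
        rcases h with h | h
        · have hre : Rs e := PRev e he (Rstep a e h (adj_symm ae) be)
          exact ue.resolve_right (Rno e hre)
        · refine ue.resolve_right ?_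
          rintro ⟨a', h1, h2⟩
          exact hcon1 ⟨a', h1, a, h, e, he, h2, ae⟩
      by_cases hb : a ∈ BX
      · have := Lstep e a hle ae hb
        rw [hPL] at this
        have hla := this.resolve_right (q1' a ha)
        have := q2 a ha hla
        refine Or.inl ?_
        rw [this, hPL]; exact Or.inl hla
      · obtain ⟨g1, g2⟩ := H.P e a ae hle.memB (hpB a ha).2 hb
        have := H.sadj e a ae
        rw [g1] at this
        exact Or.inl (Lstep e _ hle this g2)
    -- steps
    set R : V → V → Prop := fun a b => Dl (Uex x0 x1 U) a b ∧ a ∈ p ∧ b ∈ p with hR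
    have hcR : List.IsChain R p := by
      have : ∀ l : List V, (∀ v ∈ l, v ∈ p) → List.IsChain (Dl (Uex x0 x1 U)) l → List.IsChain R l := by
        intro l
        induction l with
        | nil => intro _ _; simp
        | cons a l ih =>
          intro hs hc
          cases l with
          | nil => simp
          | cons b l =>
            rw [List.isChain_cons_cons] at hc ⊢
            exact ⟨⟨hc.1, hs a (by simp), hs b (by simp)⟩, ih (fun v hv => hs v (List.mem_cons_of_mem _ hv)) hc.2⟩
      exact this p (fun v hv => hv) hc
    have mid : ∀ a b, R a b → ∃ e, Ev e ∧ adj a e ∧ adj e b ∧ e ∈ B := by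
      rintro a b ⟨⟨hx, -⟩, ha, hb⟩
      have h1 := hpB a ha
      have h2 := hpB b hb
      refine ⟨(b.1, a.2), ?_, ?_, ?_, ?_⟩ <;> simp only [mem_Bx, hBdef, Od, Ev, xadj, adj] at * <;> omega
    have st3 : ∀ a b, R a b → Rt a → a ∉ {v | σ v ∈ {v | v ∈ pY}} → Rt b := by
      intro a b hab hra hnG
      have hnG' : σ a ∉ pY := hnG
      obtain ⟨e, hev, hae, heb, heB⟩ := mid a b hab
      have hsx := H.sx a b hab.1.1
      have sae := H.sadj a e hae
      have seb := H.sadj e b heb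
      have ob := H.out b (hpB b hab.2.2).2
      have oe := H.out e heB
      have fin : σ b ∈ B → (σ b).1 = x1 → Rt b := fun h h' => Or.inl (Rbase _ (H.rcol _ h h') h)
      simp only [xadj, adj] at hsx sae
      have hxx := H.hx
      rcases hra with h | h
      · rw [hPR] at h
        have h := h.resolve_right hnG'
        have hm := h.memB
        have hx0 := RsTY _ h
        rw [hBdef, mem_Bx] at hm
        by_cases hse : σ e ∈ B
        · have hre : Rs (σ e) := PRev _ (sev e hev) (Rstep _ _ h (H.sadj a e hae) hse)
          by_cases hsb : σ b ∈ B
          · exact Or.inl (Rstep _ _ hre seb hsb)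
          · rcases ob with ob | ob | ob
            · exact absurd ob hsb
            · have := RsTY _ hre
              have hm2 := hre.memB
              rw [hBdef, mem_Bx] at hm2
              simp only [adj] at seb
              omega
            · exact Or.inr ob
        · simp only [adj] at seb
          rcases oe with oe | oe | oe
          · exact absurd oe hse
          · omega
          · rcases ob with ob | ob | ob
            · have hm2 := ob
              rw [mem_Bx] at hm2
              exact fin ob (by omega)
            · omega
            · exact Or.inr ob
      · rcases ob with ob | ob | ob
        · have hm2 := ob
          rw [mem_Bx] at hm2
          exact fin ob (by omega)
        · omega
        · exact Or.inr ob
    have st4 : ∀ a b, R a b → Lt b → b ∉ {v | σ v ∈ {v | v ∈ pX}} → Lt a := by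
      intro a b hab hlb hnG
      have hnG' : σ b ∉ pX := hnG
      obtain ⟨e, hev, hae, heb, heB⟩ := mid a b hab
      have hsx := H.sx a b hab.1.1
      have sae := H.sadj a e hae
      have seb := H.sadj e b heb
      have oa := H.out a (hpB a hab.2.1).2
      have oe := H.out e heB
      have haB := (hpB a hab.2.1).2
      have LsR : ∀ v, Ls v → v.1 ≠ x1 := fun v hv h => LsTX v hv (H.LR v hv.memB h)
      have hxx := H.hx
      have selfL : ∀ e, Ls e → adj e a → (a ∉ BX → σ e = e → False) → Lt a := by
        intro e he hea hno
        by_cases hb : a ∈ BX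
        · have := Lstep e a he hea hb
          rw [hPL] at this
          have hla := this.resolve_right (q1' a hab.2.1)
          refine Or.inl ?_
          rw [q2 a hab.2.1 hla, hPL]; exact Or.inl hla
        · exact absurd (H.P e a hea he.memB haB hb).1 (fun h => hno hb h)
      rcases hlb with h | h
      · rw [hPL] at h
        have h := h.resolve_right hnG'
        have hm := BXB _ h.memB
        rw [hBdef, mem_Bx] at hm
        have hx1 := LsR _ h
        by_cases hse : σ e ∈ B
        · by_cases hseX : σ e ∈ BX
          · have hle : Ls (σ e) := PLev _ (sev e hev) (Lstep _ _ h (adj_symm seb) hseX)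
            by_cases hsa : σ a ∈ B
            · by_cases hsaX : σ a ∈ BX
              · exact Or.inl (Lstep _ _ hle (adj_symm sae) hsaX)
              · obtain ⟨g1, g2⟩ := H.P _ _ (adj_symm sae) hseX hsa hsaX
                rw [H.inv] at g1 g2
                refine selfL e (by rw [g1]; exact hle) (adj_symm hae) (fun h _ => h g2)
            · rcases oa with oa | oa | oa
              · exact absurd oa hsa
              · exact Or.inr oa
              · have := LsR _ hle
                have hm2 := hse
                rw [mem_Bx] at hm2
                simp only [adj] at sae
                omega
          · obtain ⟨g1, g2⟩ := H.P _ _ (adj_symm seb) h.memB hse hseX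
            rw [H.inv] at g1 g2
            have hle : Ls e := PLev e hev (Lstep (σ b) e h (by rw [← g1]; exact adj_symm heb) g2)
            refine selfL e hle (adj_symm hae) (fun _ h => hseX (by rw [h]; exact g2))
        · simp only [adj, xadj] at sae seb hsx
          rcases oe with oe | oe | oe
          · exact absurd oe hse
          · exact Or.inr (by omega)
          · omega
      · simp only [adj, xadj] at sae seb hsx
        rcases oa with oa | oa | oa
        · have hm2 := oa
          rw [mem_Bx] at hm2
          have := H.lcol _ oa (by omega)
          exact Or.inl (Lbase _ this.1 this.2)
        · exact Or.inr oa
        · omega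
    have st5 : ∀ a ∈ {v | σ v ∈ {v | v ∈ pX}}, ¬ Rt a := by
      rintro a ha (h | h)
      · exact hB _ ha h
      · have := BXB _ (PX.2.2.1 _ ha).2
        rw [hBdef, mem_Bx] at this
        omega
    have stN : ∀ a ∈ p, ¬ Lt a → ¬ Rt a → a ∈ {v | v ∈ N ∧ v ∉ S} := by
      intro a ha hnl hnr
      have hb := hpB a ha
      have hN : a ∈ N := by
        refine ⟨hb.1, hb.2, ?_, ?_, ?_, ?_, ?_⟩
        · rcases H.out a hb.2 with h | h | h
          · exact h
          · exact absurd (Or.inr h) hnl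
          · exact absurd (Or.inr h) hnr
        · intro h
          have h' := h
          rw [hPL] at h'
          have hla := h'.resolve_right (q1' a ha)
          refine hnl (Or.inl ?_)
          rw [q2 a ha hla]; exact h
        · exact fun h => hnl (q4 a ha h)
        · exact fun h => hnl (Or.inl h)
        · exact fun h => hnr (Or.inl h)
      exact ⟨hN, q3 a ha hN⟩
    have hm := hd_mem hne
    have hmB := hpB _ hm
    have lm := lt_mem hne
    have lmB := hpB _ lm
    have topU : ∀ e, Ev e → e.2 = y1 → s ≤ e.1 → x0 ≤ e.1 → ¬ Uex x0 x1 U e := by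
      intro e he hey hes hex
      by_cases hx1 : x1 < e.1
      · rintro (h | h)
        · have := H.hx; omega
        · omega
      · have hb : e ∈ B := by
          have := H.hy
          rw [hBdef, mem_Bx]; omega
        obtain ⟨t2, t3⟩ := H.tops e hb he hey hes
        rw [UU e he hb]
        rintro (h | h)
        · exact LsTX e h (t3 h.memB)
        · exact Rno e (PRev e he (Rbase e t2 hb)) h
    have hdR : (σ (hd p) ∈ SY ∧ σ (hd p) ∈ B) ∨ x1 < (σ (hd p)).1 := by
      refine (H.top _ hmB.2 hmB.1 h1).resolve_right fun hs => ?_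
      have := hmB.1
      have hb := hmB.2
      simp only [Od, mem_Bx] at this hb
      have evm : Ev ((hd p).1 - 1, y1) := by simp only [Ev]; omega
      have evp : Ev ((hd p).1 + 1, y1) := by simp only [Ev]; omega
      have hsx := H.s0x
      exact hh3 (iff_of_false (topU _ evm rfl (by simp only; omega) (by simp only; omega))
          (topU _ evp rfl (by simp only; omega) (by simp only; omega)))
    have hdL : ¬ Lt (hd p) := by
      rintro (h | h)
      · rcases hdR with ⟨r1, r2⟩ | r
        · rw [hPL] at h
          rcases h with h | h
          · rcases H.topL _ hmB.2 hmB.1 h1 h.memB r1 with t | ⟨e, e1, e2, e3, e4⟩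
            · exact LsTX _ h t
            · exact LsTX e (PLev e e3 (Lstep _ _ h e4 e1)) e2
          · exact hB _ h (Rbase _ r1 r2)
        · have := BXB _ (PLB _ h)
          rw [hBdef, mem_Bx] at this
          omega
      · rcases hdR with ⟨r1, r2⟩ | r
        · rw [hBdef, mem_Bx] at r2; omega
        · have := H.hx; omega
    have ltL : Lt (lt p) := by
      rcases H.bot _ lmB.2 lmB.1 h2 with (h | h) | h
      · exact Or.inl (Lbase _ h.1 h.2)
      · exact Or.inr h
      · exfalso
        have hb := lmB.2
        have ho := lmB.1
        simp only [Od, mem_Bx] at hb ho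
        have hyy := H.hy
        have botU : ∀ e : V, Ev e → e.2 = y0 → e.1 ≤ s' → Uex x0 x1 U e := by
          intro e he hey hes
          by_cases hx0 : e.1 ≤ x0
          · exact Or.inl hx0
          · have hb : e ∈ B := by
              have := H.sp
              rw [hBdef, mem_Bx]; omega
            obtain ⟨t1, t2, t3⟩ := H.bots e hb hey hes
            rw [UU e he hb]
            exact Or.inl (PLev e he (Lbase e t1 t2))
        exact hh4 (iff_of_true (botU _ (by simp only [Ev]; omega) rfl (by simp only; omega))
          (botU _ (by simp only [Ev]; omega) rfl (by simp only; omega)))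
    refine link_walk (R := R) ?_ st3 st4 st5 p stN hne hcR hdL ?_ ltL
    · intro a b hab
      exact xadj_star hab.1.1 (hpB a hab.2.1).1
    · rcases hdR with ⟨r1, r2⟩ | r
      · exact Or.inl (Or.inl (Rbase _ r1 r2))
      · exact Or.inl (Or.inr r)

end

def OL2 (x0 x1 y0 y1 s : ℤ) (p : List V) : Prop :=
  Pth (Bx x0 x1 y0 y1) y1 p ∧ (hd p).1 < s ∧ (lt p).2 = y0 ∧ ∃ v ∈ p, v.1 = s

lemma ws_L2 {x0 x1 y0 y1 s : ℤ} (hs0 : x0 < s) (hs1 : s < x1) (hy : y0 < y1) :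
    WS x0 x1 y0 y1 s s s (fun v => (2 * s - v.1, v.2)) {v | v.1 = x0 ∨ v.2 = y0} (tgX s y1)
      {v | v.1 = x1 ∨ (v.2 = y1 ∧ s ≤ v.1)} (clX x0 s y0 y1) (clY x0 x1 y0 y1 s) (OL2 x0 x1 y0 y1 s) where
  hx := by omega
  hy := hy
  xs1 := by omega
  inv v := by ext <;> simp
  sadj u v h := by simp only [adj] at *; omega
  sx u v h := by simp only [xadj] at *; omega
  sod v := by simp only [Od]; omega
  X := isWC_X hs0 hy
  Y := isWC_Y (by omega) hy hs0
  P v w h1 h2 h3 h4 := by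
    simp only [mem_Bx, adj] at *
    exact ⟨Prod.ext (by simp only; omega) rfl, by omega⟩
  Q v w h1 h2 h3 h4 := by simp only [mem_Bx, adj, Set.mem_ofPred_eq] at *; omega
  lcol v h1 h2 := by simp only [mem_Bx, Set.mem_ofPred_eq] at *; omega
  rcol v h1 h2 := by simp only [Set.mem_ofPred_eq] at *; omega
  LR v h1 h2 := by simp only [mem_Bx] at *; omega
  out v h := by simp only [mem_Bx] at *; omega
  top h h1 h2 h3 := by simp only [mem_Bx, Set.mem_ofPred_eq] at *; omega
  tops e h1 h2 h3 h4 := by simp only [mem_Bx, Set.mem_ofPred_eq, tgX, Ev] at *; omega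
  topL h h1 h2 h3 h4 h5 := by
    refine Or.inr ⟨(s - 1, y1), ?_, ⟨?_, rfl, ?_⟩, ?_, ?_⟩ <;>
    simp only [mem_Bx, Set.mem_ofPred_eq, Ev, Od, adj] at * <;> omega
  bot l h1 h2 h3 := by simp only [mem_Bx, Set.mem_ofPred_eq] at *; omega
  bots e h1 h2 h3 := by simp only [mem_Bx, Set.mem_ofPred_eq] at *; omega
  sp := hs1
  s0x := hs0
  oY p h := ⟨h.1, h.2.1.le, h.2.2.1⟩
  oX p h := by
    obtain ⟨v, hv, hvs⟩ := h.2.2.2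
    obtain ⟨q, q1, q2, q3, q4, q5, q6, q7⟩ := trunc (fun _ _ h => h) p h.1.1 h.1.2.1 h.2.1 ⟨v, hv, hvs.ge⟩
    refine ⟨q, ⟨⟨q1, q3, fun v hv => ?_, by rw [q4]; exact h.1.2.2.2⟩, by rw [q4]; exact h.2.1, q7⟩, q5, q4⟩
    have := h.1.2.2.1 v (q5 v hv)
    exact ⟨this.1, this.2.1, q6 v hv, this.2.2.2⟩

lemma ws_D {x0 x1 y0 y1 : ℤ} (hx : x0 < x1) (hsq : x1 - x0 = y1 - y0) :
    WS x0 x1 y0 y1 x1 (x1 + 1) (x0 - 1) (fun v => (v.2 + (x0 - y0), v.1 - (x0 - y0))) {v | v.1 = x0} {v | v.1 = x1}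
      {v | v.1 = x1 ∨ (v.2 = y1 ∧ x1 + 1 ≤ v.1)} (clL x0 x1 y0 y1) (clY x0 x1 y0 y1 (x1 + 1)) (clL x0 x1 y0 y1) where
  hx := hx
  hy := by omega
  xs1 := by omega
  inv v := by ext <;> simp
  sadj u v h := by simp only [adj] at *; omega
  sx u v h := by simp only [xadj] at *; omega
  sod v := by simp only [Od]; omega
  X := isWC_L hx (by omega)
  Y := isWC_Y hx (by omega) (by omega)
  P v w h1 h2 h3 h4 := absurd h3 h4
  Q v w h1 h2 h3 h4 := by simp only [mem_Bx, adj, Set.mem_ofPred_eq] at *; omega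
  lcol v h1 h2 := ⟨h2, h1⟩
  rcol v h1 h2 := Or.inl h2
  LR v h1 h2 := h2
  out v h := by simp only [mem_Bx] at *; omega
  top h h1 h2 h3 := by simp only [mem_Bx, Set.mem_ofPred_eq] at *; omega
  tops e h1 h2 h3 h4 := by simp only [mem_Bx, Set.mem_ofPred_eq, Ev] at *; omega
  topL h h1 h2 h3 h4 h5 := by
    refine Or.inl ?_
    simp only [mem_Bx, Set.mem_ofPred_eq] at *; omega
  bot l h1 h2 h3 := by simp only [mem_Bx, Set.mem_ofPred_eq] at *; omega
  bots e h1 h2 h3 := by simp only [mem_Bx, Set.mem_ofPred_eq] at *; omega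
  sp := by omega
  s0x := by omega
  oY p h := ⟨h.1, by have := (h.1.2.2.1 _ (hd_mem h.1.1)).2; simp only [mem_Bx] at this; omega, h.2⟩
  oX p h := ⟨p, h, fun _ h => h, rfl⟩

lemma NG_mono {F : Set V} (hF : F.Finite) {A A' : (V → ℤ) → Prop} (h : ∀ f, A f → A' f) : NG F A ≤ NG F A' :=
  Set.ncard_le_ncard (fun _ hg => ⟨hg.1, h _ hg.2⟩) ((GS_finite hF c0).subset fun _ h => h.1)

lemma NG_compl {F : Set V} (hF : F.Finite) (A : (V → ℤ) → Prop) :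
    NG F (fun _ => True) ≤ NG F A + NG F (fun f => ¬ A f) := by
  refine le_trans (Set.ncard_le_ncard ?_ ?_) (Set.ncard_union_le _ _)
  · rintro g ⟨hg, -⟩
    by_cases h : A (ab g)
    · exact Or.inl ⟨hg, h⟩
    · exact Or.inr ⟨hg, h⟩
  · exact ((GS_finite hF c0).subset fun _ h => h.1).union ((GS_finite hF c0).subset fun _ h => h.1)

lemma chain_all {R : V → V → Prop} {Pr : V → Prop} (p : List V) (hc : List.IsChain R p)
    (h : ∀ a ∈ p, ∀ b ∈ p, R a b → (Pr a ↔ Pr b)) : ∀ a ∈ p, ∀ b ∈ p, Pr a → Pr b := by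
  induction p with
  | nil => intro a ha; simp at ha
  | cons a l ih =>
    cases l with
    | nil => intro x hx y hy; simp at hx hy; rw [hx, hy]; exact id
    | cons b l =>
      rw [List.isChain_cons_cons] at hc
      have ih' := ih hc.2 (fun x hx y hy => h x (List.mem_cons_of_mem _ hx) y (List.mem_cons_of_mem _ hy))
      have hab := h a (by simp) b (by simp) hc.1
      intro x hx y hy hp
      rcases List.mem_cons.1 hx with rfl | hx2
      · rcases List.mem_cons.1 hy with rfl | hy2
        · exact hp
        · exact ih' b (by simp) y hy2 (hab.1 hp)
      · rcases List.mem_cons.1 hy with rfl | hy2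
        · exact hab.2 (ih' x hx2 b (by simp) hp)
        · exact ih' x hx2 y hy2 hp

lemma star_box {x0 x1 y0 y1 : ℤ} {a b : V} (ha : a ∈ Bx x0 x1 y0 y1) (hb : b ∈ Bx x0 x1 y0 y1) (oa : Od a) (h : star a b) :
    a = b ∨ ∃ e, Ev e ∧ e ∈ Bx x0 x1 y0 y1 ∧ adj a e ∧ adj e b := by
  obtain ⟨u, hu, h1, h2⟩ := h
  by_cases hn : a = b
  · exact Or.inl hn
  have hn' : a.1 ≠ b.1 ∨ a.2 ≠ b.2 := by
    by_contra h; push Not at h; exact hn (Prod.ext h.1 h.2)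
  right
  by_cases hx : a.1 = b.1 ∨ a.2 = b.2
  · refine ⟨u, hu, ?_⟩
    simp only [mem_Bx, Ev, Od, adj] at *; omega
  · refine ⟨(b.1, a.2), ?_⟩
    simp only [mem_Bx, Ev, Od, adj] at *; omega

/-- all or none of a zero path is reached -/
lemma reach_path {x0 x1 y0 y1 : ℤ} {S bl : Set V} (hbl : ∀ v ∈ bl, Od v) {p : List V} (hc : List.IsChain xadj p)
    (hp : ∀ v ∈ p, Od v ∧ v ∈ Bx x0 x1 y0 y1) (h0 : ∀ v ∈ p, v ∉ bl) :
    ∀ a ∈ p, ∀ b ∈ p, Reach (Bx x0 x1 y0 y1) S bl a → Reach (Bx x0 x1 y0 y1) S bl b := by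
  have key : ∀ a ∈ p, ∀ b ∈ p, xadj a b → Reach (Bx x0 x1 y0 y1) S bl a → Reach (Bx x0 x1 y0 y1) S bl b := by
    intro a ha b hb hab h
    rcases star_box (hp a ha).2 (hp b hb).2 (hp a ha).1 (xadj_star hab (hp a ha).1) with rfl | ⟨e, he, hB, h1, h2⟩
    · exact h
    · exact .step e b (.step a e h h1 hB fun h' => not_Ev.2 (hbl e h') he) h2 (hp b hb).2 (h0 b hb)
  exact chain_all p hc fun a ha b hb hab => ⟨key a ha b hb hab, key b hb a ha (xadj_symm hab)⟩

lemma nz_od {f : V → ℤ} : ∀ v ∈ nz f, Od v := fun _ h => h.1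

def WallOf (cl : List V → Prop) (K : V → Prop) (p : List V) : Prop :=
  cl p ∧ ∀ v ∈ p, ¬ K v ∧ ∃ e, Ev e ∧ adj e v ∧ K e

noncomputable def wall (cl : List V → Prop) (K : V → Prop) : List V := Classical.epsilon (WallOf cl K)

section
variable {B Sb Tgt : Set V} {cl : List V → Prop} {y1 : ℤ} {s0 : ZMod 2}

lemma wall_spec (H : IsWC B Sb Tgt cl y1 s0) {f : V → ℤ} (hf : FE B Sb Tgt cl f) :
    WallOf cl (Reach B Sb (nz f)) (wall cl (Reach B Sb (nz f))) := by
  refine Classical.epsilon_spec (p := WallOf cl (Reach B Sb (nz f))) ?_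
  obtain ⟨p, hp, h⟩ := H.E2 (nz f) nz_od hf.1
  exact ⟨p, hp, fun v hv => ⟨fun hr => hr.nbl (h v hv).1, (h v hv).2⟩⟩

lemma wall_nz (H : IsWC B Sb Tgt cl y1 s0) {f : V → ℤ} {p : List V} (hp : WallOf cl (Reach B Sb (nz f)) p) :
    ∀ v ∈ p, f v ≠ 0 := by
  intro v hv h0
  obtain ⟨h1, e, he, hev, hr⟩ := hp.2 v hv
  exact h1 (.step e v hr hev ((H.pth p hp.1).2.2.1 v hv).2 fun h => h.2 h0)

lemma agree {f f' : V → ℤ} {p : List V} (hp : ∀ v ∈ p, ¬ Reach B Sb (nz f) v)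
    (h : ∀ v, Od v → (Reach B Sb {v | v ∈ p} v ∨ v ∈ p) → (f' v = 0 ↔ f v = 0)) :
    Reach B Sb (nz f') = Reach B Sb (nz f) := by
  have sub : ∀ v, Reach B Sb (nz f) v → Reach B Sb {v | v ∈ p} v := fun v hv => hv.mono' fun w hw hwp => hp w hwp hw
  ext v
  constructor
  · intro hv
    induction hv with
    | base v h1 h2 h3 =>
      refine .base v h1 h2 fun hn => h3 ⟨hn.1, fun h0 => hn.2 ((h v hn.1 ?_).1 h0)⟩
      by_cases hvp : v ∈ p
      · exact Or.inr hvp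
      · exact Or.inl (.base v h1 h2 hvp)
    | step u v _ h1 h2 h3 ih =>
      refine .step u v ih h1 h2 fun hn => h3 ⟨hn.1, fun h0 => hn.2 ((h v hn.1 ?_).1 h0)⟩
      by_cases hvp : v ∈ p
      · exact Or.inr hvp
      · exact Or.inl (.step u v (sub u ih) h1 h2 hvp)
  · intro hv
    refine hv.mono' fun w hw hn => hw.nbl ⟨hn.1, fun h0 => hn.2 ((h w hn.1 (Or.inl (sub w hw))).2 h0)⟩

end

section
variable {x0 x1 y0 y1 xs s s' : ℤ} {σ : V → V} {SX TX SY : Set V} {cX cY O : List V → Prop}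

lemma WS.excl (H : WS x0 x1 y0 y1 xs s s' σ SX TX SY cX cY O) {f : V → ℤ}
    (hfX : FE (Bx x0 xs y0 y1) SX TX cX f) (hfY : FE (Bx x0 x1 y0 y1) SY {v | v.1 = x0} cY f)
    {pX pY : List V} (wX : WallOf cX (Reach (Bx x0 xs y0 y1) SX (nz f)) pX)
    (wY : WallOf cY (Reach (Bx x0 x1 y0 y1) SY (nz f)) pY)
    {p : List V} (hO : O p) (h0 : ∀ v ∈ p, f v = 0) :
    (∀ v ∈ pX, ¬ (Reach (Bx x0 x1 y0 y1) SY {v | v ∈ pY} v ∨ v ∈ pY)) ∧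
    (∀ N : Set V, (∀ v ∈ N, v ∈ Bx x0 x1 y0 y1 ∧ Od v) → ¬ Lk {v | v ∈ N ∧ f v ≠ 0} {v | v ∈ pX} {v | v ∈ pY}) := by
  have hcp := H.oY p hO
  obtain ⟨p', hp', hpp, hhd⟩ := H.oX p hO
  have P := H.Y.pth p hcp
  have P' := H.X.pth p' hp'
  have PX := H.X.pth pX wX.1
  have PY := H.Y.pth pY wY.1
  have nzX := wall_nz H.X wX
  have nzY := wall_nz H.Y wY
  have BXB : ∀ v ∈ Bx x0 xs y0 y1, v ∈ Bx x0 x1 y0 y1 := fun v hv => ⟨hv.1, hv.2.1.trans H.xs1, hv.2.2⟩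
  have d1 : ∀ v ∈ p, ¬ Reach (Bx x0 x1 y0 y1) SY (nz f) v := fun v hv hr =>
    hfY.2 ⟨p, hcp, fun w hw => reach_path nz_od P.2.1 P.2.2.1 (fun v hv h => h.2 (h0 v hv)) v hv w hw hr⟩
  have d2 : ∀ v ∈ p', ¬ Reach (Bx x0 xs y0 y1) SX (nz f) v := fun v hv hr =>
    hfX.2 ⟨p', hp', fun w hw => reach_path nz_od P'.2.1 P'.2.2.1 (fun v hv h => h.2 (h0 v (hpp v hv))) v hv w hw hr⟩
  have evp : ∀ e, Ev e → e ∉ p := fun e he h => not_Ev.2 (P.2.2.1 e h).1 he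
  have evp' : ∀ e, Ev e → e ∉ p' := fun e he h => not_Ev.2 (P'.2.2.1 e h).1 he
  have sY : ∀ v ∈ pY, side y1 p v = 1 := by
    intro v hv
    obtain ⟨_, e, he, hev, hr⟩ := wY.2 v hv
    have hr' : Reach (Bx x0 x1 y0 y1) SY {v | v ∈ p} e := hr.mono' fun w hw hwp => d1 w hwp hw
    rw [← H.Y.side_eq hcp hr']
    exact (H.Y.inv p hcp e hr.memB v (PY.2.2.1 v hv).2 (evp e he) (fun h => nzY v hv (h0 v h)) hev).symm
  have sX' : ∀ v ∈ pX, side y1 p' v = 0 := by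
    intro v hv
    obtain ⟨_, e, he, hev, hr⟩ := wX.2 v hv
    have hr' : Reach (Bx x0 xs y0 y1) SX {v | v ∈ p'} e := hr.mono' fun w hw hwp => d2 w hwp hw
    rw [← H.X.side_eq hp' hr']
    exact (H.X.inv p' hp' e hr.memB v (PX.2.2.1 v hv).2 (evp' e he) (fun h => nzX v hv (h0 v (hpp v h))) hev).symm
  have mX := hd_mem PX.1
  have hlt : (hd pX).1 < (hd p).1 := by
    have h1 := sX' _ mX
    rw [H.X.top p' hp' _ (PX.2.2.1 _ mX).2 PX.2.2.2, hhd] at h1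
    have h2 : ¬ (hd p).1 < (hd pX).1 := by
      intro h; rw [if_pos h] at h1; exact absurd h1 (by decide)
    have h3 : (hd pX).1 ≠ (hd p).1 := by
      intro h
      have : hd pX = hd p := Prod.ext h (PX.2.2.2.trans P.2.2.2.symm)
      exact nzX _ mX (by rw [this]; exact h0 _ (hd_mem P.1))
    omega
  have sX0 : side y1 p (hd pX) = 0 := by
    rw [H.Y.top p hcp _ (BXB _ (PX.2.2.1 _ mX).2) PX.2.2.2, if_neg (by omega)]
  have sst : ∀ a b, a ∈ Bx x0 x1 y0 y1 → b ∈ Bx x0 x1 y0 y1 → Od a → star a b → a ∉ p → b ∉ p → side y1 p a = side y1 p b := by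
    intro a b ha hb oa hs na nb
    rcases star_box ha hb oa hs with rfl | ⟨e, he, hB, h1, h2⟩
    · rfl
    · rw [H.Y.inv p hcp a ha e hB na (evp e he) h1, H.Y.inv p hcp e hB b hb (evp e he) nb h2]
  have nXp : ∀ v ∈ pX, v ∉ p := fun v hv h => nzX v hv (h0 v h)
  have nYp : ∀ v ∈ pY, v ∉ p := fun v hv h => nzY v hv (h0 v h)
  have sX : ∀ v ∈ pX, side y1 p v = 0 := by
    intro v hv
    refine chain_all (Pr := fun v => side y1 p v = 0) pX PX.2.1 ?_ _ mX v hv sX0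
    intro a ha b hb hab
    simp only [sst a b (BXB _ (PX.2.2.1 a ha).2) (BXB _ (PX.2.2.1 b hb).2) (PX.2.2.1 a ha).1 (xadj_star hab (PX.2.2.1 a ha).1)
      (nXp a ha) (nXp b hb)]
  have disj : ∀ v ∈ pX, v ∉ pY := by
    intro v hv h
    have := sX v hv
    rw [sY v h] at this
    exact absurd this (by decide)
  refine ⟨fun v hv h => ?_, fun N hN hL => ?_⟩
  · have hr := h.resolve_right (disj v hv)
    have hall := reach_path (S := SY) (bl := {v | v ∈ pY}) (fun v hv => (PY.2.2.1 v hv).1) PX.2.1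
      (fun v hv => ⟨(PX.2.2.1 v hv).1, BXB _ (PX.2.2.1 v hv).2⟩) disj v hv _ mX hr
    have e1 := H.Y.side_eq wY.1 hall
    rw [H.Y.top pY wY.1 _ (BXB _ (PX.2.2.1 _ mX).2) PX.2.2.2] at e1
    have e2 := sY _ (hd_mem PY.1)
    rw [H.Y.top p hcp _ (PY.2.2.1 _ (hd_mem PY.1)).2 PY.2.2.2] at e2
    split_ifs at e1 e2 with c1 c2
    · omega
    all_goals simp at e1 e2
  · obtain ⟨a, ha, b, hb, hab⟩ := hL
    have key : ∀ a, SR {v | v ∈ N ∧ f v ≠ 0} {v | v ∈ pX} a → side y1 p a = 0 ∧ a ∈ Bx x0 x1 y0 y1 ∧ Od a ∧ a ∉ p := by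
      intro a ha
      induction ha with
      | base a ha => exact ⟨sX a ha, BXB _ (PX.2.2.1 a ha).2, (PX.2.2.1 a ha).1, nXp a ha⟩
      | step a b _ hs hb ih =>
        have nb : b ∉ p := fun h => hb.2 (h0 b h)
        have hbb := hN b hb.1
        exact ⟨by rw [← sst a b ih.2.1 hbb.1 ih.2.2.1 hs ih.2.2.2 nb]; exact ih.1, hbb.1, hbb.2, nb⟩
    obtain ⟨k1, k2, k3, k4⟩ := key a ha
    have := sst a b k2 (PY.2.2.1 b hb).2 k3 hab k4 (nYp b hb)
    rw [k1, sY b hb] at this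
    exact absurd this (by decide)

def nO (O : List V → Prop) (f : V → ℤ) : Prop := ¬ ∃ p, O p ∧ ∀ v ∈ p, f v = 0

lemma WS.count (H : WS x0 x1 y0 y1 xs s s' σ SX TX SY cX cY O) {F : Set V} (hF : Dom F)
    (hBF : ∀ v ∈ Bx x0 x1 y0 y1, Od v → v ∈ F) :
    NG F (fun f => FE (Bx x0 xs y0 y1) SX TX cX f ∧ FE (Bx x0 x1 y0 y1) SY {v | v.1 = x0} cY f) ≤ 8 * NG F (nO O) := by
  set BX := Bx x0 xs y0 y1 with hBX
  set B := Bx x0 x1 y0 y1 with hB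
  set A : (V → ℤ) → Prop := fun f => FE BX SX TX cX f ∧ FE B SY {v | v.1 = x0} cY f with hA
  set KX : (V → ℤ) → V → Prop := fun f => Reach BX SX (nz f) with hKX
  set KY : (V → ℤ) → V → Prop := fun f => Reach B SY (nz f) with hKY
  set PL : (V → ℤ) → V → Prop := fun f v => Reach BX SX {v | v ∈ wall cX (KX f)} v ∨ v ∈ wall cX (KX f) with hPL
  set PR : (V → ℤ) → V → Prop := fun f v => Reach B SY {v | v ∈ wall cY (KY f)} v ∨ v ∈ wall cY (KY f) with hPR
  set W : (V → ℤ) → Set V := fun f => {v | Od v ∧ (PL f v ∨ PR f v)} with hW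
  have Weq : ∀ f f', KX f' = KX f → KY f' = KY f → W f' = W f := by
    intro f f' h1 h2
    simp only [hW, hPL, hPR, h1, h2]
  have Aeq : ∀ f f', KX f' = KX f → KY f' = KY f → A f → A f' := by
    intro f f' h1 h2 h
    simp only [hA, FE] at h ⊢
    simp only [hKX] at h1
    simp only [hKY] at h2
    rw [h1, h2]; exact h
  have agr : ∀ f f', A f → (∀ v ∈ W f, (f' v = 0 ↔ f v = 0)) → KX f' = KX f ∧ KY f' = KY f := by
    intro f f' hf h
    have w1 := wall_spec H.X hf.1
    have w2 := wall_spec H.Y hf.2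
    exact ⟨agree (fun v hv => (w1.2 v hv).1) fun v ho hv => h v ⟨ho, Or.inl hv⟩,
      agree (fun v hv => (w2.2 v hv).1) fun v ho hv => h v ⟨ho, Or.inr hv⟩⟩
  have hle : NG F A ≤ 8 * {g | (g ∈ GS F c0 ∧ A (ab g)) ∧ nO O (ab g)}.ncard := by
    refine fiber_le ((GS_finite hF.fin c0).subset fun _ h => h.1)
      (fun g => (KX (ab g), KY (ab g), {v | v ∈ W (ab g) ∧ ab g v = 0})) 8 (fun g hg => hg.1) ?_
    rintro g ⟨hg, hgA⟩
    have w1 := wall_spec H.X hgA.1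
    have w2 := wall_spec H.Y hgA.2
    set Z : Set V := {v | ab g v = 0} with hZ
    set C : (V → ℤ) → Prop := fun f => ∀ v ∈ W (ab g), (f v = 0 ↔ v ∈ Z) with hC
    have key1 : ∀ x, x ∈ GS F c0 → C (ab x) → A (ab x) ∧ KX (ab x) = KX (ab g) ∧ KY (ab x) = KY (ab g) ∧
        {v | v ∈ W (ab x) ∧ ab x v = 0} = {v | v ∈ W (ab g) ∧ ab g v = 0} := by
      intro x hx hc
      obtain ⟨k1, k2⟩ := agr (ab g) (ab x) hgA hc
      refine ⟨Aeq _ _ k1 k2 hgA, k1, k2, ?_⟩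
      rw [Weq _ _ k1 k2]
      ext v
      constructor
      · rintro ⟨h1, h2⟩; exact ⟨h1, (hc v h1).1 h2⟩
      · rintro ⟨h1, h2⟩; exact ⟨h1, (hc v h1).2 h2⟩
    have key2 : ∀ x, KX (ab x) = KX (ab g) → KY (ab x) = KY (ab g) →
        {v | v ∈ W (ab x) ∧ ab x v = 0} = {v | v ∈ W (ab g) ∧ ab g v = 0} → C (ab x) := by
      intro x k1 k2 k3 v hv
      have hv' : v ∈ W (ab x) := by rw [Weq _ _ k1 k2]; exact hv
      have := Set.ext_iff.1 k3 v
      constructor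
      · intro h; exact (this.1 ⟨hv', h⟩).2
      · intro h; exact (this.2 ⟨hv, h⟩).2
    have fin : ∀ S : Set (V → ℤ), (∀ x ∈ S, x ∈ GS F c0) → S.Finite := fun S h => (GS_finite hF.fin c0).subset h
    by_cases hcase : ∀ v ∈ wall cX (KX (ab g)), ¬ PR (ab g) v
    · have L := H.link hF hBF w1.1 w2.1 (PL := PL (ab g)) (PR := PR (ab g)) (fun v => Iff.rfl) (fun v => Iff.rfl) hcase (K := Z)
        (wall_nz H.X w1) (wall_nz H.Y w2)
      refine le_trans ?_ (le_trans L.main (Nat.mul_le_mul_left 8 ?_))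
      · refine Set.ncard_le_ncard ?_ (fin _ fun x hx => hx.1)
        rintro x ⟨⟨hx, -⟩, hk⟩
        simp only [Prod.mk.injEq] at hk
        exact ⟨hx, key2 x hk.1 hk.2.1 hk.2.2⟩
      · refine Set.ncard_le_ncard ?_ (fin _ fun x hx => hx.1.1.1)
        rintro x ⟨hx, hc, hlk⟩
        obtain ⟨k0, k1, k2, k3⟩ := key1 x hx hc
        refine ⟨⟨⟨hx, k0⟩, ?_⟩, ?_⟩
        · rintro ⟨p, hp, hp0⟩
          have w1' : WallOf cX (KX (ab x)) (wall cX (KX (ab g))) := by rw [k1]; exact w1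
          have w2' : WallOf cY (KY (ab x)) (wall cY (KY (ab g))) := by rw [k2]; exact w2
          exact (H.excl k0.1 k0.2 w1' w2' hp hp0).2 _ (fun v hv => ⟨hv.2.1, hv.1⟩) hlk
        · simp only [k1, k2, k3]
    · refine le_trans (Set.ncard_le_ncard ?_ (fin _ fun x hx => hx.1.1.1)) (Nat.le_mul_of_pos_left _ (by norm_num))
      rintro x ⟨⟨hx, hxA⟩, hk⟩
      refine ⟨⟨⟨hx, hxA⟩, ?_⟩, hk⟩
      simp only [Prod.mk.injEq] at hk
      obtain ⟨k1, k2, k3⟩ := hk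
      rintro ⟨p, hp, hp0⟩
      have w1' : WallOf cX (KX (ab x)) (wall cX (KX (ab g))) := by rw [k1]; exact w1
      have w2' : WallOf cY (KY (ab x)) (wall cY (KY (ab g))) := by rw [k2]; exact w2
      exact hcase (H.excl hxA.1 hxA.2 w1' w2' hp hp0).1
  refine hle.trans (Nat.mul_le_mul_left 8 (Set.ncard_le_ncard (fun g hg => ⟨hg.1.1, hg.2⟩) ((GS_finite hF.fin c0).subset fun _ h => h.1)))

theorem WS.bound (H : WS x0 x1 y0 y1 xs s s' σ SX TX SY cX cY O) {F : Set V} (hF : Dom F)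
    (hBF : ∀ v ∈ Bx x0 x1 y0 y1, Od v → v ∈ F) :
    NG F (fun _ => True) ≤ 128 * NG F (nO O) := by
  have h1 := H.count hF hBF
  have h2 := fkg hF.fin (FE (Bx x0 xs y0 y1) SX TX cX) (FE (Bx x0 x1 y0 y1) SY {v | v.1 = x0} cY) (fun _ => True)
    (fun f => FE (Bx x0 xs y0 y1) SX TX cX f ∧ FE (Bx x0 x1 y0 y1) SY {v | v.1 = x0} cY f) (by
      intro f f' hf hf' a1 a2
      refine ⟨trivial, FE_mono ?_ a1, FE_mono ?_ a2⟩ <;> intro v hv <;>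
      · have e : (f ⊔ f') v = max (f v) (f' v) := rfl
        rw [e] at hv
        have := hf v; have := hf' v
        omega)
  have h3 := flip_count H.X hF (fun v hv => hBF v ⟨hv.1, hv.2.1.trans H.xs1, hv.2.2⟩)
  have h4 := flip_count H.Y hF hBF
  have h5 := NG_compl hF.fin (nO O)
  have h6 : NG F (fun f => ¬ nO O f) ≤ NG F (EE cX) := NG_mono hF.fin fun f hf => by
    unfold nO at hf; rw [not_not] at hf
    obtain ⟨p, hp, h0⟩ := hf
    obtain ⟨p', h1, h2, -⟩ := H.oX p hp
    exact ⟨p', h1, fun v hv => h0 v (h2 v hv)⟩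
  have h7 : NG F (fun f => ¬ nO O f) ≤ NG F (EE cY) := NG_mono hF.fin fun f hf => by
    unfold nO at hf; rw [not_not] at hf
    obtain ⟨p, hp, h0⟩ := hf
    exact ⟨p, H.oY p hp, h0⟩
  generalize NG F (fun _ => True) = M at *
  generalize NG F (nO O) = q at *
  generalize NG F (FE (Bx x0 xs y0 y1) SX TX cX) = a at *
  generalize NG F (FE (Bx x0 x1 y0 y1) SY {v | v.1 = x0} cY) = b at *
  by_contra hlt
  push Not at hlt
  have e1 : M ≤ 2 * a + 2 * q := by omega
  have e2 : M ≤ 2 * b + 2 * q := by omega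
  have e3 : a * b ≤ M * (8 * q) := h2.trans (Nat.mul_le_mul_left _ h1)
  zify at *
  have e4 : (M - 2 * q : ℤ) * (M - 2 * q) ≤ (2 * a) * (2 * b) := by
    apply mul_le_mul <;> omega
  nlinarith

end

def Good (F : Set V) (c : ℕ) (A : (V → ℤ) → Prop) : Prop :=
  (∀ f f' : V → ℤ, (∀ v, f' v = 0 → f v = 0) → A f → A f') ∧ NG F (fun _ => True) ≤ c * NG F A

lemma Good_and {F : Set V} (hF : F.Finite) {c d : ℕ} {A B : (V → ℤ) → Prop} (hA : Good F c A) (hB : Good F d B) :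
    Good F (c * d) (fun f => A f ∧ B f) := by
  refine ⟨fun f f' h hf => ⟨hA.1 f f' h hf.1, hB.1 f f' h hf.2⟩, ?_⟩
  have h := fkg hF A B (fun _ => True) (fun f => A f ∧ B f) (by
      intro f f' hf hf' a1 a2
      refine ⟨trivial, hA.1 f _ ?_ a1, hB.1 f' _ ?_ a2⟩ <;> intro v hv <;>
      · have e : (f ⊔ f') v = max (f v) (f' v) := rfl
        rw [e] at hv
        have := hf v; have := hf' v
        omega)
  have h1 := hA.2
  have h2 := hB.2
  generalize NG F (fun _ => True) = M at *
  rcases Nat.eq_zero_or_pos M with rfl | hM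
  · exact Nat.zero_le _
  refine Nat.le_of_mul_le_mul_left ?_ hM
  calc M * M ≤ (c * NG F A) * (d * NG F B) := Nat.mul_le_mul h1 h2
    _ = c * d * (NG F A * NG F B) := by ring
    _ ≤ c * d * (M * NG F (fun f => A f ∧ B f)) := Nat.mul_le_mul_left _ h
    _ = _ := by ring

lemma Good_true {F : Set V} : Good F 1 (fun _ => True) := ⟨fun _ _ _ _ => trivial, by omega⟩

lemma Good_imp {F : Set V} {c : ℕ} (hc : 1 ≤ c) {P : Prop} {A : (V → ℤ) → Prop} (h : P → Good F c A) : Good F c (fun f => P → A f) := by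
  by_cases hP : P
  · simpa [hP] using h hP
  · simp only [hP, false_imp_iff]
    exact ⟨fun _ _ _ _ => trivial, Nat.le_mul_of_pos_left _ hc⟩

lemma Good_forall {F : Set V} (hF : F.Finite) {c : ℕ} (A : ℕ → (V → ℤ) → Prop) (h : ∀ j, Good F c (A j)) (J : ℕ) :
    Good F (c ^ J) (fun f => ∀ j < J, A j f) := by
  induction J with
  | zero =>
    have : (fun f : V → ℤ => ∀ j < 0, A j f) = fun _ => True := by
      funext f; simp
    rw [this]; exact Good_true
  | succ J ih =>
    have : (fun f => ∀ j < J + 1, A j f) = fun f => (∀ j < J, A j f) ∧ A J f := by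
      funext f
      simp only [Nat.lt_succ_iff_lt_or_eq, eq_iff_iff]
      constructor
      · intro h; exact ⟨fun j hj => h j (Or.inl hj), h J (Or.inr rfl)⟩
      · rintro ⟨h1, h2⟩ j (hj | rfl)
        · exact h1 j hj
        · exact h2
    rw [this, pow_succ]
    exact Good_and hF ih (h J)

lemma Good_mono {F : Set V} (hF : F.Finite) {c : ℕ} {A B : (V → ℤ) → Prop} (h : Good F c A)
    (hAB : ∀ f, A f → B f) : NG F (fun _ => True) ≤ c * NG F B :=
  h.2.trans (Nat.mul_le_mul_left _ (NG_mono hF hAB))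

lemma nO_mono {O : List V → Prop} (f f' : V → ℤ) (h : ∀ v, f' v = 0 → f v = 0) (hf : nO O f) : nO O f' := by
  rintro ⟨p, hp, h0⟩
  exact hf ⟨p, hp, fun v hv => h v (h0 v hv)⟩

def mir (v : V) : V := (-v.1, v.2)
lemma mir_mir (v : V) : mir (mir v) = v := by simp [mir]

lemma hd_map (T : V → V) {p : List V} (h : p ≠ []) : hd (p.map T) = T (hd p) := by
  cases p with
  | nil => exact absurd rfl h
  | cons a l => rfl

lemma lt_map (T : V → V) {p : List V} (h : p ≠ []) : lt (p.map T) = T (lt p) := by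
  rw [lt_eq (by simpa using h), lt_eq h, List.getLast_map]

lemma chain_map {T : V → V} (hT : ∀ a b, xadj a b → xadj (T a) (T b)) {p : List V} (h : List.IsChain xadj p) :
    List.IsChain xadj (p.map T) := by
  rw [List.isChain_map]; exact h.imp fun a b => hT a b

lemma mir_NG {F : Set V} (hF : F.Finite) (A : (V → ℤ) → Prop) :
    NG F A ≤ NG {v | mir v ∈ F} (fun f => A (fun v => f (mir v))) := by
  have hF' : ({v | mir v ∈ F} : Set V).Finite := by
    refine (hF.image mir).subset fun v hv => ⟨mir v, hv, mir_mir v⟩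
  refine Set.ncard_le_ncard_of_injOn (fun g v => g (mir v)) ?_ ?_ ((GS_finite hF' c0).subset fun _ h => h.1)
  · rintro g ⟨hg, hA⟩
    refine ⟨⟨Hm.mk' (fun v => ?_) fun u v huv hu hv => ?_, fun v hv => ?_⟩, ?_⟩
    · have := hg.1.2 (mir v)
      simp only [mir] at *; omega
    · exact hg.1.adj (by simp only [adj, mir] at *; omega)
    · have := hg.2 (mir v) hv
      simp only [this]
      rcases Ev_or_Od v with h | h
      · rw [c0_Ev h, c0_Ev (by simp only [Ev, mir] at *; omega)]
      · rw [c0_Od h, c0_Od (by simp only [Od, mir] at *; omega)]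
    · have : (fun v => ab (fun v => g (mir v)) (mir v)) = ab g := by
        funext v; simp only [ab, mir_mir]
      show A (fun v => ab (fun v => g (mir v)) (mir v))
      rw [this]; exact hA
  · intro g _ g' _ h
    funext v
    have := congrFun h (mir v)
    simpa only [mir_mir] using this

lemma Dom_mir {F : Set V} (hF : Dom F) : Dom {v | mir v ∈ F} := by
  have ad : ∀ u v, adj u v → adj (mir u) (mir v) := fun u v h => by simp only [adj, mir] at *; omega
  have ev : ∀ u, Ev u → Ev (mir u) := fun u h => by simp only [Ev, mir] at *; omega
  refine ⟨(hF.fin.image mir).subset fun v hv => ⟨mir v, hv, mir_mir v⟩, ?_, ?_⟩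
  · intro u hu h t ht
    exact hF.S1 (mir u) (ev u hu) h (mir t) (ad _ _ ht)
  · intro u hu h
    refine hF.S2 (mir u) (ev u hu) fun t ht => ?_
    have := h (mir t) (by have := ad _ _ ht; rwa [mir_mir] at this)
    simpa only [Set.mem_ofPred_eq, mir_mir] using this

section
variable {F : Set V} {a n : ℤ}

lemma good_D (hF : Dom F) {x0 x1 y0 y1 : ℤ} (hx : x0 < x1) (hsq : x1 - x0 = y1 - y0)
    (hBF : ∀ v ∈ Bx x0 x1 y0 y1, Od v → v ∈ F) : Good F 128 (nO (clL x0 x1 y0 y1)) :=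
  ⟨nO_mono, (ws_D hx hsq).bound hF hBF⟩

lemma good_L (hF : Dom F) {x0 x1 y0 y1 s : ℤ} (hs0 : x0 < s) (hs1 : s < x1) (hy : y0 < y1)
    (hBF : ∀ v ∈ Bx x0 x1 y0 y1, Od v → v ∈ F) : Good F 128 (nO (OL2 x0 x1 y0 y1 s)) :=
  ⟨nO_mono, (ws_L2 hs0 hs1 hy).bound hF hBF⟩

lemma good_M (hF : Dom F) {y0 y1 s : ℤ} (hs0 : -a < s) (hs1 : s < a) (hy : y0 < y1)
    (hBF : ∀ v ∈ Bx (-a) a y0 y1, Od v → v ∈ F) :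
    Good F 128 (nO (fun p => OL2 (-a) a y0 y1 s (p.map mir))) := by
  refine ⟨nO_mono, ?_⟩
  have h1 := mir_NG hF.fin (fun _ => True)
  have hF' := Dom_mir hF
  have h2 := (ws_L2 hs0 hs1 hy).bound hF' (fun v hv ho => hBF (mir v) (by simp only [mem_Bx, mir] at *; omega)
    (by simp only [Od, mir] at *; omega))
  have h3 := mir_NG hF'.fin (nO (OL2 (-a) a y0 y1 s))
  have e : ({v | mir v ∈ ({v | mir v ∈ F} : Set V)} : Set V) = F := by
    ext v; simp only [Set.mem_ofPred_eq, mir_mir]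
  rw [e] at h3
  refine h1.trans (h2.trans (Nat.mul_le_mul_left _ (h3.trans (NG_mono hF.fin ?_))))
  rintro f hf ⟨p, hp, h0⟩
  refine hf ⟨p.map mir, hp, fun v hv => ?_⟩
  obtain ⟨w, hw, rfl⟩ := List.mem_map.1 hv
  simp only [mir_mir]; exact h0 w hw

lemma tall (h1 : 1 ≤ a) (h2 : a ≤ n) {f : V → ℤ} (h : nO (clL (-a) a (n - 2 * a) n) f) :
    nO (clL (-a) a (-n) n) f := by
  rintro ⟨p, hp, h0⟩
  set T : V → V := fun v => (-v.2, v.1) with hT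
  set T' : V → V := fun v => (v.2, -v.1) with hT'
  have TT : ∀ v, T' (T v) = v := fun v => by simp [hT, hT']
  have hne : p.map T ≠ [] := by simpa using hp.1.1
  obtain ⟨q, q1, q2, q3, q4, q5, q6, q7⟩ := trunc (R := xadj) (s := 2 * a - n) (fun _ _ h => h) (p.map T) hne
    (chain_map (fun a b h => by simp only [xadj, hT] at *; omega) hp.1.2.1)
    (by rw [hd_map T hp.1.1]; simp only [hT]; rw [hp.1.2.2.2]; omega)
    ⟨lt (p.map T), lt_mem hne, by rw [lt_map T hp.1.1]; simp only [hT]; rw [hp.2]; omega⟩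
  have mem : ∀ v ∈ q.map T', v ∈ p ∧ n - 2 * a ≤ v.2 := by
    intro v hv
    obtain ⟨w, hw, rfl⟩ := List.mem_map.1 hv
    obtain ⟨u, hu, rfl⟩ := List.mem_map.1 (q5 w hw)
    have := q6 _ hw
    rw [TT]
    simp only [hT] at this
    exact ⟨hu, by omega⟩
  refine h ⟨q.map T', ⟨⟨by simpa using q1, chain_map (fun a b h => by simp only [xadj, hT'] at *; omega) q3, ?_, ?_⟩, ?_⟩,
    fun v hv => h0 v (mem v hv).1⟩
  · intro v hv
    have h3 := mem v hv
    have h4 := hp.1.2.2.1 v h3.1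
    exact ⟨h4.1, h4.2.1, h4.2.2.1, h3.2, h4.2.2.2.2⟩
  · rw [hd_map T' q1, q4, hd_map T hp.1.1, TT]; exact hp.1.2.2.2
  · rw [lt_map T' q1]; simp only [hT']; omega

def EV (a n g : ℤ) (f : V → ℤ) : Prop :=
  (((nO (clL (min g (a - 2 * n)) (min g (a - 2 * n) + 2 * n) (-n) n) f ∧
  ((-a < g ∧ g < a) → nO (OL2 (-a) a (-n) n g) f)) ∧
  ((-a < g + 1 ∧ g + 1 < a) → nO (OL2 (-a) a (-n) n (g + 1)) f)) ∧
  ((-a < -g ∧ -g < a) → nO (fun p => OL2 (-a) a (-n) n (-g) (p.map mir)) f)) ∧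
  ((-a < -(g - 1) ∧ -(g - 1) < a) → nO (fun p => OL2 (-a) a (-n) n (-(g - 1)) (p.map mir)) f)

lemma good_EV (hF : Dom F) (hn : 1 ≤ n) (han : n < a) (hBF : ∀ v ∈ Bx (-a) a (-n) n, Od v → v ∈ F) (g : ℤ) (hg : -a ≤ g) :
    Good F (128 * 128 * 128 * 128 * 128) (EV a n g) := by
  refine Good_and hF.fin (Good_and hF.fin (Good_and hF.fin (Good_and hF.fin ?_ ?_) ?_) ?_) ?_
  · refine good_D hF (by omega) (by omega) fun v hv => hBF v ?_
    simp only [mem_Bx] at *; omega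
  · exact Good_imp (by norm_num) fun h => good_L hF h.1 h.2 (by omega) hBF
  · exact Good_imp (by norm_num) fun h => good_L hF h.1 h.2 (by omega) hBF
  · exact Good_imp (by norm_num) fun h => good_M hF h.1 h.2 (by omega) hBF
  · exact Good_imp (by norm_num) fun h => good_M hF h.1 h.2 (by omega) hBF

lemma clL_mir {p : List V} (hp : clL (-a) a (-n) n p) : clL (-a) a (-n) n (p.map mir) := by
  refine ⟨⟨by simpa using hp.1.1, chain_map (fun a b h => by simp only [xadj, mir] at *; omega) hp.1.2.1, ?_, ?_⟩, ?_⟩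
  · intro v hv
    obtain ⟨w, hw, rfl⟩ := List.mem_map.1 hv
    have := hp.1.2.2.1 w hw
    simp only [Od, mem_Bx, mir] at *; omega
  · rw [hd_map _ hp.1.1]; exact hp.1.2.2.2
  · rw [lt_map _ hp.1.1]; exact hp.2

lemma left_of {c : ℤ} {p : List V} (hne : p ≠ []) (hc : List.IsChain xadj p) (hh : (hd p).1 < c) (hn : ∀ v ∈ p, v.1 ≠ c) :
    ∀ v ∈ p, v.1 < c := by
  intro v hv
  by_contra h
  obtain ⟨q, q1, q2, q3, q4, q5, q6, q7⟩ := trunc (R := xadj) (fun _ _ h => h) p hne hc hh ⟨v, hv, by omega⟩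
  exact hn _ (q5 _ (lt_mem q1)) q7

lemma right_of {c : ℤ} {p : List V} (hne : p ≠ []) (hc : List.IsChain xadj p) (hh : c < (hd p).1) (hn : ∀ v ∈ p, v.1 ≠ c) :
    ∀ v ∈ p, c < v.1 := by
  intro v hv
  have := left_of (c := -c) (p := p.map mir) (by simpa using hne)
    (chain_map (fun a b h => by simp only [xadj, mir] at *; omega) hc)
    (by rw [hd_map _ hne]; simp only [mir]; omega) (by
      intro w hw
      obtain ⟨u, hu, rfl⟩ := List.mem_map.1 hw
      have := hn u hu
      simp only [mir]; omega) (mir v) (List.mem_map.2 ⟨v, hv, rfl⟩)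
  simp only [mir] at this; omega

lemma no_touch {g : ℤ} (hn : 1 ≤ n) (hg1 : -a + 2 ≤ g) (hg2 : g ≤ a - 2) {f : V → ℤ} (hE : EV a n g f) {p : List V}
    (hp : clL (-a) a (-n) n p) (h0 : ∀ v ∈ p, f v = 0) : ∀ v ∈ p, v.1 ≠ g := by
  intro v hv hvg
  obtain ⟨⟨⟨⟨-, e1⟩, e2⟩, e3⟩, e4⟩ := hE
  have hpm := clL_mir hp
  have hm : ∀ w ∈ p, ∀ x : ℤ, w.1 = x → ∃ u ∈ p.map mir, u.1 = -x := by
    intro w hw x hx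
    exact ⟨mir w, List.mem_map.2 ⟨w, hw, rfl⟩, by simp only [mir]; omega⟩
  have hdm : (hd (p.map mir)).1 = -(hd p).1 := by rw [hd_map _ hp.1.1]; rfl
  rcases lt_trichotomy (hd p).1 g with h | h | h
  · exact e1 ⟨by omega, by omega⟩ ⟨p, ⟨hp.1, h, hp.2, v, hv, hvg⟩, h0⟩
  · -- look at the second vertex
    obtain ⟨w, hw, hwx⟩ : ∃ w ∈ p, w.1 = g + 1 ∨ w.1 = g - 1 := by
      cases p with
      | nil => exact absurd rfl hp.1.1
      | cons b l =>
        cases l with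
        | nil =>
          have k1 : b.2 = n := hp.1.2.2.2
          have k2 : b.2 = -n := hp.2
          omega
        | cons c l =>
          have := (List.isChain_cons_cons.1 hp.1.2.1).1
          have hb : b.1 = g := h
          refine ⟨c, by simp, ?_⟩
          simp only [xadj] at this; omega
    rcases hwx with hwx | hwx
    · exact e2 ⟨by omega, by omega⟩ ⟨p, ⟨hp.1, by omega, hp.2, w, hw, hwx⟩, h0⟩
    · exact e4 ⟨by omega, by omega⟩ ⟨p, ⟨hpm.1, by omega, hpm.2, hm w hw _ hwx⟩, h0⟩
  · exact e3 ⟨by omega, by omega⟩ ⟨p, ⟨hpm.1, by omega, hpm.2, hm v hv _ hvg⟩, h0⟩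

lemma cover (hn : 1 ≤ n) (han : n < a) {J : ℕ} (hJ : a ≤ n * (J - 2)) {f : V → ℤ}
    (hE : ∀ j < J, EV a n (-a + 2 * n * (j : ℕ)) f) : nO (clL (-a) a (-n) n) f := by
  rintro ⟨p, hp, h0⟩
  have hh := (hp.1.2.2.1 _ (hd_mem hp.1.1)).2
  rw [mem_Bx] at hh
  -- the grid index of the head
  obtain ⟨j, hj⟩ : ∃ j : ℕ, -a + 2 * n * j ≤ (hd p).1 ∧ (hd p).1 < -a + 2 * n * j + 2 * n := by
    refine ⟨(((hd p).1 + a) / (2 * n)).toNat, ?_⟩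
    have hpos : 0 ≤ ((hd p).1 + a) / (2 * n) := Int.ediv_nonneg (by omega) (by omega)
    rw [Int.toNat_of_nonneg hpos]
    have k1 := Int.mul_ediv_self_le (x := (hd p).1 + a) (k := 2 * n) (by omega)
    have k2 := Int.lt_mul_ediv_self_add (x := (hd p).1 + a) (k := 2 * n) (by omega)
    constructor <;> linarith
  have hjJ : j + 1 < J := by
    by_contra hcon
    have : (J : ℤ) - 1 ≤ j := by omega
    nlinarith
  have notin : ∀ i < J, -a + 2 ≤ -a + 2 * n * i → -a + 2 * n * i ≤ a - 2 → ∀ v ∈ p, v.1 ≠ -a + 2 * n * i := by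
    intro i hi h1 h2
    exact no_touch hn h1 h2 (hE i hi) hp h0
  have win : ∀ i < J, (∀ v ∈ p, min (-a + 2 * n * i) (a - 2 * n) ≤ v.1 ∧ v.1 ≤ min (-a + 2 * n * i) (a - 2 * n) + 2 * n) → False := by
    intro i hi h
    refine (hE i hi).1.1.1.1 ⟨p, ⟨⟨hp.1.1, hp.1.2.1, fun v hv => ?_, hp.1.2.2.2⟩, hp.2⟩, h0⟩
    have := hp.1.2.2.1 v hv
    exact ⟨this.1, (h v hv).1, (h v hv).2, this.2.2.2⟩
  have hbox : ∀ v ∈ p, -a ≤ v.1 ∧ v.1 ≤ a := fun v hv => ⟨(hp.1.2.2.1 v hv).2.1, (hp.1.2.2.1 v hv).2.2.1⟩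
  have lower : ∀ i < J, -a + 2 * n * i < (hd p).1 → -a + 2 * n * i ≤ a - 2 → ∀ v ∈ p, -a + 2 * n * (i : ℤ) ≤ v.1 ∧
      (1 ≤ i → -a + 2 * n * (i : ℤ) < v.1) := by
    intro i hi h1 h2 v hv
    rcases Nat.eq_zero_or_pos i with rfl | hi0
    · have := hbox v hv
      constructor
      · push_cast; omega
      · intro h; omega
    · have : (1 : ℤ) ≤ i := by exact_mod_cast hi0
      have := right_of hp.1.1 hp.1.2.1 h1 (notin i hi (by nlinarith) h2) v hv
      exact ⟨this.le, fun _ => this⟩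
  have hprod : 2 * n * ((j + 1 : ℕ) : ℤ) = 2 * n * j + 2 * n := by push_cast; ring
  have upper : -a + 2 * n * j + 2 * n ≤ a - 2 → ∀ v ∈ p, v.1 < -a + 2 * n * j + 2 * n := by
    intro h2 v hv
    have hnn : 0 ≤ 2 * n * (j : ℤ) := by positivity
    have := left_of (c := -a + 2 * n * j + 2 * n) hp.1.1 hp.1.2.1 hj.2 (by
      have := notin (j + 1) hjJ (by rw [hprod]; omega) (by rw [hprod]; omega)
      rw [hprod] at this
      intro v hv; have := this v hv; omega) v hv
    exact this
  have hnn : 0 ≤ 2 * n * (j : ℤ) := by positivity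
  by_cases hc : -a + 2 * n * (j : ℤ) ≤ a - 2
  · have low : ∀ v ∈ p, -a + 2 * n * (j : ℤ) ≤ v.1 ∧ (1 ≤ j → -a + 2 * n * (j : ℤ) < v.1) := by
      rcases Nat.eq_zero_or_pos j with rfl | hj0
      · intro v hv
        have := hbox v hv
        exact ⟨by simpa using this.1, fun h => by omega⟩
      · have j1 : (1 : ℤ) ≤ j := by exact_mod_cast hj0
        have hne := notin j (by omega) (by nlinarith) hc _ (hd_mem hp.1.1)
        exact lower j (by omega) (by omega) hc
    by_cases hc2 : -a + 2 * n * (j : ℤ) + 2 * n ≤ a - 2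
    · have up := upper hc2
      refine win j (by omega) fun v hv => ?_
      have k1 := low v hv
      have k2 := up v hv
      omega
    · refine win (j + 1) hjJ fun v hv => ?_
      rw [hprod]
      have k1 := low v hv
      have k2 := hbox v hv
      have j0 : 1 ≤ j := by
        by_contra h
        have : j = 0 := by omega
        subst this
        push_cast at hc2
        omega
      have := k1.2 j0
      omega
  · have j0 : 1 ≤ j := by
      by_contra h
      have : j = 0 := by omega
      subst this
      push_cast at hc
      omega
    obtain ⟨i, rfl⟩ : ∃ i, j = i + 1 := ⟨j - 1, by omega⟩
    have hpi : 2 * n * ((i + 1 : ℕ) : ℤ) = 2 * n * i + 2 * n := by push_cast; ring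
    have i0 : 1 ≤ i := by
      by_contra h
      have : i = 0 := by omega
      subst this
      push_cast at hc
      omega
    rw [hpi] at hc hj
    have low := lower i (by omega) (by omega) (by omega)
    refine win (i + 1) (by omega) fun v hv => ?_
    rw [hpi]
    have k1 := (low v hv).2 i0
    have k2 := hbox v hv
    omega

end

/-- a crossing from left to right along which `f` does not vanish, starting at `e` -/
def XP (a n : ℤ) (f : V → ℤ) (e : V) : Prop :=
  ∃ p : List V, ∃ hp : p ≠ [], List.IsChain adj p ∧ (∀ v ∈ p, v ∈ Lam2 a n ∧ f v ≠ 0) ∧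
    p.head hp = e ∧ e ∈ leftSide a n ∧ p.getLast hp ∈ rightSide a n

lemma reach_list {B S bl : Set V} {v : V} (h : Reach B S bl v) :
    ∃ p : List V, ∃ hp : p ≠ [], List.IsChain adj p ∧ (∀ w ∈ p, w ∈ B ∧ w ∉ bl) ∧ p.head hp ∈ S ∧ p.getLast hp = v := by
  induction h with
  | base v h1 h2 h3 => exact ⟨[v], by simp, by simp, by simp [h1, h3], by simpa using h2, by simp⟩
  | step u v hu h1 h2 h3 ih =>
    obtain ⟨p, hp, hc, hm, hs, hl⟩ := ih
    refine ⟨p ++ [v], by simp, ?_, ?_, ?_, by simp⟩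
    · rw [List.isChain_append]
      refine ⟨hc, by simp, ?_⟩
      intro x hx y hy
      rw [List.getLast?_eq_getLast_of_ne_nil hp, hl] at hx
      simp at hx hy
      subst hx; subst hy; exact h1
    · intro w hw
      rw [List.mem_append, List.mem_singleton] at hw
      rcases hw with hw | rfl
      · exact hm w hw
      · exact ⟨h2, h3⟩
    · rw [List.head_append_of_ne_nil hp]; exact hs

lemma Lam2_iff {a n : ℤ} {v : V} : v ∈ Lam2 a n ↔ v ∈ Bx (-a) a (-n) n := by
  simp only [Lam2, mem_Bx, Set.mem_ofPred_eq, abs_le]; tauto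

lemma XP_of_nO {a n : ℤ} (ha : 1 ≤ a) (hn : 1 ≤ n) {f : V → ℤ} (hev : ∀ v, Ev v → f v ≠ 0)
    (h : nO (clL (-a) a (-n) n) f) : ∃ e, XP a n f e := by
  by_contra hcon
  apply h
  obtain ⟨p, hp, h1⟩ := (isWC_L (x0 := -a) (x1 := a) (y0 := -n) (y1 := n) (by omega) (by omega)).E2 {v | Od v ∧ f v = 0}
    (fun v hv => hv.1) (by
      intro v hv hR
      apply hcon
      obtain ⟨p, hp, hc, hm, hs, hl⟩ := reach_list hR
      have hb : ∀ w ∈ p, w ∈ Lam2 a n := fun w hw => Lam2_iff.2 (hm w hw).1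
      refine ⟨p.head hp, p, hp, hc, fun w hw => ⟨hb w hw, fun h0 => ?_⟩, rfl, ⟨hs, ?_⟩, ?_, ?_⟩
      · rcases Ev_or_Od w with he | ho
        · exact hev w he h0
        · exact (hm w hw).2 ⟨ho, h0⟩
      · exact (hb _ (List.head_mem hp)).2
      · rw [hl]; exact hv
      · exact (hb _ (List.getLast_mem hp)).2)
  exact ⟨p, hp, fun v hv => (h1 v hv).1.2⟩

lemma XP_zero {n : ℤ} (hn : 1 ≤ n) {f : V → ℤ} (hev : ∀ v, Ev v → f v ≠ 0) : XP 0 n f (0, 0) := by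
  refine ⟨[(0, 0)], by simp, by simp, ?_, by simp, ?_, ?_⟩
  · intro v hv
    rw [List.mem_singleton] at hv
    subst hv
    exact ⟨by rw [Lam2_iff, mem_Bx]; dsimp only; omega, hev _ (by simp [Ev])⟩
  · exact ⟨by simp, by simp; omega⟩
  · exact ⟨by simp, by simp; omega⟩

/-- the crossing event in shifted heights -/
def Crs (a n : ℤ) (g : V → ℤ) : Prop := HCross adj a n fun v => 0 < g v

lemma Crs_of_XP {a n : ℤ} {g : V → ℤ} (hg : Hm g) {e : V} (h : XP a n (ab g) e) (he : 0 < g e) : Crs a n g := by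
  obtain ⟨p, hp, hc, hm, hh, hl, hr⟩ := h
  refine ⟨p, hp, hc, fun v hv => ⟨(hm v hv).1, ?_⟩, hh ▸ hl, hr⟩
  have key : ∀ a ∈ p, ∀ b ∈ p, adj a b → 0 < g a → 0 < g b := by
    intro a ha b hb hab h
    have h1 := hg.adj hab
    have h2 : g b ≠ 0 := fun h => (hm b hb).2 (ab_eq_zero.2 h)
    omega
  exact chain_all (Pr := fun v => 0 < g v) p hc (fun a ha b hb hab => ⟨key a ha b hb hab, key b hb a ha (adj_symm hab)⟩)
    e (hh ▸ List.head_mem hp) v hv he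

lemma sign_cross {F : Set V} (hF : F.Finite) {a n : ℤ} (A : (V → ℤ) → Prop)
    (hA : ∀ g ∈ GS F c0, A (ab g) → ∃ e, XP a n (ab g) e) :
    NG F A ≤ 4 * {g | g ∈ GS F c0 ∧ A (ab g) ∧ Crs a n g}.ncard := by
  refine fiber_le ((GS_finite hF c0).subset fun _ h => h.1) ab 4 (fun g hg => ⟨hg.1, hg.2.1⟩) ?_
  rintro g ⟨hg, hAg⟩
  obtain ⟨e, he⟩ := hA g hg hAg
  have hne : ab g e ≠ 0 := by
    obtain ⟨p, hp, _, hm, hh, _⟩ := he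
    exact (hm e (hh ▸ List.head_mem hp)).2
  have := Cls_sign hF (GS_ab hg) (ab_nonneg g) e e hne hne
  have e1 : {x | x ∈ {g | g ∈ GS F c0 ∧ A (ab g)} ∧ ab x = ab g} = Cls F (ab g) := by
    ext x; constructor
    · rintro ⟨⟨h1, h2⟩, h3⟩; exact ⟨h1, h3⟩
    · rintro ⟨h1, h3⟩; exact ⟨⟨h1, h3 ▸ hAg⟩, h3⟩
  have e2 : {x | x ∈ Cls F (ab g) ∧ 0 < x e ∧ 0 < x e} ⊆
      {x | x ∈ {g | g ∈ GS F c0 ∧ A (ab g) ∧ Crs a n g} ∧ ab x = ab g} := by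
    rintro x ⟨⟨h1, h2⟩, h3, -⟩
    exact ⟨⟨h1, h2 ▸ hAg, Crs_of_XP h1.1 (h2 ▸ he) h3⟩, h2⟩
  refine (le_of_eq (congrArg Set.ncard e1)).trans (this.trans (Nat.mul_le_mul_left _ (Set.ncard_le_ncard e2 ?_)))
  exact (GS_finite hF c0).subset fun _ h => h.1.1

lemma main_count {F : Set V} (hF : Dom F) {a n : ℤ} (ha : 0 ≤ a) (hn : 1 ≤ n) {J : ℕ} (hJ1 : 1 ≤ J) (hJ : a ≤ n * (J - 2))
    (hBF : ∀ v ∈ Bx (-a) a (-n) n, Od v → v ∈ F) :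
    (GS F c0).ncard ≤ (128 * 128 * 128 * 128 * 128) ^ J * 4 * {g | g ∈ GS F c0 ∧ Crs a n g}.ncard := by
  have hev : ∀ g ∈ GS F c0, ∀ v, Ev v → ab g v ≠ 0 := fun g hg v hv h0 => by
    have := hg.1.ev hv
    rw [ab_eq_zero] at h0; omega
  have hM : NG F (fun _ => True) = (GS F c0).ncard := by simp [NG]
  have fin : ∀ A : (V → ℤ) → Prop, {g | g ∈ GS F c0 ∧ A (ab g) ∧ Crs a n g}.ncard ≤ {g | g ∈ GS F c0 ∧ Crs a n g}.ncard :=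
    fun A => Set.ncard_le_ncard (fun g hg => ⟨hg.1, hg.2.2⟩) ((GS_finite hF.fin c0).subset fun _ h => h.1)
  have hC : 128 ≤ (128 * 128 * 128 * 128 * 128) ^ J :=
    le_trans (by norm_num) (Nat.pow_le_pow_right (n := 128 * 128 * 128 * 128 * 128) (by norm_num) hJ1)
  rcases eq_or_lt_of_le ha with rfl | ha
  · have h1 := sign_cross hF.fin (a := 0) (n := n) (fun _ => True) fun g hg _ => ⟨_, XP_zero hn (hev g hg)⟩
    rw [hM] at h1
    have h2 := fin fun _ => True
    generalize {g | g ∈ GS F c0 ∧ Crs 0 n g}.ncard = x at *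
    generalize (128 * 128 * 128 * 128 * 128) ^ J = C at *
    nlinarith
  · have h1 := sign_cross hF.fin (a := a) (n := n) (nO (clL (-a) a (-n) n)) fun g hg h => XP_of_nO ha hn (hev g hg) h
    have h3 : NG F (fun _ => True) ≤ (128 * 128 * 128 * 128 * 128) ^ J * NG F (nO (clL (-a) a (-n) n)) := by
      by_cases han : a ≤ n
      · refine (Good_mono hF.fin (good_D hF (x0 := -a) (x1 := a) (y0 := n - 2 * a) (y1 := n) (by omega) (by omega) ?_)
          (fun f hf => tall ha han hf)).trans (Nat.mul_le_mul_right _ hC)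
        intro v hv ho
        refine hBF v ?_ ho
        rw [mem_Bx] at *; omega
      · refine Good_mono hF.fin (Good_forall hF.fin (fun j => EV a n (-a + 2 * n * (j : ℕ)))
          (fun j => good_EV hF hn (by omega) hBF _ ?_) J) fun f hf => cover hn (by omega) hJ hf
        have : 0 ≤ 2 * n * (j : ℤ) := by positivity
        omega
    rw [hM] at h3
    calc _ ≤ _ := h3
      _ ≤ _ := Nat.mul_le_mul_left _ (h1.trans (Nat.mul_le_mul_left _ (fin _)))
      _ = _ := by ring

lemma isEvenV_iff {v : V} : IsEvenV v ↔ Ev v := by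
  unfold IsEvenV Ev; rw [Int.even_iff]

lemma Dom_of {D : Set V} (hD : IsEvenDomain D) : Dom (D \ bdry D) where
  fin := hD.1.1.subset Set.diff_subset
  S1 := by
    rintro u hu ⟨h1, h2⟩ s hs
    refine ⟨?_, fun h => not_Ev.2 ((adj_Ev hs).1 hu) (isEvenV_iff.1 (hD.2 s h))⟩
    by_contra h
    exact h2 ⟨h1, s, h, adj_symm hs⟩
  S2 := by
    intro u hu h
    have h0 : u ∈ D := by
      have hs : adj u (u.1 + 1, u.2) := by simp [adj]
      obtain ⟨h1, h2⟩ := h _ hs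
      by_contra h3
      exact h2 ⟨h1, u, h3, hs⟩
    refine ⟨h0, ?_⟩
    rintro ⟨-, s, h1, h2⟩
    exact h1 (h s (adj_symm h2)).1

open Classical in
noncomputable def up (D : Set V) (h : V → ℤ) : V → ℤ := fun v => if v ∈ D then h v + 1 else c0 v
open Classical in
noncomputable def dn (D : Set V) (g : V → ℤ) : V → ℤ := fun v => if v ∈ D then g v - 1 else 0

lemma bdry_of {D : Set V} {u v : V} (hu : u ∈ D) (hv : v ∉ D) (h : adj u v) : u ∈ bdry D := ⟨hu, v, hv, adj_symm h⟩

lemma up_mem {D : Set V} (hD : IsEvenDomain D) {h : V → ℤ} (hh : h ∈ Hom0 D) : up D h ∈ GS (D \ bdry D) c0 := by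
  obtain ⟨⟨h1, h2, h3⟩, h4⟩ := hh
  refine ⟨Hm.mk' (fun v => ?_) fun u v huv hu hv => ?_, fun v hv => ?_⟩
  · unfold up; split_ifs with hv
    · have := Int.even_iff.1 (h2 v hv); omega
    · exact Hm_c0.2 v
  · unfold up; split_ifs with a b b
    · have := abs1.1 (h1 u v a b huv); omega
    · have := h4 u (bdry_of a b huv)
      rw [c0_Od hv]; simp only at this; omega
    · exact absurd (isEvenV_iff.1 (hD.2 v (bdry_of b a (adj_symm huv)))) (not_Ev.2 hv)
    · exact Hm_c0.adj huv
  · unfold up; split_ifs with a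
    · have hb : v ∈ bdry D := by by_contra hb; exact hv ⟨a, hb⟩
      have := h4 v hb
      rw [c0_Ev (isEvenV_iff.1 (hD.2 v hb))]; simp only at this; omega
    · rfl

lemma dn_mem {D : Set V} (hD : IsEvenDomain D) {g : V → ℤ} (hg : g ∈ GS (D \ bdry D) c0) : dn D g ∈ Hom0 D := by
  refine ⟨⟨fun u v hu hv huv => ?_, fun v hv => ?_, fun v hv => ?_⟩, fun v hv => ?_⟩
  · have := hg.1.adj huv
    rw [abs1]; simp only [dn, hu, hv, if_true]; omega
  · have := hg.1.2 v
    rw [Int.even_iff]; simp only [dn, hv, if_true]; omega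
  · simp only [dn, hv, if_false]
  · have := hg.2 v fun h => h.2 hv
    simp only [dn, hv.1, if_true, this, c0_Ev (isEvenV_iff.1 (hD.2 v hv))]; omega

lemma up_inj {D : Set V} : Set.InjOn (up D) (Hom0 D) := by
  intro h hh h' hh' e
  funext v
  by_cases hv : v ∈ D
  · have := congrFun e v
    simp only [up, hv, if_true] at this; omega
  · rw [hh.1.2.2 v hv, hh'.1.2.2 v hv]

lemma dn_inj {D : Set V} : Set.InjOn (dn D) (GS (D \ bdry D) c0) := by
  intro h hh h' hh' e
  funext v
  by_cases hv : v ∈ D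
  · have := congrFun e v
    simp only [dn, hv, if_true] at this; omega
  · rw [hh.2 v fun h => hv h.1, hh'.2 v fun h => hv h.1]

lemma dn_cross {D : Set V} {a n : ℤ} (hL : Lam2 a n ⊆ D) {g : V → ℤ} (h : Crs a n g) :
    HCross adj a n fun v => 0 ≤ dn D g v := by
  obtain ⟨p, hp, hc, hm, h1, h2⟩ := h
  refine ⟨p, hp, hc, fun v hv => ⟨(hm v hv).1, ?_⟩, h1, h2⟩
  have h3 : 0 < g v := (hm v hv).2
  simp only [dn, hL (hm v hv).1, if_true]; omega

lemma final_nat {D : Set V} (hD : IsEvenDomain D) {a n : ℤ} (ha : 0 ≤ a) (hn : 1 ≤ n) {J : ℕ} (hJ1 : 1 ≤ J)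
    (hJ : a ≤ n * (J - 2)) (hL : Lam2 a n ⊆ D) :
    0 < (Hom0 D).ncard ∧ (Hom0 D).ncard ≤
      (128 * 128 * 128 * 128 * 128) ^ J * 4 * (Hom0 D ∩ {h | HCross adj a n fun v => 0 ≤ h v}).ncard := by
  have hF := Dom_of hD
  have hfG := GS_finite hF.fin c0
  have hfin : (Hom0 D).Finite := Set.Finite.of_injOn (fun h hh => up_mem hD hh) up_inj hfG
  have h1 : (Hom0 D).ncard ≤ (GS (D \ bdry D) c0).ncard :=
    Set.ncard_le_ncard_of_injOn _ (fun h hh => up_mem hD hh) up_inj hfG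
  have h2 := main_count hF ha hn hJ1 hJ (fun v hv ho => ⟨hL (Lam2_iff.2 hv), fun h =>
    not_Ev.2 ho (isEvenV_iff.1 (hD.2 v h))⟩)
  have h3 : {g | g ∈ GS (D \ bdry D) c0 ∧ Crs a n g}.ncard ≤
      (Hom0 D ∩ {h | HCross adj a n fun v => 0 ≤ h v}).ncard :=
    Set.ncard_le_ncard_of_injOn (dn D) (fun g hg => ⟨dn_mem hD hg.1, dn_cross hL hg.2⟩)
      (dn_inj.mono fun g hg => hg.1) (hfin.subset Set.inter_subset_left)
  refine ⟨?_, h1.trans (h2.trans (Nat.mul_le_mul_left _ h3))⟩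
  rw [Set.ncard_pos hfin]
  exact ⟨_, dn_mem hD (g := c0) ⟨Hm_c0, fun _ _ => rfl⟩⟩

/-- Crossings of `h ≥ 0` under `0` boundary conditions have probability
bounded away from `0`. -/
theorem crossing_nonneg :
    ∀ ρ : ℝ, 0 < ρ → ∃ c : ℝ, 0 < c ∧
      ∀ n : ℕ, 1 ≤ n → ∀ D : Set V, IsEvenDomain D → Lam2 ⌊ρ * n⌋ (n : ℤ) ⊆ D →
        c ≤ pr (Hom0 D) {h | HCross adj ⌊ρ * n⌋ (n : ℤ) fun v => 0 ≤ h v} := by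
  intro ρ hρ
  refine ⟨1 / (((128 * 128 * 128 * 128 * 128) ^ (⌈ρ⌉₊ + 2) * 4 : ℕ) : ℝ), by positivity, ?_⟩
  intro n hn D hD hL
  have ha : 0 ≤ ⌊ρ * n⌋ := Int.floor_nonneg.2 (by positivity)
  have hJ : ⌊ρ * n⌋ ≤ (n : ℤ) * (((⌈ρ⌉₊ + 2 : ℕ) : ℤ) - 2) := by
    have h1 : ((⌊ρ * n⌋ : ℤ) : ℝ) ≤ ρ * n := Int.floor_le _
    have h2 : ρ ≤ (⌈ρ⌉₊ : ℝ) := Nat.le_ceil ρ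
    have h3 : ((⌊ρ * n⌋ : ℤ) : ℝ) ≤ (((n : ℤ) * (⌈ρ⌉₊ : ℤ) : ℤ) : ℝ) := by
      push_cast
      have : (0 : ℝ) ≤ n := by positivity
      nlinarith
    have h4 : ⌊ρ * n⌋ ≤ (n : ℤ) * (⌈ρ⌉₊ : ℤ) := by exact_mod_cast h3
    have h5 : (((⌈ρ⌉₊ + 2 : ℕ) : ℤ) - 2) = (⌈ρ⌉₊ : ℤ) := by push_cast; ring
    rw [h5]; exact h4
  obtain ⟨h1, h2⟩ := final_nat hD ha (by exact_mod_cast hn) (J := ⌈ρ⌉₊ + 2) (by omega) hJ hL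
  unfold pr
  rw [Nat.card_coe_set_eq, Nat.card_coe_set_eq]
  generalize (128 * 128 * 128 * 128 * 128) ^ (⌈ρ⌉₊ + 2) * 4 = C at *
  have hC : 0 < C := by
    rcases Nat.eq_zero_or_pos C with rfl | h
    · omega
    · exact h
  rw [div_le_div_iff₀ (by exact_mod_cast hC) (by exact_mod_cast h1), one_mul, mul_comm]
  exact_mod_cast h2

end SquareIce
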